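/- arXiv:2211.10783 — 4 statements merged into one kernel-verified Lean document; each statement's English description precedes it below -/
import Mathlib

section
/- Let d ≥ 1, γ > 0, and let f : ℝ^d → ℝ be convex and M₂-Lipschitz with respect to the l₂-norm. Let f_γ(x) := E[f(x + γ·ẽ)], where ẽ is uniformly distributed on the unit l₁-ball B₁^d(1). Then for every x ∈ ℝ^d: f(x) ≤ f_γ(x) ≤ f(x) + (2/√d)·γ·M₂. -/
open MeasureTheory
open scoped ENNReal RealInnerProductSpace

noncomputable section

/-- The `l_p` norm on `EuclideanSpace ℝ (Fin d)` (with `p = ∞` giving the sup norm). -/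
def lpNorm {d : ℕ} (p : ℝ≥0∞) (x : EuclideanSpace ℝ (Fin d)) : ℝ :=
  if p = ∞ then ⨆ i, |x i| else (∑ i, |x i| ^ p.toReal) ^ (1 / p.toReal)

/-- The unit `l₁`-ball `B₁^d(1)`. -/
def l1Ball (d : ℕ) : Set (EuclideanSpace ℝ (Fin d)) := {u | ∑ i, |u i| ≤ 1}

/-- The Euclidean unit ball `B₂^d(1)`. -/
def l2Ball (d : ℕ) : Set (EuclideanSpace ℝ (Fin d)) := {u | ‖u‖ ≤ 1}

/-- The unit `l₁`-sphere `S₁^d(1)`. -/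
def l1Sphere (d : ℕ) : Set (EuclideanSpace ℝ (Fin d)) := {u | ∑ i, |u i| = 1}

/-- The Euclidean unit sphere `S₂^d(1)`. -/
def l2Sphere (d : ℕ) : Set (EuclideanSpace ℝ (Fin d)) := {u | ‖u‖ = 1}

/-- Uniform probability distribution on a solid body: normalized Lebesgue measure. -/
def uniformOn {d : ℕ} (S : Set (EuclideanSpace ℝ (Fin d))) :
    Measure (EuclideanSpace ℝ (Fin d)) :=
  (volume S)⁻¹ • volume.restrict S

/-- Uniform probability distribution on a hypersurface: normalized `(d-1)`-dimensional
Hausdorff measure. -/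
def uniformOnSphere {d : ℕ} (S : Set (EuclideanSpace ℝ (Fin d))) :
    Measure (EuclideanSpace ℝ (Fin d)) :=
  (μH[(d : ℝ) - 1] S)⁻¹ • (μH[(d : ℝ) - 1]).restrict S

/-- Coordinatewise sign vector `sign(e)`. -/
def signVec {d : ℕ} (e : EuclideanSpace ℝ (Fin d)) : EuclideanSpace ℝ (Fin d) :=
  (WithLp.equiv 2 (Fin d → ℝ)).symm (fun i => Real.sign (e i))

end


lemma aux_scale {d k : ℕ} (g : (Fin d → ℝ) → ℝ) (hg : Continuous g)
    (hom : ∀ t : ℝ, 0 < t → ∀ x, g (t • x) = t ^ k * g x) (t : ℝ) (ht : 0 < t) :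
    ∫⁻ x in {x : Fin d → ℝ | ∑ i, |x i| ≤ t}, ENNReal.ofReal (g x) =
      ENNReal.ofReal (t ^ (d + k)) *
        ∫⁻ x in {x : Fin d → ℝ | ∑ i, |x i| ≤ 1}, ENNReal.ofReal (g x) := by
  have hN : Continuous fun x : Fin d → ℝ => ∑ i, |x i| := by fun_prop
  have hm : ∀ s : ℝ, MeasurableSet {x : Fin d → ℝ | ∑ i, |x i| ≤ s} := fun s =>
    (isClosed_le hN continuous_const).measurableSet
  have hgm : Measurable fun x => ENNReal.ofReal (g x) := by fun_prop
  rw [← lintegral_indicator (hm t), ← lintegral_indicator (hm 1)]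
  have h1 := Measure.map_addHaar_smul (volume : Measure (Fin d → ℝ)) ht.ne'
  have h2 : ∫⁻ x, ({x : Fin d → ℝ | ∑ i, |x i| ≤ t}.indicator fun x => ENNReal.ofReal (g x)) x
      ∂(Measure.map (t • ·) (volume : Measure (Fin d → ℝ))) = 
      ENNReal.ofReal (t ^ k) * ∫⁻ x, ({x : Fin d → ℝ | ∑ i, |x i| ≤ 1}.indicator fun x => ENNReal.ofReal (g x)) x := by
    rw [lintegral_map (hgm.indicator (hm t)) (by fun_prop), ← lintegral_const_mul _ (hgm.indicator (hm 1))]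
    congr 1
    ext x
    have : (∑ i, |(t • x) i| ≤ t) ↔ ∑ i, |x i| ≤ 1 := by
      simp only [Pi.smul_apply, smul_eq_mul, abs_mul, abs_of_pos ht, ← Finset.mul_sum]
      constructor
      · intro h; by_contra hc; push Not at hc; nlinarith
      · intro h; nlinarith
    simp only [Set.indicator_apply, Set.mem_setOf_eq, this]
    split_ifs
    · rw [hom t ht, ENNReal.ofReal_mul (by positivity)]
    · simp
  rw [h1, lintegral_smul_measure] at h2
  rw [pow_add, ENNReal.ofReal_mul (by positivity), mul_assoc, ← h2, smul_eq_mul, ← mul_assoc,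
    ← ENNReal.ofReal_mul (by positivity)]
  simp only [Module.finrank_fin_fun]
  rw [abs_of_pos (by positivity), mul_inv_cancel₀ (by positivity)]
  simp

lemma aux_exp (c : ℝ) : ∫⁻ t in Set.Ici c, ENNReal.ofReal (Real.exp (-t)) = ENNReal.ofReal (Real.exp (-c)) := by
  rw [← setLIntegral_congr Ioi_ae_eq_Ici, ← ofReal_integral_eq_lintegral_ofReal, integral_exp_neg_Ioi]
  · exact integrableOn_exp_neg_Ioi c
  · exact Filter.Eventually.of_forall fun _ => (Real.exp_pos _).le

lemma aux_gint (n : ℕ) : IntegrableOn (fun t : ℝ => Real.exp (-t) * t ^ n) (Set.Ioi 0) ∧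
    ∫ t in Set.Ioi (0:ℝ), Real.exp (-t) * t ^ n = n.factorial := by
  have h := Real.GammaIntegral_convergent (s := n + 1) (by positivity)
  have h' := Real.Gamma_eq_integral (s := n + 1) (by positivity)
  rw [Real.Gamma_nat_eq_factorial] at h'
  simp only [add_sub_cancel_right, Real.rpow_natCast] at h h'
  exact ⟨h, h'.symm⟩

lemma aux_gamma (n : ℕ) : ∫⁻ t in Set.Ioi (0:ℝ), ENNReal.ofReal (Real.exp (-t)) * ENNReal.ofReal (t ^ n) =
    ENNReal.ofReal (n.factorial) := by
  rw [← (aux_gint n).2, ofReal_integral_eq_lintegral_ofReal (aux_gint n).1]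
  · congr 1; ext t; rw [ENNReal.ofReal_mul (Real.exp_pos _).le]
  · filter_upwards [ae_restrict_mem measurableSet_Ioi] with t ht
    have : 0 < t := ht
    simp only [Pi.zero_apply]; positivity

lemma aux_layer {d k : ℕ} (g : (Fin d → ℝ) → ℝ) (hg : Continuous g) (hg0 : ∀ x, 0 ≤ g x)
    (hom : ∀ t : ℝ, 0 < t → ∀ x, g (t • x) = t ^ k * g x) :
    ∫⁻ x : Fin d → ℝ, ENNReal.ofReal (g x * Real.exp (-∑ i, |x i|)) =
      ENNReal.ofReal ((d + k).factorial) *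
        ∫⁻ x in {x : Fin d → ℝ | ∑ i, |x i| ≤ 1}, ENNReal.ofReal (g x) := by
  have hN : Continuous fun x : Fin d → ℝ => ∑ i, |x i| := by fun_prop
  have hm : ∀ s : ℝ, MeasurableSet {x : Fin d → ℝ | ∑ i, |x i| ≤ s} := fun s =>
    (isClosed_le hN continuous_const).measurableSet
  have hgm : Measurable fun x => ENNReal.ofReal (g x) := by fun_prop
  set F : (Fin d → ℝ) × ℝ → ℝ≥0∞ := {p : (Fin d → ℝ) × ℝ | ∑ i, |p.1 i| ≤ p.2}.indicator
    (fun p => ENNReal.ofReal (g p.1) * ENNReal.ofReal (Real.exp (-p.2))) with hF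
  have hFm : Measurable F := by
    apply Measurable.indicator (by fun_prop)
    exact (isClosed_le (by fun_prop) (by fun_prop)).measurableSet
  have e1 : ∀ x, ENNReal.ofReal (g x * Real.exp (-∑ i, |x i|)) = ∫⁻ t, F (x, t) := by
    intro x
    rw [ENNReal.ofReal_mul (hg0 x), ← aux_exp, ← lintegral_indicator measurableSet_Ici,
      ← lintegral_const_mul _ (Measurable.indicator (by fun_prop) measurableSet_Ici)]
    congr 1; ext t
    simp [hF, Set.indicator_apply]
  have e2 : ∀ t, ∫⁻ x, F (x, t) = ENNReal.ofReal (Real.exp (-t)) *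
      ∫⁻ x in {x : Fin d → ℝ | ∑ i, |x i| ≤ t}, ENNReal.ofReal (g x) := by
    intro t
    rw [← lintegral_indicator (hm t), ← lintegral_const_mul _ (hgm.indicator (hm t))]
    congr 1; ext x
    simp [hF, Set.indicator_apply, mul_comm]
  simp_rw [e1]
  rw [lintegral_lintegral_swap (f := fun x t => F (x, t)) hFm.aemeasurable]
  have e3 : ∫⁻ t, ∫⁻ x, F (x, t) = ∫⁻ t in Set.Ioi (0:ℝ), ∫⁻ x, F (x, t) := by
    rw [setLIntegral_congr Ioi_ae_eq_Ici, ← lintegral_indicator measurableSet_Ici]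
    congr 1; ext t
    by_cases h : t ∈ Set.Ici (0:ℝ)
    · simp [h]
    · rw [Set.indicator_of_notMem h, e2]
      have : {x : Fin d → ℝ | ∑ i, |x i| ≤ t} = ∅ := by
        ext x
        simp only [Set.mem_setOf_eq, Set.mem_empty_iff_false, iff_false, not_le]
        simp only [Set.mem_Ici, not_le] at h
        exact h.trans_le (Finset.sum_nonneg fun _ _ => abs_nonneg _)
      simp [this]
  rw [e3, ← aux_gamma, ← lintegral_mul_const _ (by fun_prop)]
  apply setLIntegral_congr_fun measurableSet_Ioi
  intro t ht
  simp only
  rw [e2, aux_scale g hg hom t ht, mul_assoc]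

lemma aux_one (n : ℕ) : ∫ x : ℝ, |x| ^ n * Real.exp (-|x|) = 2 * n.factorial := by
  rw [integral_comp_abs (f := fun x => x ^ n * Real.exp (-x)), ← (aux_gint n).2]
  simp_rw [mul_comm]

lemma aux_prod {d : ℕ} (n : Fin d → ℕ) :
    ∫⁻ x : Fin d → ℝ, ENNReal.ofReal ((∏ i, |x i| ^ n i) * Real.exp (-∑ i, |x i|)) =
      ENNReal.ofReal (∏ i, (2 * (n i).factorial : ℝ)) := by
  have h : ∀ x : Fin d → ℝ, (∏ i, |x i| ^ n i) * Real.exp (-∑ i, |x i|) =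
      ∏ i, (fun y : ℝ => |y| ^ n i * Real.exp (-|y|)) (x i) := by
    intro x
    rw [← Finset.sum_neg_distrib, Real.exp_sum, ← Finset.prod_mul_distrib]
  simp_rw [h]
  rw [← ofReal_integral_eq_lintegral_ofReal]
  · rw [integral_fintype_prod_volume_eq_prod (fun i (y : ℝ) => |y| ^ n i * Real.exp (-|y|))]
    simp_rw [aux_one]
  · apply Integrable.fintype_prod (f := fun i (y : ℝ) => |y| ^ n i * Real.exp (-|y|))
    intro i
    apply Integrable.of_integral_ne_zero
    rw [aux_one]; positivity
  · exact Filter.Eventually.of_forall fun x => Finset.prod_nonneg fun i _ => by positivity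

lemma aux_vol (d : ℕ) : ENNReal.ofReal (2 ^ d) = ENNReal.ofReal d.factorial *
    volume {x : Fin d → ℝ | ∑ i, |x i| ≤ 1} := by
  have h1 := aux_layer (d := d) (k := 0) (fun _ => 1) (by fun_prop) (by simp) (by simp)
  have h2 := aux_prod (d := d) (fun _ => 0)
  simp at h1 h2
  simpa [h2] using h1

lemma aux_sq {d : ℕ} (j : Fin d) : 2 * ENNReal.ofReal (2 ^ d) = ENNReal.ofReal (d + 2).factorial *
    ∫⁻ x in {x : Fin d → ℝ | ∑ i, |x i| ≤ 1}, ENNReal.ofReal ((x j) ^ 2) := by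
  have h1 := aux_layer (d := d) (k := 2) (fun x => (x j) ^ 2) (by fun_prop) (fun x => sq_nonneg _)
    (fun t _ x => by simp [mul_pow])
  have h2 := aux_prod (d := d) (fun i => if i = j then 2 else 0)
  have h3 : ∀ x : Fin d → ℝ, ∏ i, |x i| ^ (if i = j then 2 else 0) = x j ^ 2 := by
    intro x
    rw [Finset.prod_eq_single j] <;> simp +contextual
  have h4 : ∏ i : Fin d, (2 * ((if i = j then 2 else 0).factorial : ℝ)) = 2 * 2 ^ d := by
    have : ∏ i : Fin d, ((if i = j then 2 else 0).factorial : ℝ) = 2 := by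
      rw [Finset.prod_eq_single j] <;> simp +contextual
    rw [Finset.prod_mul_distrib, this]
    simp [mul_comm]
  simp_rw [h3, h4] at h2
  rw [← h1, h2, ENNReal.ofReal_mul (by norm_num)]
  simp

lemma aux_ballE (d : ℕ) :
    (WithLp.toLp 2 : (Fin d → ℝ) → EuclideanSpace ℝ (Fin d)) ⁻¹' (l1Ball d) =
      {x : Fin d → ℝ | ∑ i, |x i| ≤ 1} := by
  ext x; simp [l1Ball]

lemma aux_closed (d : ℕ) : IsClosed (l1Ball d) :=
  isClosed_le (by fun_prop) continuous_const

lemma aux_norm {d : ℕ} {u : EuclideanSpace ℝ (Fin d)} (hu : u ∈ l1Ball d) : ‖u‖ ≤ 1 := by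
  have hu' : ∑ i, |u i| ≤ 1 := hu
  have h : ‖u‖ ^ 2 ≤ 1 := by
    rw [EuclideanSpace.real_norm_sq_eq]
    refine le_trans (Finset.sum_le_sum fun i _ => ?_) hu'
    have h1 : |u i| ≤ 1 :=
      (Finset.single_le_sum (f := fun i => |u i|) (fun i _ => abs_nonneg _) (Finset.mem_univ i)).trans hu'
    rw [← sq_abs]
    nlinarith [abs_nonneg (u i)]
  nlinarith [norm_nonneg u]

lemma aux_compact (d : ℕ) : IsCompact (l1Ball d) :=
  Metric.isCompact_of_isClosed_isBounded (aux_closed d)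
    ((Metric.isBounded_closedBall (x := (0 : EuclideanSpace ℝ (Fin d))) (r := 1)).subset
      fun u hu => by simpa using aux_norm hu)

lemma aux_volE (d : ℕ) : (2 ^ d : ℝ) = d.factorial * volume.real (l1Ball d) := by
  have h := aux_vol d
  rw [← aux_ballE, (PiLp.volume_preserving_toLp (Fin d)).measure_preimage
    (aux_closed d).measurableSet.nullMeasurableSet] at h
  have := congrArg ENNReal.toReal h
  rw [ENNReal.toReal_mul, ENNReal.toReal_ofReal (by positivity), ENNReal.toReal_ofReal (by positivity)] at this
  exact this

lemma aux_sqE {d : ℕ} (j : Fin d) : (2 * 2 ^ d : ℝ) = (d + 2).factorial *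
    ∫ u in l1Ball d, (u j) ^ 2 := by
  have h := aux_sq j
  rw [← aux_ballE, (PiLp.volume_preserving_toLp (Fin d)).setLIntegral_comp_preimage
    (f := fun u : EuclideanSpace ℝ (Fin d) => ENNReal.ofReal ((u j) ^ 2))
    (aux_closed d).measurableSet (by fun_prop)] at h
  have := congrArg ENNReal.toReal h
  rw [ENNReal.toReal_mul, ENNReal.toReal_mul, ENNReal.toReal_ofReal (by positivity), ENNReal.toReal_ofReal (by positivity)] at this
  rw [integral_eq_lintegral_of_nonneg_ae (Filter.Eventually.of_forall fun u => sq_nonneg _)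
    (by fun_prop)]
  simpa using this

lemma aux_normsq (d : ℕ) (hd : 1 ≤ d) :
    ∫ u in l1Ball d, ‖u‖ ^ 2 ≤ 2 / d * volume.real (l1Ball d) := by
  simp_rw [EuclideanSpace.real_norm_sq_eq]
  rw [integral_finsetSum]
  swap
  · intro i _
    exact (Continuous.continuousOn (by fun_prop)).integrableOn_compact (aux_compact d)
  have h : ∀ j : Fin d, ∫ u in l1Ball d, (u j) ^ 2 = 2 / ((d + 1) * (d + 2)) * volume.real (l1Ball d) := by
    intro j
    have h1 := aux_sqE j
    rw [aux_volE d, Nat.factorial_succ, Nat.factorial_succ] at h1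
    push_cast at h1
    have hf : (0 : ℝ) < d.factorial := by positivity
    have h2 : 2 * volume.real (l1Ball d) = (d + 2) * (d + 1) * ∫ u in l1Ball d, (u j) ^ 2 := by
      apply mul_left_cancel₀ hf.ne'
      linarith
    field_simp
    linarith
  simp_rw [h]
  have hd' : (0 : ℝ) < d := by exact_mod_cast hd
  simp only [Finset.sum_const, Finset.card_univ, Fintype.card_fin, nsmul_eq_mul]
  rw [← mul_assoc]
  apply mul_le_mul_of_nonneg_right _ measureReal_nonneg
  rw [mul_div_assoc', div_le_div_iff₀ (by positivity) hd']
  nlinarith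

lemma aux_norm1 (d : ℕ) (hd : 1 ≤ d) :
    ∫ u in l1Ball d, ‖u‖ ≤ 2 / Real.sqrt d * volume.real (l1Ball d) := by
  have hd' : (0 : ℝ) < d := by exact_mod_cast hd
  have hs : 0 < Real.sqrt d := Real.sqrt_pos.2 hd'
  have hss : Real.sqrt d * Real.sqrt d = d := Real.mul_self_sqrt hd'.le
  have hV : volume (l1Ball d) ≠ ⊤ := (aux_compact d).measure_lt_top.ne
  have i1 : IntegrableOn (fun u : EuclideanSpace ℝ (Fin d) => ‖u‖) (l1Ball d) :=
    (Continuous.continuousOn (by fun_prop)).integrableOn_compact (aux_compact d)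
  have i2 : IntegrableOn (fun u : EuclideanSpace ℝ (Fin d) => ‖u‖ ^ 2) (l1Ball d) :=
    (Continuous.continuousOn (by fun_prop)).integrableOn_compact (aux_compact d)
  have i3 : IntegrableOn (fun u : EuclideanSpace ℝ (Fin d) => 1 / Real.sqrt d) (l1Ball d) :=
    (Continuous.continuousOn (by fun_prop)).integrableOn_compact (aux_compact d)
  have h : ∫ u in l1Ball d, ‖u‖ ≤ ∫ u in l1Ball d, (Real.sqrt d / 2 * ‖u‖ ^ 2 + 1 / Real.sqrt d) := by
    apply integral_mono i1 ((i2.const_mul _).add i3)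
    intro u
    simp only [Pi.add_apply]
    have : 0 ≤ 1 / Real.sqrt d * ((Real.sqrt d * ‖u‖ - 1) ^ 2 / 2 + 1 / 2) := by positivity
    have e : 1 / Real.sqrt d * ((Real.sqrt d * ‖u‖ - 1) ^ 2 / 2 + 1 / 2) =
      Real.sqrt d / 2 * ‖u‖ ^ 2 + 1 / Real.sqrt d - ‖u‖ := by
      field_simp
      ring
    linarith
  rw [integral_add (i2.const_mul _) i3, integral_const_mul, setIntegral_const, smul_eq_mul] at h
  refine h.trans ?_
  have := mul_le_mul_of_nonneg_left (aux_normsq d hd) (by positivity : 0 ≤ Real.sqrt d / 2)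
  have e : Real.sqrt d / 2 * (2 / d * volume.real (l1Ball d)) = 1 / Real.sqrt d * volume.real (l1Ball d) := by
    field_simp
    rw [pow_two, hss]
  rw [e] at this
  calc _ ≤ _ := add_le_add_left this _
    _ = _ := by ring

/-- For `f` convex and `M₂`-Lipschitz in the `l₂`-norm, the `l₁`-ball
smoothing `f_γ(x) = E[f(x + γ·ẽ)]`, `ẽ` uniform on `B₁^d(1)`, satisfies
`f(x) ≤ f_γ(x) ≤ f(x) + (2/√d)·γ·M₂`. -/
theorem l1_smoothing_approximation_bounds {d : ℕ} (hd : 1 ≤ d) (γ M₂ : ℝ) (hγ : 0 < γ)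
    (f fγ : EuclideanSpace ℝ (Fin d) → ℝ)
    (hconv : ConvexOn ℝ Set.univ f)
    (hlip : ∀ x y : EuclideanSpace ℝ (Fin d), |f y - f x| ≤ M₂ * ‖y - x‖)
    (hfγ : ∀ x, fγ x = ∫ e, f (x + γ • e) ∂(uniformOn (l1Ball d)))
    (x : EuclideanSpace ℝ (Fin d)) :
    f x ≤ fγ x ∧ fγ x ≤ f x + 2 / Real.sqrt d * γ * M₂ := by
  have hd' : (0 : ℝ) < d := by exact_mod_cast hd
  have hM : 0 ≤ M₂ := by
    have h := (abs_nonneg _).trans (hlip 0 (EuclideanSpace.single ⟨0, hd⟩ 1))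
    simpa using h
  have hcont : Continuous f := by
    have : LipschitzWith ⟨M₂, hM⟩ f := LipschitzWith.of_dist_le_mul fun a b => by
      rw [Real.dist_eq, dist_eq_norm]; exact hlip b a
    exact this.continuous
  have hVt : volume (l1Ball d) ≠ ⊤ := (aux_compact d).measure_lt_top.ne
  have hV : 0 < volume.real (l1Ball d) := by
    have := aux_volE d
    by_contra hc
    have h0 : volume.real (l1Ball d) = 0 := le_antisymm (not_lt.1 hc) measureReal_nonneg
    rw [h0, mul_zero] at this
    have h2 : (0 : ℝ) < 2 ^ d := by positivity
    linarith
  have key : fγ x * volume.real (l1Ball d) = ∫ e in l1Ball d, f (x + γ • e) := by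
    rw [hfγ, uniformOn, integral_smul_measure, ENNReal.toReal_inv, smul_eq_mul]
    rw [← measureReal_def]
    field_simp
  have ii : ∀ g : EuclideanSpace ℝ (Fin d) → ℝ, Continuous g → IntegrableOn g (l1Ball d) :=
    fun g hg => hg.continuousOn.integrableOn_compact (aux_compact d)
  have c1 : Continuous fun e => f (x + γ • e) := by fun_prop
  have c2 : Continuous fun e => f (x + γ • -e) := by fun_prop
  have sym : ∫ e in l1Ball d, f (x + γ • -e) = ∫ e in l1Ball d, f (x + γ • e) := by
    have hm := (aux_closed d).measurableSet
    rw [← integral_indicator hm, ← integral_indicator hm, ← integral_neg_eq_self]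
    congr 1; ext e
    have : -e ∈ l1Ball d ↔ e ∈ l1Ball d := by simp [l1Ball]
    by_cases he : e ∈ l1Ball d
    · rw [Set.indicator_of_mem (this.2 he), Set.indicator_of_mem he, neg_neg]
    · rw [Set.indicator_of_notMem (fun h => he (this.1 h)), Set.indicator_of_notMem he]
  constructor
  · have h : ∫ e in l1Ball d, f x ≤ ∫ e in l1Ball d, (1 / 2 * f (x + γ • e) + 1 / 2 * f (x + γ • -e)) := by
      apply integral_mono (ii _ (by fun_prop)) (ii _ (by fun_prop))
      intro e
      have := hconv.2 (Set.mem_univ (x + γ • e)) (Set.mem_univ (x + γ • -e))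
        (by norm_num : (0 : ℝ) ≤ 1 / 2) (by norm_num : (0 : ℝ) ≤ 1 / 2) (by norm_num)
      have e1 : (1 / 2 : ℝ) • (x + γ • e) + (1 / 2 : ℝ) • (x + γ • -e) = x := by module
      rw [e1] at this
      simpa using this
    rw [integral_add ((ii _ c1).const_mul _) ((ii _ c2).const_mul _), integral_const_mul,
      integral_const_mul, sym, ← key, setIntegral_const, smul_eq_mul] at h
    exact le_of_mul_le_mul_right (by linarith) hV
  · have h : ∫ e in l1Ball d, f (x + γ • e) ≤ ∫ e in l1Ball d, (f x + M₂ * γ * ‖e‖) := by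
      apply integral_mono (ii _ c1) (ii _ (by fun_prop))
      intro e
      have := (le_abs_self _).trans (hlip x (x + γ • e))
      rw [add_sub_cancel_left, norm_smul, Real.norm_of_nonneg hγ.le] at this
      simp only
      linarith
    rw [integral_add (ii _ (by fun_prop)) (ii _ (by fun_prop)), integral_const_mul,
      setIntegral_const, smul_eq_mul, ← key] at h
    have h2 := mul_le_mul_of_nonneg_left (aux_norm1 d hd) (mul_nonneg hM hγ.le)
    refine le_of_mul_le_mul_right ?_ hV
    linarith
end

section
/- Let d ≥ 1, γ > 0, p ∈ [1,2] with conjugate exponent q (1/p + 1/q = 1), and let f : ℝ^d → ℝ be convex and M-Lipschitz with respect to the l_p-norm. Let f_γ(x) := E[f(x + γ·ẽ)], where ẽ is uniformly distributed on the Euclidean unit ball B₂^d(1). Then f_γ has L-Lipschitz gradient with L = √d·M/γ: for all x, y ∈ ℝ^d, ‖∇f_γ(y) − ∇f_γ(x)‖_q ≤ (√d·M/γ)·‖y − x‖_p. -/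
open MeasureTheory
open scoped ENNReal RealInnerProductSpace

lemma aux_slice (n : ℕ) (r : ℝ) (hr : 0 ≤ r) :
    (volume : Measure (ℝ × (Fin n → ℝ)))
      {z | z.1 ^ 2 + ∑ i, z.2 i ^ 2 ≤ 1 ∧ 1 < (z.1 - r) ^ 2 + ∑ i, z.2 i ^ 2} ≤
    ENNReal.ofReal r * volume {u : Fin n → ℝ | ∑ i, u i ^ 2 ≤ 1} := by
  have hm : MeasurableSet {z : ℝ × (Fin n → ℝ) | z.1 ^ 2 + ∑ i, z.2 i ^ 2 ≤ 1 ∧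
      1 < (z.1 - r) ^ 2 + ∑ i, z.2 i ^ 2} := by
    rw [Set.ofPred_and]
    exact (measurableSet_le (by fun_prop) (by fun_prop)).inter
      (measurableSet_lt (by fun_prop) (by fun_prop))
  have hB : MeasurableSet {u : Fin n → ℝ | ∑ i, u i ^ 2 ≤ 1} :=
    measurableSet_le (by fun_prop) (by fun_prop)
  rw [Measure.volume_eq_prod, Measure.prod_apply_symm hm, ← setLIntegral_const,
    ← lintegral_indicator hB]
  refine lintegral_mono fun u => ?_
  by_cases hu : ∑ i, u i ^ 2 ≤ 1
  · rw [Set.indicator_of_mem (by exact hu)]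
    set a := √(1 - ∑ i, u i ^ 2) with ha
    have ha0 : 0 ≤ a := Real.sqrt_nonneg _
    have ha2 : a ^ 2 = 1 - ∑ i, u i ^ 2 := Real.sq_sqrt (by linarith)
    calc _ ≤ volume (Set.Icc (-a) (r - a)) := by
          apply measure_mono
          rintro s ⟨h1, h2⟩
          simp only at h1 h2
          have h3 : |s| ≤ a := abs_le_of_sq_le_sq (by linarith) ha0
          rw [abs_le] at h3
          refine ⟨h3.1, ?_⟩
          by_contra! hc
          have : (s - r) ^ 2 ≤ a ^ 2 := sq_le_sq' (by linarith) (by linarith)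
          linarith
      _ = ENNReal.ofReal r := by rw [Real.volume_Icc]; congr 1; ring
  · rw [Set.indicator_of_notMem (by exact hu)]
    simp only [nonpos_iff_eq_zero]
    convert measure_empty (μ := volume) using 2
    ext s
    simp only [Set.mem_preimage, Set.mem_ofPred_eq, Set.mem_empty_iff_false, iff_false, not_and]
    intro h
    nlinarith [sq_nonneg s]

lemma aux_ballset (n : ℕ) : volume {u : Fin n → ℝ | ∑ i, u i ^ 2 ≤ 1} =
    volume (Metric.closedBall (0 : EuclideanSpace ℝ (Fin n)) 1) := by
  rw [← (PiLp.volume_preserving_ofLp (Fin n)).measure_preimage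
    (measurableSet_le (by fun_prop) (by fun_prop)).nullMeasurableSet]
  congr 1
  ext u
  simp [EuclideanSpace.norm_eq]

lemma aux_diff (n : ℕ) (h : EuclideanSpace ℝ (Fin (n + 1))) :
    volume (Metric.closedBall (0 : EuclideanSpace ℝ (Fin (n + 1))) 1 \ Metric.closedBall h 1) ≤
      ENNReal.ofReal ‖h‖ * volume (Metric.closedBall (0 : EuclideanSpace ℝ (Fin n)) 1) := by
  by_cases h0 : h = 0
  · simp [h0]
  obtain ⟨b, hb⟩ := Orthonormal.exists_orthonormalBasis_extension_of_card_eq (𝕜 := ℝ)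
    (E := EuclideanSpace ℝ (Fin (n + 1))) (ι := Fin (n + 1)) (by simp)
    (v := fun _ => (‖h‖⁻¹ : ℝ) • h) (s := {0}) (by
      rw [orthonormal_subsingleton_iff]
      intro i
      simp [norm_smul, h0])
  have hb0 := hb 0 rfl
  have hh : h = ‖h‖ • b 0 := by
    rw [hb0, smul_smul, mul_inv_cancel₀ (norm_ne_zero_iff.2 h0), one_smul]
  have hr : b.repr h = EuclideanSpace.single 0 ‖h‖ := by
    conv_lhs => rw [hh]
    rw [map_smul, b.repr_self]
    ext i
    simp
  rw [← aux_ballset]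
  refine le_trans (le_of_eq ?_) (aux_slice n ‖h‖ (norm_nonneg h))
  have hm : MeasurableSet {z : ℝ × (Fin n → ℝ) | z.1 ^ 2 + ∑ i, z.2 i ^ 2 ≤ 1 ∧
      1 < (z.1 - ‖h‖) ^ 2 + ∑ i, z.2 i ^ 2} := by
    rw [Set.ofPred_and]
    exact (measurableSet_le (by fun_prop) (by fun_prop)).inter
      (measurableSet_lt (by fun_prop) (by fun_prop))
  have hmp := ((volume_preserving_piFinSuccAbove (fun _ : Fin (n + 1) => ℝ) 0).comp
    (PiLp.volume_preserving_ofLp (Fin (n + 1)))).comp b.measurePreserving_repr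
  rw [← hmp.measure_preimage hm.nullMeasurableSet]
  congr 1
  ext z
  simp only [Set.mem_sdiff, Metric.mem_closedBall, not_le, dist_eq_norm, sub_zero]
  rw [← b.repr.norm_map z, ← b.repr.norm_map (z - h), map_sub, hr]
  simp only [Set.mem_preimage, Function.comp_apply]
  generalize b.repr z = w
  generalize ‖h‖ = r
  simp [EuclideanSpace.norm_eq, Fin.sum_univ_succ, Real.lt_sqrt,
    MeasurableEquiv.piFinSuccAbove, Fin.insertNthEquiv, Fin.tail]

lemma aux_ratio (n : ℕ) :
    2 * volume.real (Metric.closedBall (0 : EuclideanSpace ℝ (Fin n)) 1) ≤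
      √((n + 1 : ℕ) : ℝ) * volume.real (Metric.closedBall (0 : EuclideanSpace ℝ (Fin (n + 1))) 1) := by
  have hV : volume.real (Metric.closedBall (0 : EuclideanSpace ℝ (Fin (n + 1))) 1) =
      √Real.pi ^ (n + 1) / Real.Gamma (((n + 1 : ℕ) : ℝ) / 2 + 1) := by
    rw [measureReal_def, EuclideanSpace.volume_closedBall]
    have : 0 < Real.Gamma (((n + 1 : ℕ) : ℝ) / 2 + 1) := Real.Gamma_pos_of_pos (by positivity)
    simp only [ENNReal.ofReal_one, one_pow, one_mul, Fintype.card_fin]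
    rw [ENNReal.toReal_ofReal (by positivity)]
  have hV0 : volume.real (Metric.closedBall (0 : EuclideanSpace ℝ (Fin n)) 1) =
      √Real.pi ^ n / Real.Gamma ((n : ℝ) / 2 + 1) := by
    rcases Nat.eq_zero_or_pos n with rfl | hn
    · rw [measureReal_def, volume_euclideanSpace_eq_dirac]
      simp
    have : Nonempty (Fin n) := ⟨⟨0, hn⟩⟩
    rw [measureReal_def, EuclideanSpace.volume_closedBall]
    have : 0 < Real.Gamma (((n : ℕ) : ℝ) / 2 + 1) := Real.Gamma_pos_of_pos (by positivity)
    simp only [ENNReal.ofReal_one, one_pow, one_mul, Fintype.card_fin]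
    rw [ENNReal.toReal_ofReal (by positivity)]
  rw [hV, hV0]
  set x : ℝ := (n : ℝ) / 2 + 1 with hx
  have hx2 : (((n + 1 : ℕ) : ℝ) / 2 + 1) = x + 1 / 2 := by push_cast; rw [hx]; ring
  rw [hx2]
  have hxp : 0 < x := by positivity
  have hG : 0 < Real.Gamma x := Real.Gamma_pos_of_pos hxp
  have hG2 : 0 < Real.Gamma (x + 1 / 2) := Real.Gamma_pos_of_pos (by positivity)
  have key : 2 * Real.Gamma (x + 1 / 2) ≤ √((n + 1 : ℕ) : ℝ) * √Real.pi * Real.Gamma x := by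
    rcases Nat.eq_zero_or_pos n with rfl | hn
    · simp only [hx]
      rw [show ((0 : ℕ) : ℝ) / 2 + 1 + 1 / 2 = 1 / 2 + 1 by norm_num,
        Real.Gamma_add_one (by norm_num), Real.Gamma_one_half_eq]
      simp
    · have h1 := Real.Gamma_mul_add_mul_le_rpow_Gamma_mul_rpow_Gamma (s := x) (t := x + 1)
        (a := 1 / 2) (b := 1 / 2) hxp (by positivity) (by norm_num) (by norm_num) (by norm_num)
      rw [show 1 / 2 * x + 1 / 2 * (x + 1) = x + 1 / 2 by ring, Real.Gamma_add_one hxp.ne',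
        Real.mul_rpow hxp.le hG.le, ← Real.sqrt_eq_rpow, ← Real.sqrt_eq_rpow] at h1
      have h2 : √(Real.Gamma x) * (√x * √(Real.Gamma x)) = √x * Real.Gamma x := by
        rw [mul_left_comm, Real.mul_self_sqrt hG.le]
      rw [h2] at h1
      have h3 : 2 * √x ≤ √((n + 1 : ℕ) : ℝ) * √Real.pi := by
        rw [← Real.sqrt_mul (by positivity)]
        apply Real.le_sqrt_of_sq_le
        rw [mul_pow, Real.sq_sqrt hxp.le, hx]
        have h4 : (1 : ℝ) ≤ n := by exact_mod_cast hn
        push_cast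
        nlinarith [Real.pi_gt_three]
      nlinarith
  rw [mul_div_assoc', mul_div_assoc', div_le_div_iff₀ hG hG2, pow_succ]
  have : 0 < √Real.pi ^ n := by have := Real.pi_pos; positivity
  nlinarith

lemma aux_lp_eq {d : ℕ} (p : ℝ≥0∞) (hp : 1 ≤ p) (x : EuclideanSpace ℝ (Fin d)) :
    _root_.lpNorm p x = ‖WithLp.toLp p (WithLp.ofLp x)‖ := by
  unfold _root_.lpNorm
  split_ifs with h
  · subst h
    rw [PiLp.norm_eq_ciSup]
    rfl
  · rw [PiLp.norm_eq_sum (ENNReal.toReal_pos (by positivity) h)]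
    rfl

lemma aux_lp_nonneg {d : ℕ} (p : ℝ≥0∞) (hp : 1 ≤ p) (x : EuclideanSpace ℝ (Fin d)) :
    0 ≤ _root_.lpNorm p x := by
  have : Fact (1 ≤ p) := ⟨hp⟩
  rw [aux_lp_eq p hp]; exact norm_nonneg _

lemma aux_lp_smul {d : ℕ} (p : ℝ≥0∞) (hp : 1 ≤ p) (t : ℝ) (x : EuclideanSpace ℝ (Fin d)) :
    _root_.lpNorm p (t • x) = |t| * _root_.lpNorm p x := by
  have : Fact (1 ≤ p) := ⟨hp⟩
  rw [aux_lp_eq p hp, aux_lp_eq p hp, WithLp.ofLp_smul, WithLp.toLp_smul, norm_smul,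
    Real.norm_eq_abs]

lemma aux_lp_bound {d : ℕ} (p : ℝ≥0∞) (hp : 1 ≤ p) :
    ∃ C : ℝ, 0 ≤ C ∧ ∀ x : EuclideanSpace ℝ (Fin d), _root_.lpNorm p x ≤ C * ‖x‖ := by
  have : Fact (1 ≤ p) := ⟨hp⟩
  let T : EuclideanSpace ℝ (Fin d) →ₗ[ℝ] PiLp p (fun _ : Fin d => ℝ) :=
    ((WithLp.linearEquiv 2 ℝ (Fin d → ℝ)).trans
      (WithLp.linearEquiv p ℝ (Fin d → ℝ)).symm).toLinearMap
  refine ⟨‖LinearMap.toContinuousLinearMap T‖, norm_nonneg _, fun x => ?_⟩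
  rw [aux_lp_eq p hp]
  exact (LinearMap.toContinuousLinearMap T).le_opNorm x

lemma aux_l2_le {d : ℕ} (p : ℝ≥0∞) (hp : 1 ≤ p) (hp2 : p ≤ 2)
    (x : EuclideanSpace ℝ (Fin d)) : ‖x‖ ≤ _root_.lpNorm p x := by
  have hS0 := aux_lp_nonneg p hp x
  have ht : p ≠ ∞ := (hp2.trans_lt (by norm_num)).ne
  have hp1' : 1 ≤ p.toReal := by
    rw [← ENNReal.toReal_one]; exact ENNReal.toReal_mono ht hp
  have hp2' : p.toReal ≤ 2 := by
    have := ENNReal.toReal_mono (by norm_num) hp2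
    simpa using this
  set r := p.toReal
  have hS : (_root_.lpNorm p x) = (∑ i, |x i| ^ r) ^ (1 / r) := by
    simp [_root_.lpNorm, ht, r]
  have hsum : 0 ≤ ∑ i, |x i| ^ r := Finset.sum_nonneg fun i _ => by positivity
  have hSr : (_root_.lpNorm p x) ^ r = ∑ i, |x i| ^ r := by
    rw [hS, ← Real.rpow_mul hsum, one_div_mul_cancel (by positivity), Real.rpow_one]
  have hi : ∀ i, |x i| ≤ _root_.lpNorm p x := by
    intro i
    rw [← Real.rpow_le_rpow_iff (abs_nonneg _) hS0 (show 0 < r by positivity), hSr]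
    exact Finset.single_le_sum (f := fun i => |x i| ^ r) (fun i _ => by positivity)
      (Finset.mem_univ i)
  set S := _root_.lpNorm p x
  rw [EuclideanSpace.norm_eq]
  apply Real.sqrt_le_iff.2 ⟨hS0, ?_⟩
  have hsq : ∀ a : ℝ, 0 ≤ a → a ^ 2 = a ^ r * a ^ (2 - r) := by
    intro a ha
    rw [← Real.rpow_add_of_nonneg ha (by linarith) (by linarith)]
    norm_num
  calc ∑ i, ‖x i‖ ^ 2 ≤ ∑ i, |x i| ^ r * S ^ (2 - r) := by
        apply Finset.sum_le_sum
        intro i _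
        rw [Real.norm_eq_abs, hsq _ (abs_nonneg _)]
        gcongr
        exact hi i
    _ = S ^ 2 := by rw [← Finset.sum_mul, ← hSr, ← hsq S hS0]

lemma aux_dual {d : ℕ} (hd : 1 ≤ d) (p q : ℝ≥0∞) (hp1 : 1 ≤ p) (hp2 : p ≤ 2)
    (hpq : 1 / p + 1 / q = 1) (w : EuclideanSpace ℝ (Fin d)) (K : ℝ) (hK : 0 ≤ K)
    (h : ∀ v : EuclideanSpace ℝ (Fin d), ⟪w, v⟫ ≤ K * _root_.lpNorm p v) : _root_.lpNorm q w ≤ K := by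
  have ht : p ≠ ∞ := (hp2.trans_lt (by norm_num)).ne
  have : Nonempty (Fin d) := ⟨⟨0, hd⟩⟩
  have hinner : ∀ v : EuclideanSpace ℝ (Fin d), ⟪w, v⟫ = ∑ i, w i * v i := by
    intro v
    simp [PiLp.inner_apply, mul_comm]
  by_cases hq : q = ∞
  · subst hq
    have hp : p = 1 := by simpa using hpq
    subst hp
    simp only [_root_.lpNorm, if_true]
    apply ciSup_le
    intro i
    have := h (EuclideanSpace.single i (SignType.sign (w i) : ℝ))
    rw [hinner] at this
    simp [_root_.lpNorm, Pi.single_apply, apply_ite abs] at this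
    refine this.trans ?_
    have h2 : |(SignType.sign (w i) : ℝ)| ≤ 1 := by
      rcases lt_trichotomy (w i) 0 with h | h | h <;> simp [h]
    nlinarith
  · have hpe : p.HolderConjugate q := by
      rw [ENNReal.holderConjugate_iff]; simpa using hpq
    have hp1' : p ≠ 1 := by
      rintro rfl
      apply hq
      simpa using hpq
    have hplt : 1 < p.toReal := by
      rw [← ENNReal.toReal_one]
      exact (ENNReal.toReal_lt_toReal (by simp) ht).2 (lt_of_le_of_ne hp1 hp1'.symm)
    have hre : p.toReal.HolderConjugate q.toReal := by
      rw [Real.holderConjugate_iff]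
      refine ⟨hplt, ?_⟩
      have h0 : p ≠ 0 := by rintro rfl; simp at hp1
      have hq0 : q ≠ 0 := by rintro rfl; simp at hpq
      have := congrArg ENNReal.toReal hpq
      rw [ENNReal.toReal_add (by simpa using h0) (by simpa using hq0)] at this
      simpa using this
    obtain ⟨⟨g, hg, hgw⟩, -⟩ := NNReal.isGreatest_Lp Finset.univ (fun i => ‖w i‖₊) hre.symm
    have e1 : _root_.lpNorm q w = ∑ i, |w i| * (g i : ℝ) := by
      have := congrArg (fun t : NNReal => (t : ℝ)) hgw
      simp only [NNReal.coe_sum, NNReal.coe_mul, NNReal.coe_rpow, coe_nnnorm,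
        Real.norm_eq_abs] at this
      rw [this]; simp [_root_.lpNorm, hq]
    have := h (WithLp.toLp 2 fun i => (SignType.sign (w i) : ℝ) * g i)
    rw [hinner] at this
    simp only [← mul_assoc, self_mul_sign] at this
    rw [e1]
    refine this.trans ?_
    apply mul_le_of_le_one_right hK
    simp only [_root_.lpNorm, ht, if_false]
    apply Real.rpow_le_one
    · positivity
    · have hg' : ∑ i, (g i : ℝ) ^ p.toReal ≤ 1 := by exact_mod_cast hg
      refine le_trans (Finset.sum_le_sum fun i _ => ?_) hg'
      apply Real.rpow_le_rpow (abs_nonneg _) _ (by linarith)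
      rw [abs_mul, NNReal.abs_eq]
      apply mul_le_of_le_one_left (g i).2
      rcases lt_trichotomy (w i) 0 with h | h | h <;> simp [h]
    · positivity

lemma aux_ball (d : ℕ) : l2Ball d = Metric.closedBall 0 1 := by
  ext u; simp [l2Ball]

lemma aux_shift (d : ℕ) (hd : 1 ≤ d) (h : EuclideanSpace ℝ (Fin d))
    (G : EuclideanSpace ℝ (Fin d) → ℝ) (hG : Continuous G) (C : ℝ) (hC : ∀ z, |G z| ≤ C) :
    |∫ e, G (e + h) ∂(uniformOn (l2Ball d)) - ∫ e, G e ∂(uniformOn (l2Ball d))| ≤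
      C * (√d * ‖h‖) := by
  obtain ⟨n, rfl⟩ : ∃ n, d = n + 1 := ⟨d - 1, by omega⟩
  have hC0 : 0 ≤ C := (abs_nonneg _).trans (hC 0)
  rw [aux_ball]
  simp only [uniformOn, integral_smul_measure]
  set B : Set (EuclideanSpace ℝ (Fin (n + 1))) := Metric.closedBall 0 1 with hB
  set B' : Set (EuclideanSpace ℝ (Fin (n + 1))) := Metric.closedBall h 1 with hB'
  have e1 : ∫ e in B, G (e + h) = ∫ e in B', G e := by
    rw [← integral_indicator Metric.isClosed_closedBall.measurableSet,
      ← integral_indicator Metric.isClosed_closedBall.measurableSet,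
      ← integral_add_right_eq_self (B'.indicator G) h]
    congr 1
    ext e
    simp only [Set.indicator, hB, hB', Metric.mem_closedBall, dist_eq_norm, sub_zero,
      add_sub_cancel_right]
  have hI : IntegrableOn G B := hG.continuousOn.integrableOn_compact (isCompact_closedBall _ _)
  have hI' : IntegrableOn G B' := hG.continuousOn.integrableOn_compact (isCompact_closedBall _ _)
  have e2 := integral_inter_add_sdiff (Metric.isClosed_closedBall.measurableSet : MeasurableSet B') hI
  have e3 := integral_inter_add_sdiff (Metric.isClosed_closedBall.measurableSet : MeasurableSet B) hI'
  set Vn := volume.real (Metric.closedBall (0 : EuclideanSpace ℝ (Fin n)) 1) with hVn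
  have hfin : ENNReal.ofReal ‖h‖ * volume (Metric.closedBall (0 : EuclideanSpace ℝ (Fin n)) 1) ≠ ∞ :=
    ENNReal.mul_ne_top ENNReal.ofReal_ne_top measure_closedBall_lt_top.ne
  have v1 : volume.real (B \ B') ≤ ‖h‖ * Vn := by
    have := ENNReal.toReal_mono hfin (aux_diff n h)
    rwa [ENNReal.toReal_mul, ENNReal.toReal_ofReal (norm_nonneg h)] at this
  have v2 : volume.real (B' \ B) ≤ ‖h‖ * Vn := by
    have := aux_diff n (-h)
    rw [norm_neg] at this
    have := ENNReal.toReal_mono hfin this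
    rw [ENNReal.toReal_mul, ENNReal.toReal_ofReal (norm_nonneg h)] at this
    refine le_trans (le_of_eq ?_) this
    rw [measureReal_def, ← measure_preimage_add_right volume h (B' \ B)]
    congr 2
    ext e
    simp [hB, hB', dist_eq_norm]
  have b1 : ‖∫ e in B \ B', G e‖ ≤ C * volume.real (B \ B') :=
    norm_setIntegral_le_of_norm_le_const
      ((measure_mono Set.sdiff_subset).trans_lt measure_closedBall_lt_top) (fun z _ => hC z)
  have b2 : ‖∫ e in B' \ B, G e‖ ≤ C * volume.real (B' \ B) :=
    norm_setIntegral_le_of_norm_le_const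
      ((measure_mono Set.sdiff_subset).trans_lt measure_closedBall_lt_top) (fun z _ => hC z)
  rw [Real.norm_eq_abs] at b1 b2
  have hV : 0 < volume.real B :=
    ENNReal.toReal_pos (Metric.measure_closedBall_pos _ _ one_pos).ne'
      measure_closedBall_lt_top.ne
  have hmain : |(∫ e in B', G e) - ∫ e in B, G e| ≤ C * (2 * (‖h‖ * Vn)) := by
    rw [← hB'] at e2
    rw [← hB] at e3
    rw [← e2, ← e3, Set.inter_comm B' B, add_sub_add_left_eq_sub]
    rw [← Real.norm_eq_abs]
    refine (norm_sub_le _ _).trans ?_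
    rw [Real.norm_eq_abs, Real.norm_eq_abs]
    nlinarith
  have hr := aux_ratio n
  rw [← hVn, ← hB] at hr
  rw [e1, ← smul_sub, smul_eq_mul, abs_mul, ENNReal.toReal_inv, ← measureReal_def,
    abs_of_pos (inv_pos.2 hV), inv_mul_le_iff₀ hV]
  refine hmain.trans ?_
  have h5 : ‖h‖ * (2 * Vn) ≤ ‖h‖ * (√((n + 1 : ℕ) : ℝ) * volume.real B) := by gcongr
  calc C * (2 * (‖h‖ * Vn)) = C * (‖h‖ * (2 * Vn)) := by ring
    _ ≤ C * (‖h‖ * (√((n + 1 : ℕ) : ℝ) * volume.real B)) := by gcongr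
    _ = _ := by ring

lemma aux_prob (d : ℕ) : IsProbabilityMeasure (uniformOn (l2Ball d)) := by
  constructor
  rw [aux_ball]
  simp only [uniformOn, Measure.smul_apply, Measure.restrict_apply_univ, smul_eq_mul]
  exact ENNReal.inv_mul_cancel (Metric.measure_closedBall_pos _ _ one_pos).ne'
    measure_closedBall_lt_top.ne

lemma aux_integrable {d : ℕ} (G : EuclideanSpace ℝ (Fin d) → ℝ) (hG : Continuous G) :
    Integrable G (uniformOn (l2Ball d)) := by
  rw [aux_ball]
  refine Integrable.smul_measure ?_ ?_
  · exact hG.continuousOn.integrableOn_compact (isCompact_closedBall _ _)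
  · exact ENNReal.inv_ne_top.2 (Metric.measure_closedBall_pos _ _ one_pos).ne'

lemma aux_hasFDeriv {d : ℕ} (γ : ℝ) (hγ : 0 < γ) (f : EuclideanSpace ℝ (Fin d) → ℝ)
    (K : NNReal) (hf : LipschitzWith K f) (x : EuclideanSpace ℝ (Fin d)) :
    DifferentiableAt ℝ (fun x => ∫ e, f (x + γ • e) ∂(uniformOn (l2Ball d))) x := by
  have hP := aux_prob d
  have hc := hf.continuous
  have hG : ∀ x : EuclideanSpace ℝ (Fin d), LipschitzWith (K * ‖γ‖₊)
      (fun e => f (x + γ • e)) := by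
    intro x
    refine hf.comp ?_
    refine LipschitzWith.of_dist_le_mul fun a b => ?_
    simp [dist_eq_norm, ← smul_sub, norm_smul]
  have hae : ∀ᵐ e ∂(uniformOn (l2Ball d)), DifferentiableAt ℝ (fun e => f (x + γ • e)) e := by
    have h1 : ∀ᵐ e ∂(volume : Measure (EuclideanSpace ℝ (Fin d))),
      DifferentiableAt ℝ (fun e => f (x + γ • e)) e := (hG x).ae_differentiableAt
    exact Measure.ae_smul_measure (ae_restrict_of_ae h1) _
  refine (hasFDerivAt_integral_of_dominated_loc_of_lip (𝕜 := ℝ) (μ := uniformOn (l2Ball d))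
    (F := fun x e => f (x + γ • e)) (F' := fun e => fderiv ℝ f (x + γ • e))
    (bound := fun _ => (K : ℝ)) (s := Set.univ) Filter.univ_mem ?_ ?_ ?_ ?_ ?_ ?_).2.differentiableAt
  · exact Filter.Eventually.of_forall fun y => (hG y).continuous.aestronglyMeasurable
  · exact aux_integrable _ (hG x).continuous
  · exact ((measurable_fderiv ℝ f).comp (by fun_prop)).aestronglyMeasurable
  · refine Filter.Eventually.of_forall fun e => ?_
    simp only [Real.nnabs_of_nonneg K.2, Real.toNNReal_coe, lipschitzOnWith_univ]
    refine LipschitzWith.of_dist_le_mul fun a b => ?_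
    simpa using hf.dist_le_mul (a + γ • e) (b + γ • e)
  · exact integrable_const _
  · filter_upwards [hae] with e he
    have h2 : DifferentiableAt ℝ f (x + γ • e) := by
      have h3 : f = (fun e => f (x + γ • e)) ∘ (fun z => γ⁻¹ • (z - x)) := by
        ext z
        simp [smul_smul, mul_inv_cancel₀ hγ.ne']
      rw [h3]
      apply DifferentiableAt.comp
      · simpa [smul_smul, inv_mul_cancel₀ hγ.ne'] using he
      · fun_prop
    exact (hasFDerivAt_comp_add_right (γ • e)).2 h2.hasFDerivAt

theorem l2_smoothing_gradient_lipschitz {d : ℕ} (hd : 1 ≤ d) (γ M : ℝ) (hγ : 0 < γ)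
    (p q : ℝ≥0∞) (hp1 : 1 ≤ p) (hp2 : p ≤ 2) (hpq : 1 / p + 1 / q = 1)
    (f fγ : EuclideanSpace ℝ (Fin d) → ℝ)
    (hconv : ConvexOn ℝ Set.univ f)
    (hlip : ∀ x y : EuclideanSpace ℝ (Fin d), |f y - f x| ≤ M * lpNorm p (y - x))
    (hfγ : ∀ x, fγ x = ∫ e, f (x + γ • e) ∂(uniformOn (l2Ball d))) :
    Differentiable ℝ fγ ∧
      ∀ x y : EuclideanSpace ℝ (Fin d),
        lpNorm q (gradient fγ y - gradient fγ x) ≤ Real.sqrt d * M / γ * lpNorm p (y - x) := by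
  have hM : 0 ≤ M := by
    have h1 := hlip 0 (EuclideanSpace.single ⟨0, hd⟩ (1 : ℝ))
    have h2 := aux_l2_le p hp1 hp2 (EuclideanSpace.single (⟨0, hd⟩ : Fin d) (1 : ℝ))
    simp only [EuclideanSpace.norm_single, norm_one] at h2
    rw [sub_zero] at h1
    have h3 := (abs_nonneg _).trans h1
    by_contra! h
    nlinarith
  obtain ⟨C, hC0, hC⟩ := aux_lp_bound (d := d) p hp1
  have hf : LipschitzWith (Real.toNNReal (M * C)) f := by
    refine LipschitzWith.of_dist_le_mul fun a b => ?_
    rw [Real.dist_eq, dist_eq_norm, Real.coe_toNNReal _ (by positivity)]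
    refine (hlip b a).trans ?_
    rw [mul_assoc]
    gcongr
    exact hC _
  have hfc := hf.continuous
  have hfun : fγ = fun x => ∫ e, f (x + γ • e) ∂(uniformOn (l2Ball d)) := funext hfγ
  have hdiff : Differentiable ℝ fγ := by
    rw [hfun]
    exact fun x => aux_hasFDeriv γ hγ f _ hf x
  refine ⟨hdiff, fun x y => ?_⟩
  have hn := aux_lp_nonneg p hp1 (y - x)
  refine aux_dual hd p q hp1 hp2 hpq _ _ (by positivity) fun v => ?_
  have hv := aux_lp_nonneg p hp1 v
  rw [inner_sub_left, inner_gradient_left, inner_gradient_left]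
  have hder : HasDerivAt (fun t : ℝ => fγ (y + t • v) - fγ (x + t • v))
      (fderiv ℝ fγ y v - fderiv ℝ fγ x v) 0 := by
    have hl : ∀ z : EuclideanSpace ℝ (Fin d),
        HasDerivAt (fun t : ℝ => fγ (z + t • v)) (fderiv ℝ fγ z v) 0 := by
      intro z
      exact (hdiff z).hasFDerivAt.hasLineDerivAt v
    exact (hl y).sub (hl x)
  refine (le_abs_self _).trans ?_
  refine hder.le_of_lip' (by positivity) (Filter.Eventually.of_forall fun t => ?_)
  have hint : ∀ z : EuclideanSpace ℝ (Fin d),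
      Integrable (fun e => f (z + γ • e)) (uniformOn (l2Ball d)) :=
    fun z => aux_integrable _ (by fun_prop)
  have key := aux_shift d hd (γ⁻¹ • (y - x)) (fun e => f (x + t • v + γ • e) - f (x + γ • e))
    (by fun_prop) (M * (|t| * _root_.lpNorm p v)) (fun z => by
      refine (hlip _ _).trans (le_of_eq ?_)
      rw [← aux_lp_smul p hp1]
      congr 2
      abel)
  have e1 : ∀ e : EuclideanSpace ℝ (Fin d), γ • (e + γ⁻¹ • (y - x)) = γ • e + (y - x) := by
    intro e
    rw [smul_add, smul_smul, mul_inv_cancel₀ hγ.ne', one_smul]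
  simp only [e1] at key
  have e2 : ∀ e : EuclideanSpace ℝ (Fin d), x + t • v + (γ • e + (y - x)) = y + t • v + γ • e := by
    intro e; abel
  have e3 : ∀ e : EuclideanSpace ℝ (Fin d), x + (γ • e + (y - x)) = y + γ • e := by
    intro e; abel
  simp only [e2, e3] at key
  rw [integral_sub (hint _) (hint _), integral_sub (hint _) (hint _), ← hfγ, ← hfγ, ← hfγ, ← hfγ]
    at key
  simp only [zero_smul, add_zero, Real.norm_eq_abs, sub_zero]
  rw [show fγ (y + t • v) - fγ (x + t • v) - (fγ y - fγ x) =
    fγ (y + t • v) - fγ y - (fγ (x + t • v) - fγ x) by ring]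
  refine key.trans ?_
  rw [norm_smul, Real.norm_eq_abs, abs_of_pos (inv_pos.2 hγ)]
  have h2 := aux_l2_le p hp1 hp2 (y - x)
  calc M * (|t| * _root_.lpNorm p v) * (√d * (γ⁻¹ * ‖y - x‖)) ≤
      M * (|t| * _root_.lpNorm p v) * (√d * (γ⁻¹ * _root_.lpNorm p (y - x))) := by gcongr
    _ = _ := by rw [div_eq_mul_inv]; ring
end

section
/- Let d ≥ 1, γ > 0, Δ ≥ 0, p ∈ [1,2] with conjugate exponent q (1/p + 1/q = 1). Let f(·,ξ) be M₂(ξ)-Lipschitz with respect to the l₂-norm with E[M₂(ξ)²] ≤ M₂², let δ : ℝ^d → ℝ satisfy |δ(x)| ≤ Δ for all x, and set f_δ(x,ξ) := f(x,ξ) + δ(x). Let e be uniformly distributed on the unit l₁-sphere S₁^d(1), independent of ξ, and define the two-point l₁-randomized gradient estimator g(x,ξ,e) := (d/(2γ))·(f_δ(x+γe,ξ) − f_δ(x−γe,ξ))·sign(e). Then for every x: E[‖g(x,ξ,e)‖_q²] ≤ κ(p,d)·(M₂² + d²Δ²/(12(1+√2)²γ²)), where κ(p,d) = 48(1+√2)²·d^{2−2/p}.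 -/
open MeasureTheory
open scoped ENNReal RealInnerProductSpace

noncomputable def lapD (x : ℝ) : ℝ := Real.exp (-|x|) / 2

noncomputable def lapM : Measure ℝ := volume.withDensity (fun x => ENNReal.ofReal (lapD x))

lemma lapD_nonneg (x : ℝ) : 0 ≤ lapD x := by unfold lapD; positivity

lemma lapD_meas : Measurable lapD := by unfold lapD; fun_prop

lemma integral_lapM (g : ℝ → ℝ) : ∫ x, g x ∂lapM = ∫ x, lapD x * g x := by
  unfold lapM
  rw [integral_withDensity_eq_integral_toReal_smul (by have := lapD_meas; fun_prop) (by simp)]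
  simp [lapD_nonneg]

lemma expInt : IntegrableOn (fun x : ℝ => Real.exp (-x)) (Set.Ioi 0) := by
  simpa using integrableOn_exp_neg_Ioi (0:ℝ)

lemma bddExpInt (g : ℝ → ℝ) (hg : Measurable g) (C : ℝ) (hC : ∀ x, |g x| ≤ C) :
    IntegrableOn (fun x : ℝ => g x * Real.exp (-x)) (Set.Ioi 0) :=
  Integrable.bdd_mul (c := C) expInt hg.aestronglyMeasurable (Filter.Eventually.of_forall hC)

lemma integral_lapD : ∫ x, lapD x = 1 := by
  have := integral_comp_abs (f := fun x => Real.exp (-x) / 2)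
  simp only [lapD]
  rw [this, integral_div, integral_exp_neg_Ioi_zero]; norm_num

lemma integrable_lapD : Integrable lapD := by
  by_contra h
  have := integral_undef h
  rw [integral_lapD] at this
  norm_num at this

instance : IsProbabilityMeasure lapM := by
  constructor
  rw [lapM, withDensity_apply _ MeasurableSet.univ, Measure.restrict_univ,
    ← ofReal_integral_eq_lintegral_ofReal integrable_lapD (Filter.Eventually.of_forall lapD_nonneg),
    integral_lapD, ENNReal.ofReal_one]

lemma lapM_sq : ∫ x, x ^ 2 ∂lapM = 2 := by
  rw [integral_lapM]
  have := integral_comp_abs (f := fun x => Real.exp (-x) / 2 * x ^ 2)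
  simp only [sq_abs] at this
  simp only [lapD]
  rw [this]
  have h := Real.Gamma_eq_integral (s := 3) (by norm_num)
  have h3 : Real.Gamma 3 = 2 := by
    have := Real.Gamma_nat_eq_factorial 2
    norm_num at this; simpa using this
  rw [h3] at h
  refine Eq.trans ?_ h.symm
  rw [← integral_const_mul]
  refine setIntegral_congr_fun measurableSet_Ioi (fun x hx => ?_)
  have : x ^ ((3:ℝ) - 1) = x ^ 2 := by norm_num
  simp only [this]; ring

lemma lapM_sq_integrable : Integrable (fun x : ℝ => x ^ 2) lapM := by
  by_contra h
  have := integral_undef h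
  rw [lapM_sq] at this
  norm_num at this

lemma integrable_bdd {α : Type*} [MeasurableSpace α] (μ : Measure α) [IsFiniteMeasure μ]
    (g : α → ℝ) (hg : Measurable g) (C : ℝ) (hC : ∀ x, |g x| ≤ C) : Integrable g μ :=
  Integrable.of_bound hg.aestronglyMeasurable C (Filter.Eventually.of_forall hC)

lemma integral_lapM_split (g : ℝ → ℝ) (hg : Measurable g) (C : ℝ) (hC : ∀ x, |g x| ≤ C) :
    ∫ x, g x ∂lapM = (1/2) * (∫ x in Set.Ioi 0, g x * Real.exp (-x)) +
      (1/2) * (∫ x in Set.Ioi 0, g (-x) * Real.exp (-x)) := by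
  have hi : Integrable (fun x => lapD x * g x) :=
    integrable_lapD.mul_bdd (c := C) hg.aestronglyMeasurable (Filter.Eventually.of_forall hC)
  rw [integral_lapM, ← intervalIntegral.integral_Iic_add_Ioi (b := 0) hi.integrableOn hi.integrableOn,
    add_comm]
  congr 1
  · rw [← integral_const_mul]
    refine setIntegral_congr_fun measurableSet_Ioi (fun x hx => ?_)
    simp only [Set.mem_Ioi] at hx
    simp only [lapD, abs_of_pos hx]; ring
  · have := integral_comp_neg_Ioi 0 (fun x => lapD x * g x)
    rw [neg_zero] at this
    rw [← this, ← integral_const_mul]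
    refine setIntegral_congr_fun measurableSet_Ioi (fun x hx => ?_)
    simp only [Set.mem_Ioi] at hx
    simp only [lapD, abs_neg, abs_of_pos hx]; ring

lemma half_line (f : ℝ → ℝ) (K : NNReal) (hf : LipschitzWith K f) (B : ℝ) (hB : ∀ x, |f x| ≤ B) :
    ∫ x in Set.Ioi 0, (f x - f 0) ^ 2 * Real.exp (-x) ≤
      4 * ∫ x in Set.Ioi 0, (deriv f x) ^ 2 * Real.exp (-x) := by
  have hd : ∀ x, |deriv f x| ≤ K := fun x => by
    simpa using norm_deriv_le_of_lipschitz (x₀ := x) hf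
  have h1 : IntegrableOn (fun x => (f x - f 0) ^ 2 * Real.exp (-x)) (Set.Ioi 0) := by
    refine bddExpInt _ (by have := hf.continuous.measurable; fun_prop) ((2*B)^2) (fun x => ?_)
    rw [abs_pow]
    gcongr
    have := abs_sub (f x) (f 0)
    linarith [hB x, hB 0]
  have h2 : IntegrableOn (fun x => (deriv f x) ^ 2 * Real.exp (-x)) (Set.Ioi 0) := by
    refine bddExpInt _ ((measurable_deriv f).pow_const 2) (K^2) (fun x => ?_)
    rw [abs_pow]
    gcongr
    exact hd x
  have key : ∀ T : ℝ, 0 ≤ T → 0 ≤ ∫ x in (0:ℝ)..T, (2 * ((deriv f x) ^ 2 * Real.exp (-x)) -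
      (1/2) * ((f x - f 0) ^ 2 * Real.exp (-x))) := by
    intro T hT
    have acf : AbsolutelyContinuousOnInterval (fun x => f x - f 0) 0 T :=
      (hf.sub (LipschitzWith.const (f 0))).lipschitzOnWith.absolutelyContinuousOnInterval
    have ace : AbsolutelyContinuousOnInterval (fun x => Real.exp (-x)) 0 T :=
      ContDiffOn.absolutelyContinuousOnInterval (by fun_prop)
    have acH := (acf.mul acf).mul ace
    have e1 := acH.integral_deriv_eq_sub
    have e2 : 0 ≤ ∫ x in (0:ℝ)..T, deriv (((fun x => f x - f 0) * (fun x => f x - f 0)) * (fun x => Real.exp (-x))) x := by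
      rw [e1]; simp; exact mul_nonneg (mul_self_nonneg _) (Real.exp_pos _).le
    refine e2.trans ?_
    refine intervalIntegral.integral_mono_ae hT acH.intervalIntegrable_deriv ?_ ?_
    · refine IntervalIntegrable.sub (IntervalIntegrable.const_mul ?_ _) (IntervalIntegrable.const_mul ?_ _)
      · rw [intervalIntegrable_iff_integrableOn_Ioc_of_le hT]
        exact h2.mono_set Set.Ioc_subset_Ioi_self
      · rw [intervalIntegrable_iff_integrableOn_Ioc_of_le hT]
        exact h1.mono_set Set.Ioc_subset_Ioi_self
    · filter_upwards [hf.ae_differentiableAt_real] with x hx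
      have hu : HasDerivAt (fun x => f x - f 0) (deriv f x) x := hx.hasDerivAt.sub_const _
      have he : HasDerivAt (fun x => Real.exp (-x)) (-Real.exp (-x)) x := by
        simpa using (hasDerivAt_neg x).exp
      rw [((hu.mul hu).mul he).deriv]
      have := Real.exp_pos (-x)
      simp only [Pi.mul_apply]
      nlinarith [mul_nonneg this.le (sq_nonneg (2 * deriv f x - (f x - f 0)))]
  have hint := (h2.const_mul 2).sub (h1.const_mul (1/2))
  have lim := intervalIntegral_tendsto_integral_Ioi 0 hint Filter.tendsto_id
  have := ge_of_tendsto lim (by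
    filter_upwards [Filter.eventually_ge_atTop 0] with T hT using key T hT)
  simp only [Pi.sub_apply] at this
  rw [integral_sub (h2.const_mul 2) (h1.const_mul (1/2)), integral_const_mul, integral_const_mul] at this
  linarith

lemma poincare_1d (f : ℝ → ℝ) (K : NNReal) (hf : LipschitzWith K f) (B : ℝ) (hB : ∀ x, |f x| ≤ B) :
    ∫ x, f x ^ 2 ∂lapM - (∫ x, f x ∂lapM) ^ 2 ≤ 4 * ∫ x, (deriv f x) ^ 2 ∂lapM := by
  have hd : ∀ x, |deriv f x| ≤ K := fun x => by
    simpa using norm_deriv_le_of_lipschitz (x₀ := x) hf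
  have hfm := hf.continuous.measurable
  have i1 : Integrable f lapM := integrable_bdd _ f hfm B hB
  have i2 : Integrable (fun x => f x ^ 2) lapM := integrable_bdd _ _ (hfm.pow_const 2) (B^2) (fun x => by
    rw [abs_pow]; gcongr; exact hB x)
  have e : ∫ x, (f x - f 0) ^ 2 ∂lapM = ∫ x, f x ^ 2 ∂lapM - 2 * f 0 * ∫ x, f x ∂lapM + f 0 ^ 2 := by
    have : ∀ x, (f x - f 0) ^ 2 = f x ^ 2 - 2 * f 0 * f x + f 0 ^ 2 := fun x => by ring
    simp_rw [this]
    have i3 : Integrable (fun x => f x ^ 2 - 2 * f 0 * f x) lapM := i2.sub (i1.const_mul _)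
    rw [integral_add i3 (integrable_const _), integral_sub i2 (i1.const_mul _),
      integral_const_mul]
    simp
  have s1 := integral_lapM_split (fun x => (f x - f 0) ^ 2) (by fun_prop) ((2*B)^2) (fun x => by
    rw [abs_pow]
    gcongr
    have := abs_sub (f x) (f 0)
    linarith [hB x, hB 0])
  have s2 := integral_lapM_split (fun x => (deriv f x) ^ 2) ((measurable_deriv f).pow_const 2) (K^2) (fun x => by
    rw [abs_pow]
    gcongr
    exact hd x)
  have h1 := half_line f K hf B hB
  have h2 := half_line (fun x => f (-x)) K (by
    have := hf.comp (LipschitzWith.id (α := ℝ)).neg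
    rw [mul_one] at this
    exact this) B (fun x => hB _)
  simp only [deriv_comp_neg, neg_zero, neg_sq] at h2
  nlinarith [sq_nonneg (∫ x, f x ∂lapM - f 0)]
lemma abs_integral_le_bdd {α : Type*} [MeasurableSpace α] (μ : Measure α) [IsProbabilityMeasure μ]
    (g : α → ℝ) (C : ℝ) (hC : ∀ x, |g x| ≤ C) : |∫ x, g x ∂μ| ≤ C := by
  simpa using norm_integral_le_of_norm_le_const (μ := μ) (f := g) (C := C) (Filter.Eventually.of_forall hC)

lemma efron2 {α β : Type*} [MeasurableSpace α] [MeasurableSpace β] (μ : Measure α) (ν : Measure β)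
    [IsProbabilityMeasure μ] [IsProbabilityMeasure ν] (F : α × β → ℝ) (hF : Measurable F) (C : ℝ)
    (hC : ∀ z, |F z| ≤ C) :
    ∫ z, F z ^ 2 ∂(μ.prod ν) - (∫ z, F z ∂(μ.prod ν)) ^ 2 ≤
      ∫ y, (∫ x, F (x, y) ^ 2 ∂μ - (∫ x, F (x, y) ∂μ) ^ 2) ∂ν +
      ∫ x, (∫ y, F (x, y) ^ 2 ∂ν - (∫ y, F (x, y) ∂ν) ^ 2) ∂μ := by
  set m := ∫ z, F z ∂(μ.prod ν) with hm
  obtain ⟨A, hA⟩ : ∃ A : β → ℝ, A = fun y => ∫ x, F (x, y) ∂μ := ⟨_, rfl⟩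
  obtain ⟨B, hB⟩ : ∃ B : α → ℝ, B = fun x => ∫ y, F (x, y) ∂ν := ⟨_, rfl⟩
  have hAm : Measurable A := by
    rw [hA]
    exact (hF.stronglyMeasurable.integral_prod_left').measurable
  have hBm : Measurable B := by
    rw [hB]
    exact (hF.stronglyMeasurable.integral_prod_right').measurable
  have hAb : ∀ y, |A y| ≤ C := fun y => by rw [hA]; exact abs_integral_le_bdd _ _ _ (fun x => hC _)
  have hBb : ∀ y, |B y| ≤ C := fun y => by rw [hB]; exact abs_integral_le_bdd _ _ _ (fun x => hC _)
  have hsq : ∀ a : ℝ, |a| ≤ C → |a ^ 2| ≤ C ^ 2 := fun a h => by rw [abs_pow]; gcongr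
  have hpr : ∀ a b : ℝ, |a| ≤ C → |b| ≤ C → |a * b| ≤ C * C := fun a b h h' => by
    rw [abs_mul]; gcongr; exact (abs_nonneg a).trans h
  have iF := integrable_bdd (μ.prod ν) F hF C hC
  have iF2 := integrable_bdd (μ.prod ν) (fun z => F z ^ 2) (by fun_prop) (C^2) (fun z => hsq _ (hC z))
  have iA := integrable_bdd (μ.prod ν) (fun z => A z.2) (by fun_prop) C (fun z => hAb _)
  have iB := integrable_bdd (μ.prod ν) (fun z => B z.1) (by fun_prop) C (fun z => hBb _)
  have iA2 := integrable_bdd (μ.prod ν) (fun z => A z.2 ^ 2) (by fun_prop) (C^2) (fun z => hsq _ (hAb _))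
  have iB2 := integrable_bdd (μ.prod ν) (fun z => B z.1 ^ 2) (by fun_prop) (C^2) (fun z => hsq _ (hBb _))
  have iFA := integrable_bdd (μ.prod ν) (fun z => F z * A z.2) (by fun_prop) (C*C) (fun z => hpr _ _ (hC _) (hAb _))
  have iFB := integrable_bdd (μ.prod ν) (fun z => F z * B z.1) (by fun_prop) (C*C) (fun z => hpr _ _ (hC _) (hBb _))
  have iAB := integrable_bdd (μ.prod ν) (fun z => A z.2 * B z.1) (by fun_prop) (C*C) (fun z => hpr _ _ (hAb _) (hBb _))
  have mA : ∫ y, A y ∂ν = m := by rw [hm, integral_prod_symm F iF, hA]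
  have mB : ∫ x, B x ∂μ = m := by rw [hm, integral_prod F iF, hB]
  have eA : ∫ z, A z.2 ∂(μ.prod ν) = m := by rw [integral_prod_symm _ iA]; simp [mA]
  have eB : ∫ z, B z.1 ∂(μ.prod ν) = m := by rw [integral_prod _ iB]; simp [mB]
  have eA2 : ∫ z, A z.2 ^ 2 ∂(μ.prod ν) = ∫ y, A y ^ 2 ∂ν := by rw [integral_prod_symm _ iA2]; simp
  have eB2 : ∫ z, B z.1 ^ 2 ∂(μ.prod ν) = ∫ y, B y ^ 2 ∂μ := by rw [integral_prod _ iB2]; simp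
  have eFA : ∫ z, F z * A z.2 ∂(μ.prod ν) = ∫ y, A y ^ 2 ∂ν := by
    rw [integral_prod_symm _ iFA]
    simp only [integral_mul_const]
    simp only [hA, sq]
  have eFB : ∫ z, F z * B z.1 ∂(μ.prod ν) = ∫ y, B y ^ 2 ∂μ := by
    rw [integral_prod _ iFB]
    simp only [integral_mul_const]
    simp only [hB, sq]
  have eAB : ∫ z, A z.2 * B z.1 ∂(μ.prod ν) = m * m := by
    rw [integral_prod _ iAB]
    simp only [integral_mul_const, integral_const_mul, mA, mB]
  have h0 : 0 ≤ ∫ z, (F z - A z.2 - B z.1 + m) ^ 2 ∂(μ.prod ν) := integral_nonneg (fun z => sq_nonneg _)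
  have hexp : ∫ z, (F z - A z.2 - B z.1 + m) ^ 2 ∂(μ.prod ν) =
      ∫ z, F z ^ 2 ∂(μ.prod ν) + ∫ y, A y ^ 2 ∂ν + ∫ y, B y ^ 2 ∂μ + m ^ 2
        - 2 * ∫ y, A y ^ 2 ∂ν - 2 * ∫ y, B y ^ 2 ∂μ + 2 * m * m + 2 * (m * m) - 2 * m * m - 2 * m * m := by
    have e : (fun z => (F z - A z.2 - B z.1 + m) ^ 2) =
      (fun z => F z ^ 2) + (fun z => A z.2 ^ 2) + (fun z => B z.1 ^ 2) + (fun _ => m ^ 2)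
      - (fun z => 2 * (F z * A z.2)) - (fun z => 2 * (F z * B z.1)) + (fun z => 2 * m * F z)
      + (fun z => 2 * (A z.2 * B z.1)) - (fun z => 2 * m * A z.2) - (fun z => 2 * m * B z.1) := by
      funext z; simp only [Pi.add_apply, Pi.sub_apply]; ring
    have im : Integrable (fun _ : α × β => m ^ 2) (μ.prod ν) := integrable_const _
    rw [e]
    have j1 := (iF2.add iA2).add iB2
    have j2 := j1.add im
    have j3 := j2.sub (iFA.const_mul 2)
    have j4 := j3.sub (iFB.const_mul 2)
    have j5 := j4.add (iF.const_mul (2 * m))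
    have j6 := j5.add (iAB.const_mul 2)
    have j7 := j6.sub (iA.const_mul (2 * m))
    rw [integral_sub' j7 (iB.const_mul (2*m)), integral_sub' j6 (iA.const_mul (2 * m)),
      integral_add' j5 (iAB.const_mul 2), integral_add' j4 (iF.const_mul (2 * m)),
      integral_sub' j3 (iFB.const_mul 2), integral_sub' j2 (iFA.const_mul 2),
      integral_add' j1 im, integral_add' (iF2.add iA2) iB2, integral_add' iF2 iA2]
    simp only [integral_const_mul, eA2, eB2, eFA, eFB, eAB, eA, eB, ← hm, integral_const, probReal_univ,
      one_smul]
  have r1 : ∫ y, (∫ x, F (x, y) ^ 2 ∂μ - (∫ x, F (x, y) ∂μ) ^ 2) ∂ν =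
      ∫ z, F z ^ 2 ∂(μ.prod ν) - ∫ y, A y ^ 2 ∂ν := by
    rw [integral_prod_symm _ iF2, hA]
    exact integral_sub iF2.integral_prod_right (integrable_bdd ν (fun y => (∫ x, F (x, y) ∂μ) ^ 2)
      (by rw [hA] at hAm; exact hAm.pow_const 2) (C^2) (fun y => by have := hsq _ (hAb y); rwa [hA] at this))
  have r2 : ∫ x, (∫ y, F (x, y) ^ 2 ∂ν - (∫ y, F (x, y) ∂ν) ^ 2) ∂μ =
      ∫ z, F z ^ 2 ∂(μ.prod ν) - ∫ y, B y ^ 2 ∂μ := by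
    rw [integral_prod _ iF2, hB]
    exact integral_sub iF2.integral_prod_left (integrable_bdd μ (fun x => (∫ y, F (x, y) ∂ν) ^ 2)
      (by rw [hB] at hBm; exact hBm.pow_const 2) (C^2) (fun y => by have := hsq _ (hBb y); rwa [hB] at this))
  rw [r1, r2]
  linarith

lemma tensor (μ : Measure ℝ) [IsProbabilityMeasure μ] (n : ℕ) : ∀ (F : (Fin n → ℝ) → ℝ)
    (D : Fin n → (Fin n → ℝ) → ℝ) (_ : Measurable F) (_ : ∀ i, Measurable (D i))
    (C : ℝ) (_ : ∀ z, |F z| ≤ C) (_ : ∀ i z, |D i z| ≤ C)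
    (_ : ∀ i x, ∫ t, F (Function.update x i t) ^ 2 ∂μ - (∫ t, F (Function.update x i t) ∂μ) ^ 2 ≤
      ∫ t, D i (Function.update x i t) ∂μ),
    ∫ z, F z ^ 2 ∂(Measure.pi fun _ => μ) - (∫ z, F z ∂(Measure.pi fun _ => μ)) ^ 2 ≤
      ∑ i, ∫ z, D i z ∂(Measure.pi fun _ => μ) := by
  induction n with
  | zero =>
    intro F D _ _ C _ _ _
    have : ∀ z, F z = F 0 := fun z => by rw [Subsingleton.elim z 0]
    simp [this]
  | succ n ih =>
    intro F D hF hD C hFC hDC h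
    have mp := (measurePreserving_piFinSuccAbove (fun _ : Fin (n+1) => μ) 0).symm
    have hc : ∀ z : ℝ × (Fin n → ℝ), (MeasurableEquiv.piFinSuccAbove (fun _ : Fin (n+1) => ℝ) 0).symm z
        = Fin.cons z.1 z.2 := fun z => by
      simp [MeasurableEquiv.piFinSuccAbove, Fin.insertNthEquiv]
    have tr : ∀ g : (Fin (n+1) → ℝ) → ℝ, ∫ z, g z ∂(Measure.pi fun _ => μ) =
        ∫ z : ℝ × (Fin n → ℝ), g (Fin.cons z.1 z.2) ∂(μ.prod (Measure.pi fun _ => μ)) := by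
      intro g
      rw [← mp.integral_comp']
      simp only [hc]
    have mc : Measurable (fun z : ℝ × (Fin n → ℝ) => (Fin.cons z.1 z.2 : Fin (n+1) → ℝ)) := by
      have := (MeasurableEquiv.piFinSuccAbove (fun _ : Fin (n+1) => ℝ) 0).symm.measurable
      exact (funext hc) ▸ this
    have mc2 : ∀ t, Measurable (fun y : (Fin n → ℝ) => (Fin.cons t y : Fin (n+1) → ℝ)) := fun t =>
      mc.comp (measurable_prodMk_left (x := t))
    have iD : ∀ i, Integrable (fun z : ℝ × (Fin n → ℝ) => D i (Fin.cons z.1 z.2 : Fin (n+1) → ℝ))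
      (μ.prod (Measure.pi fun _ => μ)) := fun i =>
        integrable_bdd _ _ ((hD i).comp mc) C (fun z => hDC _ _)
    simp only [tr]
    refine (efron2 μ (Measure.pi fun _ => μ) (fun z => F (Fin.cons z.1 z.2)) (hF.comp mc) C
      (fun z => hFC _)).trans ?_
    have hsq : ∀ a : ℝ, |a| ≤ C → |a ^ 2| ≤ C ^ 2 := fun a h => by rw [abs_pow]; gcongr
    have iF2 := integrable_bdd (μ.prod (Measure.pi fun _ => μ)) (fun z : ℝ × (Fin n → ℝ) => F (Fin.cons z.1 z.2 : Fin (n+1) → ℝ) ^ 2)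
      ((hF.comp mc).pow_const 2) (C^2) (fun z => hsq _ (hFC _))
    have mF := (hF.comp mc).stronglyMeasurable
    have i1 := integrable_bdd (Measure.pi fun _ : Fin n => μ) (fun y => (∫ x, F (Fin.cons x y : Fin (n+1) → ℝ) ∂μ) ^ 2)
      (by exact (mF.integral_prod_left' (μ := μ)).measurable.pow_const 2) (C^2) (fun y => hsq _ (abs_integral_le_bdd _ _ _ (fun x => hFC _)))
    have i2 := integrable_bdd μ (fun x => (∫ y, F (Fin.cons x y : Fin (n+1) → ℝ) ∂(Measure.pi fun _ : Fin n => μ)) ^ 2)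
      (by exact (mF.integral_prod_right' (ν := Measure.pi fun _ : Fin n => μ)).measurable.pow_const 2) (C^2) (fun y => hsq _ (abs_integral_le_bdd _ _ _ (fun x => hFC _)))
    rw [Fin.sum_univ_succ]
    refine add_le_add ?_ ?_
    · rw [integral_prod_symm _ (iD 0)]
      refine integral_mono (iF2.integral_prod_right.sub i1) (iD 0).integral_prod_right (fun y => ?_)
      have := h 0 (Fin.cons 0 y)
      simpa only [Fin.update_cons_zero] using this
    · have : ∀ i : Fin n, ∫ z : ℝ × (Fin n → ℝ), D i.succ (Fin.cons z.1 z.2) ∂(μ.prod (Measure.pi fun _ => μ)) =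
        ∫ x, ∫ y, D i.succ (Fin.cons x y) ∂(Measure.pi fun _ => μ) ∂μ := fun i => integral_prod _ (iD _)
      simp only [this]
      rw [← integral_finsetSum _ (fun i _ => (iD i.succ).integral_prod_left)]
      refine integral_mono (iF2.integral_prod_left.sub i2)
        (integrable_finsetSum _ (fun i _ => (iD i.succ).integral_prod_left)) (fun t => ?_)
      refine ih (fun y => F (Fin.cons t y)) (fun i y => D i.succ (Fin.cons t y)) (hF.comp (mc2 t))
        (fun i => (hD _).comp (mc2 t)) C (fun z => hFC _) (fun i z => hDC _ _) (fun i y => ?_)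
      have := h i.succ (Fin.cons t y)
      simpa only [Fin.cons_update] using this
lemma lapPi_eq (d : ℕ) : (Measure.pi fun _ : Fin d => lapM) =
    (volume : Measure (Fin d → ℝ)).withDensity (fun z => ENNReal.ofReal (∏ i, lapD (z i))) := by
  refine Measure.pi_eq (fun s hs => ?_)
  rw [withDensity_apply _ (MeasurableSet.univ_pi hs), ← lintegral_indicator (MeasurableSet.univ_pi hs)]
  have e : ∀ z : Fin d → ℝ, (Set.univ.pi s).indicator (fun z => ENNReal.ofReal (∏ i, lapD (z i))) z =
      ENNReal.ofReal (∏ i, (s i).indicator lapD (z i)) := by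
    intro z
    by_cases hz : z ∈ Set.univ.pi s
    · rw [Set.indicator_of_mem hz]
      congr 1
      refine Finset.prod_congr rfl (fun i _ => ?_)
      rw [Set.indicator_of_mem (hz i trivial)]
    · rw [Set.indicator_of_notMem hz]
      simp only [Set.mem_pi, Set.mem_univ, true_imp_iff, not_forall] at hz
      obtain ⟨i, hi⟩ := hz
      rw [Finset.prod_eq_zero (Finset.mem_univ i) (Set.indicator_of_notMem hi _), ENNReal.ofReal_zero]
  simp only [e]
  have hi : ∀ i, Integrable ((s i).indicator lapD) := fun i => integrable_lapD.indicator (hs i)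
  have hnn : ∀ i x, 0 ≤ (s i).indicator lapD x := fun i x => Set.indicator_nonneg (fun _ _ => lapD_nonneg _) _
  have hI : Integrable (fun z : Fin d → ℝ => ∏ i, (s i).indicator lapD (z i)) :=
    Integrable.fintype_prod hi
  rw [← ofReal_integral_eq_lintegral_ofReal hI
    (Filter.Eventually.of_forall (fun z => Finset.prod_nonneg (fun i _ => hnn _ _))),
    integral_fintype_prod_volume_eq_prod (fun i => (s i).indicator lapD),
    ENNReal.ofReal_prod_of_nonneg (fun i _ => integral_nonneg (hnn i))]
  refine Finset.prod_congr rfl (fun i _ => ?_)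
  rw [lapM, withDensity_apply _ (hs i), integral_indicator (hs i),
    ofReal_integral_eq_lintegral_ofReal integrable_lapD.integrableOn (Filter.Eventually.of_forall lapD_nonneg)]

lemma lapPi_ac (d : ℕ) : (Measure.pi fun _ : Fin d => lapM) ≪ (volume : Measure (Fin d → ℝ)) := by
  rw [lapPi_eq]
  exact withDensity_absolutelyContinuous _ _

lemma poincare_d {d : ℕ} (h : EuclideanSpace ℝ (Fin d) → ℝ) (K : NNReal) (hl : LipschitzWith K h)
    (C : ℝ) (hC : ∀ x, |h x| ≤ C) :
    ∫ z, h (WithLp.toLp 2 z) ^ 2 ∂(Measure.pi fun _ : Fin d => lapM) -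
      (∫ z, h (WithLp.toLp 2 z) ∂(Measure.pi fun _ : Fin d => lapM)) ^ 2 ≤ 4 * K ^ 2 := by
  obtain ⟨F, hF⟩ : ∃ F : (Fin d → ℝ) → ℝ, F = fun z => h (WithLp.toLp 2 z) := ⟨_, rfl⟩
  obtain ⟨K', hFl⟩ : ∃ K', LipschitzWith K' F := ⟨_, by
    rw [hF]; exact hl.comp (PiLp.lipschitzWith_toLp 2 _)⟩
  have hup : ∀ (x : Fin d → ℝ) (i : Fin d), LipschitzWith K' (fun t => F (Function.update x i t)) := by
    intro x i
    have : LipschitzWith 1 (fun t : ℝ => Function.update x i t) := by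
      refine LipschitzWith.of_dist_le_mul (fun s t => ?_)
      rw [NNReal.coe_one, one_mul, dist_pi_le_iff dist_nonneg]
      intro j
      by_cases hj : j = i
      · subst hj; simp
      · simp [Function.update_of_ne hj]
    have := hFl.comp this
    rw [mul_one] at this
    exact this
  have hder : ∀ (x : Fin d → ℝ) (i : Fin d) (t : ℝ),
      lineDeriv ℝ F (Function.update x i t) (Pi.single i 1) = deriv (fun t => F (Function.update x i t)) t := by
    intro x i t
    have e : ∀ s : ℝ, Function.update x i t + s • (Pi.single i 1 : Fin d → ℝ) = Function.update x i (t + s) := by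
      intro s; ext j
      by_cases hj : j = i
      · subst hj; simp
      · simp [Function.update_of_ne hj, Pi.single_eq_of_ne hj]
    have := deriv_comp_const_add (fun t => F (Function.update x i t)) t 0
    rw [add_zero] at this
    rw [← this]
    simp only [lineDeriv, e]
  have hbd : ∀ (x : Fin d → ℝ) (i : Fin d), |lineDeriv ℝ F x (Pi.single i 1)| ≤ K' := by
    intro x i
    have := hder x i (x i)
    rw [Function.update_eq_self] at this
    rw [this]
    exact norm_deriv_le_of_lipschitz (hup x i)
  have hDm : ∀ i : Fin d, Measurable (fun x => 4 * lineDeriv ℝ F x (Pi.single i 1) ^ 2) := fun i =>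
    ((measurable_lineDeriv hFl.continuous).pow_const 2).const_mul 4
  have hDb : ∀ (i : Fin d) x, |4 * lineDeriv ℝ F x (Pi.single i 1) ^ 2| ≤ 4 * (K' : ℝ) ^ 2 := fun i x => by
    rw [abs_mul, abs_pow, abs_of_pos (by norm_num : (0:ℝ) < 4)]
    gcongr
    exact hbd x i
  have T := tensor lapM d F (fun i x => 4 * lineDeriv ℝ F x (Pi.single i 1) ^ 2)
    hFl.continuous.measurable hDm (max C (4 * (K' : ℝ) ^ 2))
    (fun z => by rw [hF]; exact (hC _).trans (le_max_left _ _)) (fun i x => (hDb i x).trans (le_max_right _ _))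
    (fun i x => by
      simp only [hder]
      rw [integral_const_mul]
      exact poincare_1d _ K' (hup x i) C (fun t => by rw [hF]; exact hC _))
  simp only [hF] at T ⊢
  refine T.trans ?_
  simp only [← hF]
  rw [← integral_finsetSum _ (fun i _ => integrable_bdd _ _ (hDm i) _ (hDb i))]
  have hae : ∀ᵐ z ∂(Measure.pi fun _ : Fin d => lapM), DifferentiableAt ℝ F z :=
    (lapPi_ac d).ae_le hFl.ae_differentiableAt
  have hb : ∀ᵐ z ∂(Measure.pi fun _ : Fin d => lapM),
      ‖∑ i, 4 * lineDeriv ℝ F z (Pi.single i 1) ^ 2‖ ≤ 4 * (K : ℝ) ^ 2 := by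
    filter_upwards [hae] with z hz
    have hdz : DifferentiableAt ℝ h (WithLp.toLp 2 z) := by
      have : h = F ∘ (PiLp.continuousLinearEquiv 2 ℝ (fun _ : Fin d => ℝ)) := by
        rw [hF]; rfl
      rw [this]
      exact DifferentiableAt.comp _ hz (ContinuousLinearEquiv.differentiableAt _)
    have hn := norm_fderiv_le_of_lipschitz ℝ (x₀ := WithLp.toLp 2 z) hl
    obtain ⟨a, ha⟩ : ∃ a : Fin d → ℝ, a = fun i => lineDeriv ℝ F z (Pi.single i 1) := ⟨_, rfl⟩
    have hai : ∀ i, a i = fderiv ℝ h (WithLp.toLp 2 z) (EuclideanSpace.single i 1) := by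
      intro i
      rw [← hdz.lineDeriv_eq_fderiv, ha, hF]
      rfl
    have hsum : fderiv ℝ h (WithLp.toLp 2 z) (WithLp.toLp 2 a) = ∑ i, a i ^ 2 := by
      have e : (WithLp.toLp 2 a : EuclideanSpace ℝ (Fin d)) = ∑ i, a i • EuclideanSpace.single i (1:ℝ) := by
        ext j
        simp [Pi.single_apply]
      rw [e, map_sum]
      simp only [map_smul, smul_eq_mul, ← hai, sq]
    have hle := (fderiv ℝ h (WithLp.toLp 2 z)).le_opNorm (WithLp.toLp 2 a)
    rw [hsum] at hle
    have hna : ‖(WithLp.toLp 2 a : EuclideanSpace ℝ (Fin d))‖ ^ 2 = ∑ i, a i ^ 2 := by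
      simp [EuclideanSpace.norm_sq_eq]
    have s0 : 0 ≤ ∑ i, a i ^ 2 := Finset.sum_nonneg (fun i _ => sq_nonneg _)
    rw [Real.norm_of_nonneg s0, ← hna] at hle
    have hnn := norm_nonneg (WithLp.toLp 2 a : EuclideanSpace ℝ (Fin d))
    have h5 : ‖(WithLp.toLp 2 a : EuclideanSpace ℝ (Fin d))‖ ≤ K := by
      by_contra hcon
      push Not at hcon
      have : ‖(WithLp.toLp 2 a : EuclideanSpace ℝ (Fin d))‖ ^ 2 ≤ K * ‖(WithLp.toLp 2 a : EuclideanSpace ℝ (Fin d))‖ :=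
        hle.trans (by gcongr)
      nlinarith [K.coe_nonneg]
    rw [← Finset.mul_sum, Real.norm_of_nonneg (by positivity)]
    have : ∑ i, lineDeriv ℝ F z (Pi.single i 1) ^ 2 = ∑ i, a i ^ 2 := by rw [ha]
    rw [this, ← hna]
    gcongr
  have := norm_integral_le_of_norm_le_const hb
  simp only [probReal_univ, mul_one] at this
  exact (le_abs_self _).trans this
noncomputable def ell (d : ℕ) : EuclideanSpace ℝ (Fin d) →ₗ[ℝ] ℝ where
  toFun w := ∑ i, w i
  map_add' x y := by simp [Finset.sum_add_distrib]
  map_smul' c x := by simp [Finset.mul_sum]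

noncomputable def uvec (d : ℕ) : EuclideanSpace ℝ (Fin d) := WithLp.toLp 2 (fun _ => (d : ℝ)⁻¹)

lemma ell_uvec {d : ℕ} (hd : 1 ≤ d) : ell d (uvec d) = 1 := by
  have : (d : ℝ) ≠ 0 := by positivity
  simp [ell, uvec, this]

noncomputable def splitE {d : ℕ} (hd : 1 ≤ d) :
    ((LinearMap.ker (ell d)) × ℝ) ≃ₗ[ℝ] EuclideanSpace ℝ (Fin d) where
  toFun z := (z.1 : EuclideanSpace ℝ (Fin d)) + z.2 • uvec d
  map_add' x y := by simp [add_smul]; abel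
  map_smul' c x := by simp [smul_smul]
  invFun w := (⟨w - ell d w • uvec d, by simp [ell_uvec hd]⟩, ell d w)
  left_inv z := by
    have h1 : ell d (z.1 : EuclideanSpace ℝ (Fin d)) = 0 := z.1.2
    ext <;> simp [ell_uvec hd, h1]
  right_inv w := by simp

lemma finrank_ker_ell {d : ℕ} (hd : 1 ≤ d) :
    ((Module.finrank ℝ (LinearMap.ker (ell d)) : ℕ) : ℝ) = (d : ℝ) - 1 := by
  have h := (splitE hd).finrank_eq
  simp only [Module.finrank_prod, Module.finrank_self, finrank_euclideanSpace, Fintype.card_fin] at h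
  have h2 : ((Module.finrank ℝ (LinearMap.ker (ell d)) : ℕ) : ℝ) + 1 = d := by exact_mod_cast h
  linarith

lemma hyper {d : ℕ} (hd : 1 ≤ d) : ∃ c : ℝ≥0∞, c ≠ 0 ∧ c ≠ ∞ ∧
    ∀ (Q : EuclideanSpace ℝ (Fin d) → ℝ≥0∞) (ρ : ℝ → ℝ≥0∞), Measurable Q → Measurable ρ →
    ∫⁻ w in {w | 0 < ell d w}, Q ((ell d w)⁻¹ • w) * ρ (ell d w) =
      c * (∫⁻ t in Set.Ioi 0, ENNReal.ofReal (t ^ (d - 1)) * ρ t) *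
        ∫⁻ e in {e | ell d e = 1}, Q e ∂(μH[(d : ℝ) - 1]) := by
  set V := LinearMap.ker (ell d) with hV
  obtain ⟨μV, hμV⟩ : ∃ μV : Measure V, μV = μH[(d : ℝ) - 1] := ⟨_, rfl⟩
  have hH : Measure.IsAddHaarMeasure μV := by
    rw [hμV, ← finrank_ker_ell hd]; infer_instance
  let T := (splitE hd).toContinuousLinearEquiv
  have hT : ∀ z, T z = (z.1 : EuclideanSpace ℝ (Fin d)) + z.2 • uvec d := fun z => rfl
  have hTH : Measure.IsAddHaarMeasure (Measure.map T (μV.prod (volume : Measure ℝ))) :=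
    T.isAddHaarMeasure_map _
  have hvol := Measure.isAddLeftInvariant_eq_smul (volume : Measure (EuclideanSpace ℝ (Fin d)))
    (Measure.map T (μV.prod (volume : Measure ℝ)))
  set c := Measure.addHaarScalarFactor (volume : Measure (EuclideanSpace ℝ (Fin d)))
    (Measure.map T (μV.prod (volume : Measure ℝ))) with hc
  have hell : Measurable (ell d) := (LinearMap.continuous_of_finiteDimensional (ell d)).measurable
  have hellT : ∀ z, ell d (T z) = z.2 := fun z => by
    have h1 : ell d (z.1 : EuclideanSpace ℝ (Fin d)) = 0 := z.1.2
    rw [hT]; simp [ell_uvec hd, h1]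
  refine ⟨c, ?_, ENNReal.coe_ne_top, ?_⟩
  · intro h0
    have h0' : c = 0 := by exact_mod_cast h0
    rw [h0', zero_smul] at hvol
    exact (NeZero.ne (volume : Measure (EuclideanSpace ℝ (Fin d)))) hvol
  · intro Q ρ hQ hρ
    have hSet : MeasurableSet {w | 0 < ell d w} := measurableSet_lt measurable_const hell
    have hG : Measurable (fun w => Q ((ell d w)⁻¹ • w) * ρ (ell d w)) :=
      (hQ.comp (hell.inv.smul measurable_id)).mul (hρ.comp hell)
    have hTm : Measurable T := T.continuous.measurable
    have hpre : T ⁻¹' {w | 0 < ell d w} = Set.univ ×ˢ Set.Ioi 0 := by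
      ext z; simp [hellT]
    have main : ∀ t : ℝ, 0 < t → ∫⁻ v, Q (t⁻¹ • T (v, t)) * ρ t ∂μV =
        ENNReal.ofReal (t ^ (d - 1)) * ρ t * ∫⁻ e in {e | ell d e = 1}, Q e ∂(μH[(d : ℝ) - 1]) := by
      intro t ht
      have e1 : ∀ v : V, t⁻¹ • T (v, t) = ((t⁻¹ • v : V) : EuclideanSpace ℝ (Fin d)) + uvec d := by
        intro v; rw [hT]; simp [smul_smul, ht.ne']
      simp only [e1]
      have hQ' : Measurable (fun v : V => Q ((v : EuclideanSpace ℝ (Fin d)) + uvec d)) := by fun_prop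
      rw [lintegral_mul_const _ (by fun_prop)]
      have e2 : ∫⁻ v : V, Q (((t⁻¹ • v : V) : EuclideanSpace ℝ (Fin d)) + uvec d) ∂μV =
          ENNReal.ofReal (t ^ (d - 1)) * ∫⁻ v : V, Q ((v : EuclideanSpace ℝ (Fin d)) + uvec d) ∂μV := by
        rw [← lintegral_map (μ := μV) (f := fun v : V => Q ((v : EuclideanSpace ℝ (Fin d)) + uvec d))
          (g := fun v : V => t⁻¹ • v) hQ' (by fun_prop)]
        rw [Measure.map_addHaar_smul μV (inv_ne_zero ht.ne'), lintegral_smul_measure]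
        have hf : Module.finrank ℝ V = d - 1 := by
          have := finrank_ker_ell hd
          have h2 : ((d - 1 : ℕ) : ℝ) = (d : ℝ) - 1 := by push_cast [hd]; ring
          rw [← h2] at this
          exact_mod_cast this
        rw [hf, inv_pow, inv_inv, abs_of_pos (by positivity)]
        rfl
      have hiso : Isometry (fun v : V => (v : EuclideanSpace ℝ (Fin d)) + uvec d) := by
        refine Isometry.of_dist_eq (fun x y => ?_)
        simp [dist_eq_norm]
      have hrange : Set.range (fun v : V => (v : EuclideanSpace ℝ (Fin d)) + uvec d) = {e | ell d e = 1} := by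
        ext e
        simp only [Set.mem_range, Set.mem_ofPred_eq]
        constructor
        · rintro ⟨v, rfl⟩
          have h1 : ell d (v : EuclideanSpace ℝ (Fin d)) = 0 := v.2
          simp [ell_uvec hd, h1]
        · intro he
          exact ⟨⟨e - uvec d, by rw [hV, LinearMap.mem_ker]; simp [ell_uvec hd, he]⟩, by simp⟩
      have e3 : ∫⁻ v : V, Q ((v : EuclideanSpace ℝ (Fin d)) + uvec d) ∂μV =
          ∫⁻ e in {e | ell d e = 1}, Q e ∂(μH[(d : ℝ) - 1]) := by
        have hd1 : (0:ℝ) ≤ (d : ℝ) - 1 := by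
          have : (1:ℝ) ≤ d := by exact_mod_cast hd
          linarith
        have := hiso.map_hausdorffMeasure (d := (d : ℝ) - 1) (Or.inl hd1)
        rw [hrange] at this
        rw [← this, hμV, lintegral_map hQ (by fun_prop)]
      rw [e2, e3]
      ring
    conv_lhs => rw [hvol]
    rw [Measure.restrict_smul, lintegral_smul_measure, setLIntegral_map hSet hG hTm, hpre,
      ← Measure.prod_restrict, Measure.restrict_univ, lintegral_prod_symm _ (by fun_prop)]
    simp only [hellT]
    rw [setLIntegral_congr_fun measurableSet_Ioi (fun t ht => main t ht),
      lintegral_mul_const _ (by fun_prop), mul_assoc]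
    rfl
noncomputable def lone {d : ℕ} (w : EuclideanSpace ℝ (Fin d)) : ℝ := ∑ i, |w i|

lemma lone_meas {d : ℕ} : Measurable (lone (d := d)) := by unfold lone; fun_prop

noncomputable def sgA {d : ℕ} (A : Fin d → Bool) (i : Fin d) : ℝ := if A i then -1 else 1

lemma sgA_sq {d : ℕ} (A : Fin d → Bool) (i : Fin d) : sgA A i * sgA A i = 1 := by
  unfold sgA; split_ifs <;> norm_num

lemma sgA_abs {d : ℕ} (A : Fin d → Bool) (i : Fin d) : |sgA A i| = 1 := by
  unfold sgA; split_ifs <;> norm_num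

noncomputable def flipA {d : ℕ} (A : Fin d → Bool) :
    EuclideanSpace ℝ (Fin d) ≃ₗᵢ[ℝ] EuclideanSpace ℝ (Fin d) where
  toFun w := WithLp.toLp 2 (fun i => sgA A i * w i)
  invFun w := WithLp.toLp 2 (fun i => sgA A i * w i)
  map_add' x y := by ext i; simp [mul_add]
  map_smul' c x := by ext i; simp; ring
  left_inv w := by ext i; simp [← mul_assoc, sgA_sq]
  right_inv w := by ext i; simp [← mul_assoc, sgA_sq]
  norm_map' w := by
    simp [EuclideanSpace.norm_eq, sgA_abs]

lemma flipA_apply {d : ℕ} (A : Fin d → Bool) (w : EuclideanSpace ℝ (Fin d)) (i : Fin d) :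
    flipA A w i = sgA A i * w i := rfl

def orth {d : ℕ} (A : Fin d → Bool) : Set (EuclideanSpace ℝ (Fin d)) :=
  {w | ∀ i, (w i < 0 ↔ A i = true)}

lemma orth_meas {d : ℕ} (A : Fin d → Bool) : MeasurableSet (orth A) := by
  have : orth A = ⋂ i, {w : EuclideanSpace ℝ (Fin d) | (w i < 0 ↔ A i = true)} := by
    ext w; simp [orth]
  rw [this]
  refine MeasurableSet.iInter (fun i => ?_)
  have h : MeasurableSet {w : EuclideanSpace ℝ (Fin d) | w i < 0} :=
    measurableSet_lt (by fun_prop) measurable_const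
  cases hA : A i
  · simpa [Set.compl_ofPred] using h.compl
  · simpa using h

lemma sum_orth {d : ℕ} (κ : Measure (EuclideanSpace ℝ (Fin d))) (Φ : EuclideanSpace ℝ (Fin d) → ℝ≥0∞) :
    ∫⁻ w, Φ w ∂κ = ∑ A : Fin d → Bool, ∫⁻ w in orth A, Φ w ∂κ := by
  have hU : (⋃ A : Fin d → Bool, orth A) = Set.univ := by
    ext w
    simp only [Set.mem_iUnion, Set.mem_univ, iff_true]
    exact ⟨fun i => decide (w i < 0), fun i => by simp⟩
  have hdis : Pairwise (Function.onFun Disjoint (orth (d := d))) := by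
    intro A B hAB
    refine Set.disjoint_left.2 (fun w hA hB => hAB ?_)
    funext i
    have h1 := hA i
    have h2 := hB i
    exact Bool.eq_iff_iff.2 (h1.symm.trans h2)
  rw [← setLIntegral_univ, ← hU, lintegral_iUnion orth_meas hdis, tsum_fintype]

lemma ell_of_orth {d : ℕ} (A : Fin d → Bool) (w : EuclideanSpace ℝ (Fin d)) (hw : flipA A w ∈ orth A) :
    ell d w = lone (flipA A w) := by
  unfold lone
  change ∑ i, w i = _
  refine Finset.sum_congr rfl (fun i _ => ?_)
  have h := hw i
  rw [flipA_apply] at h ⊢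
  unfold sgA at h ⊢
  cases hA : A i
  · simp [hA] at h ⊢
    exact (abs_of_nonneg h).symm
  · simp [hA] at h ⊢
    exact (abs_of_pos h).symm

lemma lone_pos {d : ℕ} (w : EuclideanSpace ℝ (Fin d)) (hw : w ≠ 0) : 0 < lone w := by
  have h0 : 0 ≤ lone w := Finset.sum_nonneg (fun i _ => abs_nonneg _)
  refine lt_of_le_of_ne h0 (fun h => hw ?_)
  have := (Finset.sum_eq_zero_iff_of_nonneg (fun i _ => abs_nonneg (w i))).1 h.symm
  ext i
  simpa using this i (Finset.mem_univ i)

lemma radial {d : ℕ} (hd : 1 ≤ d) : ∃ c : ℝ≥0∞, c ≠ 0 ∧ c ≠ ∞ ∧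
    ∀ (Q : EuclideanSpace ℝ (Fin d) → ℝ≥0∞) (ρ : ℝ → ℝ≥0∞), Measurable Q → Measurable ρ →
    ∫⁻ w, Q ((lone w)⁻¹ • w) * ρ (lone w) =
      c * (∫⁻ t in Set.Ioi 0, ENNReal.ofReal (t ^ (d - 1)) * ρ t) *
        ∫⁻ e in {e | lone e = 1}, Q e ∂(μH[(d : ℝ) - 1]) := by
  obtain ⟨c, hc0, hct, H⟩ := hyper hd
  refine ⟨c, hc0, hct, fun Q ρ hQ hρ => ?_⟩
  rw [sum_orth (μH[(d : ℝ) - 1].restrict {e | lone e = 1}) Q, sum_orth volume, Finset.mul_sum]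
  refine Finset.sum_congr rfl (fun A _ => ?_)
  have hm : Measurable (flipA A) := (flipA A).continuous.measurable
  have hpm : MeasurableSet ((flipA A) ⁻¹' orth A) := hm (orth_meas A)
  have hS : MeasurableSet {e : EuclideanSpace ℝ (Fin d) | lone e = 1} :=
    measurableSet_eq_fun lone_meas measurable_const
  have hell : Measurable (ell d) := (LinearMap.continuous_of_finiteDimensional (ell d)).measurable
  have hE : MeasurableSet {e : EuclideanSpace ℝ (Fin d) | ell d e = 1} :=
    measurableSet_eq_fun hell measurable_const
  have hP : MeasurableSet {e : EuclideanSpace ℝ (Fin d) | 0 < ell d e} :=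
    measurableSet_lt measurable_const hell
  have h := H (((flipA A) ⁻¹' orth A).indicator (Q ∘ flipA A)) ρ
    ((hQ.comp hm).indicator hpm) hρ
  have emb : MeasurableEmbedding (flipA A) := (flipA A).toHomeomorph.measurableEmbedding
  -- right side
  have r : ∫⁻ e in {e | ell d e = 1}, ((flipA A) ⁻¹' orth A).indicator (Q ∘ flipA A) e ∂(μH[(d : ℝ) - 1]) =
      ∫⁻ e in orth A, Q e ∂(μH[(d : ℝ) - 1].restrict {e | lone e = 1}) := by
    rw [setLIntegral_indicator hpm, Measure.restrict_restrict (orth_meas A)]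
    have hmp : MeasurePreserving (flipA A) (μH[(d : ℝ) - 1]) (μH[(d : ℝ) - 1]) :=
      (flipA A).toIsometryEquiv.measurePreserving_hausdorffMeasure _
    rw [← hmp.setLIntegral_comp_preimage_emb emb Q (orth A ∩ {e | lone e = 1})]
    have : (flipA A) ⁻¹' orth A ∩ {e | ell d e = 1} = (flipA A) ⁻¹' (orth A ∩ {e | lone e = 1}) := by
      ext w
      simp only [Set.mem_inter_iff, Set.mem_preimage, Set.mem_ofPred_eq]
      refine and_congr_right (fun hw => ?_)
      rw [ell_of_orth A w hw]
    rw [this]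
    rfl
  rw [r] at h
  rw [← h]
  have hmp : MeasurePreserving (flipA A) (volume : Measure (EuclideanSpace ℝ (Fin d))) volume :=
    (flipA A).measurePreserving
  rw [← hmp.setLIntegral_comp_preimage_emb emb, ← lintegral_indicator hpm, ← lintegral_indicator hP]
  have : Nonempty (Fin d) := ⟨⟨0, hd⟩⟩
  have : Nontrivial (EuclideanSpace ℝ (Fin d)) := inferInstance
  have hne : ∀ᵐ w : EuclideanSpace ℝ (Fin d), w ≠ 0 := by
    simp [ae_iff]
  refine lintegral_congr_ae ?_
  filter_upwards [hne] with w hw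
  by_cases hwo : flipA A w ∈ orth A
  · have e := ell_of_orth A w hwo
    have hpos : 0 < ell d w := by
      rw [e]; exact lone_pos _ (by simpa using hw)
    have hmem : (ell d w)⁻¹ • w ∈ (flipA A) ⁻¹' orth A := by
      intro i
      rw [map_smul, ← hwo i]
      simp only [PiLp.smul_apply, smul_eq_mul]
      constructor
      · intro h
        by_contra h2
        push Not at h2
        have := mul_nonneg (inv_pos.2 hpos).le h2
        linarith
      · intro h
        exact mul_neg_of_pos_of_neg (inv_pos.2 hpos) h
    rw [Set.indicator_of_mem (by exact hwo), Set.indicator_of_mem (by exact hpos), Set.indicator_of_mem hmem]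
    simp only [Function.comp_apply, map_smul, e]
  · rw [Set.indicator_of_notMem (by exact hwo)]
    by_cases hpos : 0 < ell d w
    · have hmem : (ell d w)⁻¹ • w ∉ (flipA A) ⁻¹' orth A := by
        intro hh
        apply hwo
        intro i
        rw [← hh i, map_smul]
        simp only [PiLp.smul_apply, smul_eq_mul]
        constructor
        · intro h
          exact mul_neg_of_pos_of_neg (inv_pos.2 hpos) h
        · intro h
          by_contra h2
          push Not at h2
          have := mul_nonneg (inv_pos.2 hpos).le h2
          linarith
      rw [Set.indicator_of_mem (by exact hpos), Set.indicator_of_notMem hmem, zero_mul]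
    · rw [Set.indicator_of_notMem (by exact hpos)]

lemma lapE {d : ℕ} (G : EuclideanSpace ℝ (Fin d) → ℝ≥0∞) (hG : Measurable G) :
    ∫⁻ w, G w * ENNReal.ofReal (Real.exp (-lone w)) =
      2 ^ d * ∫⁻ z, G (WithLp.toLp 2 z) ∂(Measure.pi fun _ : Fin d => lapM) := by
  have hlm := lapD_meas
  have hlo := lone_meas (d := d)
  rw [lapPi_eq, lintegral_withDensity_eq_lintegral_mul _ (by fun_prop) (by fun_prop),
    ← (PiLp.volume_preserving_toLp (Fin d)).lintegral_comp (by fun_prop),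
    ← lintegral_const_mul _ (by fun_prop)]
  refine lintegral_congr (fun z => ?_)
  simp only [Pi.mul_apply]
  have : Real.exp (-lone (WithLp.toLp 2 z : EuclideanSpace ℝ (Fin d))) = 2 ^ d * ∏ i, lapD (z i) := by
    simp only [lapD, lone]
    rw [Finset.prod_div_distrib, ← Real.exp_sum]
    simp
    field_simp
  rw [this, ENNReal.ofReal_mul (by positivity), ENNReal.ofReal_pow (by norm_num)]
  simp only [ENNReal.ofReal_ofNat]
  ring

lemma gam (k : ℕ) : IntegrableOn (fun t : ℝ => t ^ k * Real.exp (-t)) (Set.Ioi 0) ∧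
    ∫ t in Set.Ioi (0:ℝ), t ^ k * Real.exp (-t) = k.factorial := by
  have h := Real.Gamma_nat_eq_factorial k
  rw [Real.Gamma_eq_integral (by positivity)] at h
  have e : ∫ t in Set.Ioi (0:ℝ), t ^ k * Real.exp (-t) = k.factorial := by
    rw [← h]
    refine setIntegral_congr_fun measurableSet_Ioi (fun t ht => ?_)
    simp only [add_sub_cancel_right, Real.rpow_natCast]; ring
  refine ⟨?_, e⟩
  by_contra hn
  have := integral_undef hn
  rw [e] at this
  have h2 := Nat.factorial_pos k
  norm_cast at this
  omega

lemma gam1 (n : ℕ) : ∫⁻ t in Set.Ioi (0:ℝ), ENNReal.ofReal (t ^ n) * ENNReal.ofReal (Real.exp (-t)) =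
    ENNReal.ofReal n.factorial := by
  rw [← (gam n).2, ofReal_integral_eq_lintegral_ofReal (gam n).1
    ((ae_restrict_mem measurableSet_Ioi).mono (fun t ht => by
      have : (0:ℝ) < t := ht
      simp only [Pi.zero_apply]; positivity))]
  refine setLIntegral_congr_fun measurableSet_Ioi (fun t ht => ?_)
  have : (0:ℝ) < t := ht
  rw [ENNReal.ofReal_mul (by positivity)]

lemma gam2 (n : ℕ) : ∫⁻ t in Set.Ioi (0:ℝ), ENNReal.ofReal (t ^ n) * ENNReal.ofReal (t ^ 2 * Real.exp (-t)) =
    ENNReal.ofReal n.factorial * ENNReal.ofReal ((n + 2) * (n + 1)) := by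
  have e : ((n + 2).factorial : ℝ) = n.factorial * ((n + 2) * (n + 1)) := by
    rw [Nat.factorial_succ, Nat.factorial_succ]; push_cast; ring
  rw [← ENNReal.ofReal_mul (by positivity), ← e, ← gam1]
  refine setLIntegral_congr_fun measurableSet_Ioi (fun t ht => ?_)
  have : (0:ℝ) < t := ht
  rw [← ENNReal.ofReal_mul (by positivity), ← ENNReal.ofReal_mul (by positivity)]
  congr 1; ring

lemma gam3 (n : ℕ) : ∫⁻ t in Set.Ioi (0:ℝ), ENNReal.ofReal (t ^ n) *
      ENNReal.ofReal ((t - (n + 1)) ^ 2 * Real.exp (-t)) =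
    ENNReal.ofReal n.factorial * ENNReal.ofReal (n + 1) := by
  have e : ∀ t : ℝ, t ^ n * ((t - (n + 1)) ^ 2 * Real.exp (-t)) = t ^ (n + 2) * Real.exp (-t) -
    2 * (n + 1) * (t ^ (n + 1) * Real.exp (-t)) + (n + 1) ^ 2 * (t ^ n * Real.exp (-t)) := fun t => by ring
  have i0 := (gam n).1.const_mul (((n:ℝ) + 1) ^ 2)
  have i1 := (gam (n+1)).1.const_mul (2 * ((n:ℝ) + 1))
  have i2 := (gam (n+2)).1
  have i3 : IntegrableOn (fun t : ℝ => t ^ (n + 2) * Real.exp (-t) -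
    2 * (n + 1) * (t ^ (n + 1) * Real.exp (-t))) (Set.Ioi 0) := i2.sub i1
  have hi : IntegrableOn (fun t : ℝ => t ^ n * ((t - (n + 1)) ^ 2 * Real.exp (-t))) (Set.Ioi 0) := by
    simp only [e]
    exact i3.add i0
  have v : ∫ t in Set.Ioi (0:ℝ), t ^ n * ((t - (n + 1)) ^ 2 * Real.exp (-t)) = (n.factorial : ℝ) * ((n : ℝ) + 1) := by
    simp only [e]
    rw [integral_add i3 i0, integral_sub i2 i1, integral_const_mul, integral_const_mul,
      (gam n).2, (gam (n+1)).2, (gam (n+2)).2]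
    rw [Nat.factorial_succ (n+1), Nat.factorial_succ n]; push_cast; ring
  rw [← ENNReal.ofReal_mul (by positivity), ← v, ofReal_integral_eq_lintegral_ofReal hi
    ((ae_restrict_mem measurableSet_Ioi).mono (fun t ht => by
      have : (0:ℝ) < t := ht
      simp only [Pi.zero_apply]; positivity))]
  refine setLIntegral_congr_fun measurableSet_Ioi (fun t ht => ?_)
  have : (0:ℝ) < t := ht
  rw [← ENNReal.ofReal_mul (by positivity)]

lemma norm_moment (d : ℕ) : ∫⁻ z, ENNReal.ofReal (‖(WithLp.toLp 2 z : EuclideanSpace ℝ (Fin d))‖ ^ 2)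
    ∂(Measure.pi fun _ : Fin d => lapM) = ENNReal.ofReal (2 * d) := by
  have hi : ∀ i : Fin d, Integrable (fun z : Fin d → ℝ => z i ^ 2) (Measure.pi fun _ : Fin d => lapM) := by
    intro i
    exact (measurePreserving_eval (fun _ : Fin d => lapM) i).integrable_comp_of_integrable lapM_sq_integrable
  have hv : ∀ i : Fin d, ∫ z : Fin d → ℝ, z i ^ 2 ∂(Measure.pi fun _ : Fin d => lapM) = 2 := by
    intro i
    have := integral_map (μ := Measure.pi fun _ : Fin d => lapM) (φ := Function.eval i)
      (measurable_pi_apply i).aemeasurable (f := fun x : ℝ => x ^ 2) (by fun_prop)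
    rw [(measurePreserving_eval (fun _ : Fin d => lapM) i).map_eq, lapM_sq] at this
    exact this.symm
  simp only [EuclideanSpace.norm_sq_eq, Real.norm_eq_abs, sq_abs]
  rw [← ofReal_integral_eq_lintegral_ofReal (integrable_finsetSum _ (fun i _ => hi i))
    (Filter.Eventually.of_forall (fun z => Finset.sum_nonneg (fun i _ => sq_nonneg _))),
    integral_finsetSum _ (fun i _ => hi i)]
  simp [hv, mul_comm]

lemma odd_mean {d : ℕ} (h : EuclideanSpace ℝ (Fin d) → ℝ) (ho : ∀ w, h (-w) = -h w) :
    ∫ z, h (WithLp.toLp 2 z) ∂(Measure.pi fun _ : Fin d => lapM) = 0 := by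
  have hlm := lapD_meas
  rw [lapPi_eq, integral_withDensity_eq_integral_toReal_smul (by fun_prop) (by simp)]
  have := integral_neg_eq_self (fun z : Fin d → ℝ =>
    (ENNReal.ofReal (∏ i, lapD (z i))).toReal • h (WithLp.toLp 2 z)) volume
  have e : ∀ z : Fin d → ℝ, (ENNReal.ofReal (∏ i, lapD ((-z) i))).toReal • h (WithLp.toLp 2 (-z)) =
      -((ENNReal.ofReal (∏ i, lapD (z i))).toReal • h (WithLp.toLp 2 z)) := by
    intro z
    rw [WithLp.toLp_neg, ho]
    simp [lapD]
  simp only [e] at this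
  rw [integral_neg] at this
  linarith

lemma odd_sq {d : ℕ} (h : EuclideanSpace ℝ (Fin d) → ℝ) (K : NNReal) (hl : LipschitzWith K h)
    (C : ℝ) (hC : ∀ x, |h x| ≤ C) (ho : ∀ w, h (-w) = -h w) :
    ∫⁻ z, ENNReal.ofReal (h (WithLp.toLp 2 z) ^ 2) ∂(Measure.pi fun _ : Fin d => lapM) ≤
      ENNReal.ofReal (4 * K ^ 2) := by
  have hc := hl.continuous.measurable
  have := poincare_d h K hl C hC
  rw [odd_mean h ho] at this
  rw [← ofReal_integral_eq_lintegral_ofReal (integrable_bdd _ _ (by fun_prop) (C^2) (fun z => by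
    rw [abs_pow]; gcongr; exact hC _)) (Filter.Eventually.of_forall (fun z => sq_nonneg _))]
  refine ENNReal.ofReal_le_ofReal ?_
  linarith

lemma sphere_data {d : ℕ} (hd : 1 ≤ d) : ∃ N : ℝ≥0∞, N ≠ 0 ∧ N ≠ ∞ ∧
    (2:ℝ≥0∞) ^ d = N * μH[(d : ℝ) - 1] {e : EuclideanSpace ℝ (Fin d) | lone e = 1} ∧
    (∫⁻ w : EuclideanSpace ℝ (Fin d), ENNReal.ofReal (‖(lone w)⁻¹ • w‖ ^ 2) *
      ENNReal.ofReal ((lone w - d) ^ 2 * Real.exp (-lone w)) ≤ 2 * 2 ^ d) ∧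
    ∀ Q : EuclideanSpace ℝ (Fin d) → ℝ≥0∞, Measurable Q →
      ∫⁻ w, Q ((lone w)⁻¹ • w) * ENNReal.ofReal (Real.exp (-lone w)) =
        N * ∫⁻ e in {e | lone e = 1}, Q e ∂(μH[(d : ℝ) - 1]) := by
  obtain ⟨n, rfl⟩ : ∃ n, d = n + 1 := ⟨d - 1, by omega⟩
  obtain ⟨c, hc0, hct, H⟩ := radial hd
  simp only [Nat.add_sub_cancel] at H
  have hf : ENNReal.ofReal (n.factorial : ℝ) ≠ 0 := by
    have := Nat.factorial_pos n
    simp; positivity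
  have HQ : ∀ Q : EuclideanSpace ℝ (Fin (n+1)) → ℝ≥0∞, Measurable Q →
      ∫⁻ w, Q ((lone w)⁻¹ • w) * ENNReal.ofReal (Real.exp (-lone w)) =
        (c * ENNReal.ofReal n.factorial) * ∫⁻ e in {e | lone e = 1}, Q e ∂(μH[((n+1 : ℕ) : ℝ) - 1]) := by
    intro Q hQ
    have := H Q (fun t => ENNReal.ofReal (Real.exp (-t))) hQ (by fun_prop)
    rw [gam1] at this
    exact this
  refine ⟨c * ENNReal.ofReal n.factorial, mul_ne_zero hc0 hf, ENNReal.mul_ne_top hct ENNReal.ofReal_ne_top,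
    ?_, ?_, HQ⟩
  · have h1 := HQ (fun _ => 1) measurable_const
    have h2 := lapE (d := n+1) (fun _ => 1) measurable_const
    rw [h2] at h1
    simpa using h1
  · have hm : Measurable (fun w : EuclideanSpace ℝ (Fin (n+1)) => ENNReal.ofReal (‖w‖ ^ 2)) := by fun_prop
    have h2 := H (fun w => ENNReal.ofReal (‖w‖ ^ 2)) (fun t => ENNReal.ofReal (t ^ 2 * Real.exp (-t))) hm (by fun_prop)
    have h3 := H (fun w => ENNReal.ofReal (‖w‖ ^ 2))
      (fun t => ENNReal.ofReal ((t - (n+1)) ^ 2 * Real.exp (-t))) hm (by fun_prop)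
    have h4 := lapE _ hm
    rw [norm_moment] at h4
    rw [gam2] at h2
    rw [gam3] at h3
    have e : ∀ w : EuclideanSpace ℝ (Fin (n+1)), ENNReal.ofReal (‖(lone w)⁻¹ • w‖ ^ 2) *
        ENNReal.ofReal (lone w ^ 2 * Real.exp (-lone w)) =
        ENNReal.ofReal (‖w‖ ^ 2) * ENNReal.ofReal (Real.exp (-lone w)) := by
      intro w
      rw [← ENNReal.ofReal_mul (by positivity), ← ENNReal.ofReal_mul (by positivity)]
      congr 1
      by_cases hw : w = 0
      · simp [hw]
      · have := lone_pos w hw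
        rw [norm_smul, norm_inv, Real.norm_of_nonneg this.le]
        field_simp
    simp only [e] at h2
    rw [h4] at h2
    push_cast
    rw [h3]
    generalize (∫⁻ e in {e | lone e = 1}, ENNReal.ofReal (‖e‖ ^ 2) ∂(μH[((n+1 : ℕ) : ℝ) - 1])) = J at *
    have a1 : ENNReal.ofReal (((n:ℝ) + 2) * (n + 1)) = (n + 2) * (n + 1) := by
      rw [ENNReal.ofReal_mul (by positivity)]; norm_cast
    have a2 : ENNReal.ofReal ((n:ℝ) + 1) = n + 1 := by
      norm_cast
    have a3 : ENNReal.ofReal (2 * ((n + 1 : ℕ) : ℝ)) = 2 * (n + 1) := by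
      rw [ENNReal.ofReal_mul (by positivity)]; push_cast; rw [a2]; simp
    rw [a1, a3] at h2
    rw [a2]
    have k : ((n:ℝ≥0∞) + 1) * (c * (ENNReal.ofReal n.factorial * (n + 1)) * J) ≤ (n + 1) * (2 * 2 ^ (n + 1)) := by
      calc _ ≤ ((n:ℝ≥0∞) + 2) * (c * (ENNReal.ofReal n.factorial * (n + 1)) * J) := by
            gcongr; norm_num
        _ = c * (ENNReal.ofReal n.factorial * ((n + 2) * (n + 1))) * J := by ring
        _ = 2 ^ (n + 1) * (2 * (n + 1)) := h2.symm
        _ = _ := by ring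
    exact (ENNReal.mul_le_mul_iff_right (by positivity) (by finiteness)).1 k

lemma norm_le_lone {d : ℕ} (w : EuclideanSpace ℝ (Fin d)) : ‖w‖ ≤ lone w := by
  have h0 : 0 ≤ lone w := Finset.sum_nonneg (fun i _ => abs_nonneg _)
  rw [← sq_le_sq₀ (norm_nonneg _) h0, EuclideanSpace.norm_sq_eq]
  exact Finset.sum_sq_le_sq_sum_of_nonneg (fun i _ => norm_nonneg _)

lemma sphere_odd {d : ℕ} (hd : 1 ≤ d) (F : EuclideanSpace ℝ (Fin d) → ℝ) (K : NNReal)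
    (hl : LipschitzWith K F) (C : ℝ) (hC : ∀ x, |F x| ≤ C) (ho : ∀ w, F (-w) = -F w) :
    ENNReal.ofReal (d ^ 2) * ∫⁻ e in {e | lone e = 1}, ENNReal.ofReal (F e ^ 2) ∂(μH[(d : ℝ) - 1]) ≤
      ENNReal.ofReal (12 * K ^ 2) * μH[(d : ℝ) - 1] {e : EuclideanSpace ℝ (Fin d) | lone e = 1} := by
  obtain ⟨N, hN0, hNt, h1, h3, HQ⟩ := sphere_data hd
  have hFm := hl.continuous.measurable
  have hlm := lone_meas (d := d)
  have hdp : (0:ℝ) < d := by exact_mod_cast hd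
  set h : EuclideanSpace ℝ (Fin d) → ℝ := fun w => d * F ((d:ℝ)⁻¹ • w) with hh
  have hhl : LipschitzWith K h := by
    refine LipschitzWith.of_dist_le_mul (fun a b => ?_)
    have := hl.dist_le_mul ((d:ℝ)⁻¹ • a) ((d:ℝ)⁻¹ • b)
    rw [dist_smul₀, Real.dist_eq, norm_inv, Real.norm_of_nonneg hdp.le] at this
    rw [Real.dist_eq, hh]
    simp only
    rw [← mul_sub, abs_mul, abs_of_pos hdp]
    calc _ ≤ (d:ℝ) * (K * ((d:ℝ)⁻¹ * dist a b)) := by gcongr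
      _ = _ := by field_simp
  have hhm := hhl.continuous.measurable
  have hs := odd_sq h K hhl (d * C) (fun x => by
    rw [hh]; simp only; rw [abs_mul, abs_of_pos hdp]; gcongr; exact hC _) (fun w => by
    rw [hh]; simp only; rw [smul_neg, ho]; ring)
  have F0 : F 0 = 0 := by have := ho 0; simp at this; linarith
  have pt : ∀ w, (d:ℝ) ^ 2 * F ((lone w)⁻¹ • w) ^ 2 ≤
      2 * h w ^ 2 + 2 * K ^ 2 * (‖(lone w)⁻¹ • w‖ ^ 2 * (lone w - d) ^ 2) := by
    intro w
    by_cases hw : w = 0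
    · subst hw; simp [F0, hh]
    have hp := lone_pos w hw
    have := hl.dist_le_mul ((lone w)⁻¹ • w) ((d:ℝ)⁻¹ • w)
    have e : (lone w)⁻¹ • w - (d:ℝ)⁻¹ • w = ((d:ℝ)⁻¹ * (d - lone w)) • (lone w)⁻¹ • w := by
      rw [smul_smul, ← sub_smul]; congr 1; field_simp
    rw [dist_eq_norm, dist_eq_norm, e, norm_smul, Real.norm_eq_abs, Real.norm_eq_abs, abs_mul,
      abs_inv, abs_of_pos hdp] at this
    set A := F ((lone w)⁻¹ • w)
    set B := F ((d:ℝ)⁻¹ • w) with hB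
    set s := ‖(lone w)⁻¹ • w‖
    have t : |(d:ℝ) * A - d * B| ≤ K * (|d - lone w| * s) := by
      rw [← mul_sub, abs_mul, abs_of_pos hdp]
      calc _ ≤ (d:ℝ) * (K * ((d:ℝ)⁻¹ * |d - lone w| * s)) := by gcongr
        _ = _ := by field_simp
    have t2 := pow_le_pow_left₀ (abs_nonneg _) t 2
    rw [sq_abs, mul_pow, mul_pow, sq_abs] at t2
    have hhw : h w = d * B := rfl
    rw [hhw]
    nlinarith [sq_nonneg (d * A - 2 * (d * B))]
  have key : ENNReal.ofReal (d ^ 2) * ∫⁻ w, ENNReal.ofReal (F ((lone w)⁻¹ • w) ^ 2) *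
      ENNReal.ofReal (Real.exp (-lone w)) ≤ ENNReal.ofReal (12 * K ^ 2) * 2 ^ d := by
    rw [← lintegral_const_mul _ (by fun_prop)]
    calc _ ≤ ∫⁻ w, (ENNReal.ofReal 2 * (ENNReal.ofReal (h w ^ 2) * ENNReal.ofReal (Real.exp (-lone w))) +
          ENNReal.ofReal (2 * K ^ 2) * (ENNReal.ofReal (‖(lone w)⁻¹ • w‖ ^ 2) *
            ENNReal.ofReal ((lone w - d) ^ 2 * Real.exp (-lone w)))) := by
          refine lintegral_mono (fun w => ?_)
          rw [← ENNReal.ofReal_mul (by positivity), ← ENNReal.ofReal_mul (by positivity),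
            ← ENNReal.ofReal_mul (by positivity), ← ENNReal.ofReal_mul (by positivity),
            ← ENNReal.ofReal_mul (by positivity), ← ENNReal.ofReal_mul (by positivity),
            ← ENNReal.ofReal_add (by positivity) (by positivity)]
          refine ENNReal.ofReal_le_ofReal ?_
          have := mul_le_mul_of_nonneg_right (pt w) (Real.exp_pos (-lone w)).le
          linarith
      _ = ENNReal.ofReal 2 * (2 ^ d * ∫⁻ z, ENNReal.ofReal (h (WithLp.toLp 2 z) ^ 2) ∂(Measure.pi fun _ : Fin d => lapM)) +
          ENNReal.ofReal (2 * K ^ 2) * ∫⁻ w : EuclideanSpace ℝ (Fin d), (ENNReal.ofReal (‖(lone w)⁻¹ • w‖ ^ 2) *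
            ENNReal.ofReal ((lone w - d) ^ 2 * Real.exp (-lone w))) := by
          rw [lintegral_add_left (by fun_prop), lintegral_const_mul _ (by fun_prop),
            lintegral_const_mul _ (by fun_prop), lapE (fun w => ENNReal.ofReal (h w ^ 2)) (by fun_prop)]
      _ ≤ ENNReal.ofReal 2 * (2 ^ d * ENNReal.ofReal (4 * K ^ 2)) + ENNReal.ofReal (2 * K ^ 2) * (2 * 2 ^ d) := by
          gcongr
      _ = _ := by
          rw [ENNReal.ofReal_mul (by positivity), ENNReal.ofReal_mul (by positivity),
            ENNReal.ofReal_mul (by positivity)]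
          simp only [ENNReal.ofReal_ofNat]
          ring
  rw [HQ (fun e => ENNReal.ofReal (F e ^ 2)) (by fun_prop), h1] at key
  refine (ENNReal.mul_le_mul_iff_right hN0 hNt).1 ?_
  calc _ = _ := mul_left_comm _ _ _
    _ ≤ _ := key
    _ = _ := mul_left_comm _ _ _

lemma sphere_unif {d : ℕ} (hd : 1 ≤ d) : IsProbabilityMeasure (uniformOnSphere (l1Sphere d)) ∧
    ∀ (F : EuclideanSpace ℝ (Fin d) → ℝ) (K : NNReal), LipschitzWith K F → (∀ w, F (-w) = -F w) →
    ∫⁻ e, ENNReal.ofReal (F e ^ 2) ∂(uniformOnSphere (l1Sphere d)) ≤ ENNReal.ofReal (12 * K ^ 2 / d ^ 2) := by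
  obtain ⟨N, hN0, hNt, h1, -, -⟩ := sphere_data hd
  have hlm := lone_meas (d := d)
  have hdp : (0:ℝ) < d := by exact_mod_cast hd
  have hS : l1Sphere d = {e : EuclideanSpace ℝ (Fin d) | lone e = 1} := rfl
  have hSm : MeasurableSet {e : EuclideanSpace ℝ (Fin d) | lone e = 1} :=
    measurableSet_eq_fun lone_meas measurable_const
  unfold uniformOnSphere
  rw [hS]
  have m0 : μH[(d : ℝ) - 1] {e : EuclideanSpace ℝ (Fin d) | lone e = 1} ≠ 0 := by
    intro h; rw [h, mul_zero] at h1; simp at h1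
  have mt : μH[(d : ℝ) - 1] {e : EuclideanSpace ℝ (Fin d) | lone e = 1} ≠ ∞ := by
    intro h; rw [h, ENNReal.mul_top hN0] at h1; exact absurd h1 (by finiteness)
  constructor
  · constructor
    rw [Measure.smul_apply, Measure.restrict_apply MeasurableSet.univ, Set.univ_inter, smul_eq_mul]
    exact ENNReal.inv_mul_cancel m0 mt
  · intro F K hl ho
    set G : EuclideanSpace ℝ (Fin d) → ℝ := fun e => max (-(K:ℝ)) (min K (F e)) with hG
    have hGl : LipschitzWith K G := (hl.const_min _).const_max _
    have F0 : F 0 = 0 := by have := ho 0; simp at this; linarith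
    have := sphere_odd hd G K hGl K (fun x => abs_le.2 ⟨le_max_left _ _, max_le (by
      have : (0:ℝ) ≤ K := K.2
      linarith) (min_le_left _ _)⟩) (fun w => by
        have : (0:ℝ) ≤ K := K.2
        rw [hG]; simp only; rw [ho]
        rcases le_total (F w) K with h | h <;> rcases le_total (-(K:ℝ)) (F w) with h' | h'
        all_goals grind)
    rw [lintegral_smul_measure, smul_eq_mul]
    have e : ∫⁻ e in {e | lone e = 1}, ENNReal.ofReal (F e ^ 2) ∂(μH[(d : ℝ) - 1]) =
        ∫⁻ e in {e | lone e = 1}, ENNReal.ofReal (G e ^ 2) ∂(μH[(d : ℝ) - 1]) := by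
      refine setLIntegral_congr_fun hSm (fun e he => ?_)
      have he' : lone e = 1 := he
      have h1 := hl.dist_le_mul e 0
      rw [F0, Real.dist_eq, sub_zero, dist_zero_right] at h1
      have h2 := norm_le_lone e
      rw [he'] at h2
      have h3 : |F e| ≤ K := h1.trans (mul_le_of_le_one_right K.2 h2)
      have h4 := abs_le.1 h3
      have : G e = F e := by
        rw [hG]; simp only; rw [min_eq_right h4.2, max_eq_right h4.1]
      simp only [this]
    rw [e]
    set I := ∫⁻ e in {e | lone e = 1}, ENNReal.ofReal (G e ^ 2) ∂(μH[(d : ℝ) - 1])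
    set m := μH[(d : ℝ) - 1] {e : EuclideanSpace ℝ (Fin d) | lone e = 1}
    rw [ENNReal.ofReal_div_of_pos (by positivity)]
    rw [ENNReal.le_div_iff_mul_le (Or.inl (by simp; omega)) (Or.inl ENNReal.ofReal_ne_top)]
    calc m⁻¹ * I * ENNReal.ofReal (d ^ 2) = m⁻¹ * (ENNReal.ofReal (d ^ 2) * I) := by ring
      _ ≤ m⁻¹ * (ENNReal.ofReal (12 * K ^ 2) * m) := by gcongr
      _ = ENNReal.ofReal (12 * K ^ 2) * (m⁻¹ * m) := by ring
      _ = _ := by rw [ENNReal.inv_mul_cancel m0 mt, mul_one]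

lemma lp_bound {d : ℕ} (hd : 1 ≤ d) (p q : ℝ≥0∞) (hp1 : 1 ≤ p) (hp2 : p ≤ 2) (hpq : 1 / p + 1 / q = 1)
    (c : ℝ) (e : EuclideanSpace ℝ (Fin d)) :
    lpNorm q (c • signVec e) ^ 2 ≤ c ^ 2 * (d : ℝ) ^ ((2 : ℝ) - 2 / p.toReal) := by
  have hdp : (0:ℝ) < d := by exact_mod_cast hd
  have hpt : p ≠ ∞ := ne_top_of_le_ne_top (by simp) hp2
  have hp0 : p ≠ 0 := (lt_of_lt_of_le one_pos hp1).ne'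
  have hco : ∀ i, |(c • signVec e) i| ≤ |c| := by
    intro i
    have : (c • signVec e) i = c * Real.sign (e i) := rfl
    rw [this, abs_mul]
    refine mul_le_of_le_one_right (abs_nonneg _) ?_
    rcases Real.sign_apply_eq (e i) with h | h | h <;> rw [h] <;> simp
  have hr : p.toReal⁻¹ + q.toReal⁻¹ = 1 := by
    have h := congrArg ENNReal.toReal hpq
    have hq0 : q ≠ 0 := by
      rintro rfl
      simp at hpq
    rw [ENNReal.toReal_add (by simp [hp0]) (by simp [hq0])] at h
    simpa using h
  have hpr : 0 < p.toReal := ENNReal.toReal_pos hp0 hpt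
  have he : (2 : ℝ) - 2 / p.toReal = 2 * q.toReal⁻¹ := by
    rw [div_eq_mul_inv]; linarith
  rw [he]
  unfold _root_.lpNorm
  split_ifs with hq
  · subst hq
    simp only [ENNReal.toReal_top, inv_zero, mul_zero, Real.rpow_zero, mul_one]
    haveI : Nonempty (Fin d) := ⟨⟨0, hd⟩⟩
    rw [← sq_abs c]
    exact pow_le_pow_left₀ (Real.iSup_nonneg (fun i => abs_nonneg _)) (ciSup_le hco) 2
  · have hq0 : q ≠ 0 := by
      rintro rfl
      simp at hpq
    have hqr : 0 < q.toReal := ENNReal.toReal_pos hq0 hq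
    have h1 : ∑ i, |(c • signVec e) i| ^ q.toReal ≤ d * |c| ^ q.toReal := by
      calc _ ≤ ∑ i : Fin d, |c| ^ q.toReal :=
            Finset.sum_le_sum (fun i _ => Real.rpow_le_rpow (abs_nonneg _) (hco i) hqr.le)
        _ = _ := by simp
    have h0 : 0 ≤ ∑ i, |(c • signVec e) i| ^ q.toReal :=
      Finset.sum_nonneg (fun i _ => Real.rpow_nonneg (abs_nonneg _) _)
    have h2 : (∑ i, |(c • signVec e) i| ^ q.toReal) ^ (1 / q.toReal) ≤ (d:ℝ) ^ (q.toReal⁻¹) * |c| := by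
      calc _ ≤ (d * |c| ^ q.toReal) ^ (1 / q.toReal) := Real.rpow_le_rpow h0 h1 (by positivity)
        _ = _ := by
          rw [Real.mul_rpow (by positivity) (by positivity), one_div,
            Real.rpow_rpow_inv (abs_nonneg _) hqr.ne']
    calc _ ≤ ((d:ℝ) ^ (q.toReal⁻¹) * |c|) ^ 2 := pow_le_pow_left₀ (by positivity) h2 2
      _ = _ := by
        rw [mul_pow, sq_abs, mul_comm 2, Real.rpow_mul hdp.le]
        norm_cast
        ring

/-- Second-moment bound for the two-point `l₁`-randomized gradient
estimator `g(x,ξ,e) = (d/(2γ))·(f_δ(x+γe,ξ) − f_δ(x−γe,ξ))·sign(e)`, `e` uniform on the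
unit `l₁`-sphere: `E[‖g‖_q²] ≤ κ(p,d)·(M₂² + d²Δ²/(12(1+√2)²γ²))` with
`κ(p,d) = 48(1+√2)²·d^{2−2/p}`. -/
theorem two_point_l1_second_moment {d : ℕ} (hd : 1 ≤ d) (γ Δ M₂ : ℝ) (hγ : 0 < γ) (hΔ : 0 ≤ Δ)
    (p q : ℝ≥0∞) (hp1 : 1 ≤ p) (hp2 : p ≤ 2) (hpq : 1 / p + 1 / q = 1)
    {Ω : Type*} [MeasurableSpace Ω] (μξ : Measure Ω) [IsProbabilityMeasure μξ]
    (f : EuclideanSpace ℝ (Fin d) → Ω → ℝ)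
    (hfm : Measurable (Function.uncurry f))
    (M₂fun : Ω → ℝ) (hMm : Measurable M₂fun)
    (hlip : ∀ ω, ∀ x y : EuclideanSpace ℝ (Fin d), |f y ω - f x ω| ≤ M₂fun ω * ‖y - x‖)
    (hM : ∫⁻ ω, ENNReal.ofReal (M₂fun ω ^ 2) ∂μξ ≤ ENNReal.ofReal (M₂ ^ 2))
    (δ : EuclideanSpace ℝ (Fin d) → ℝ) (hδm : Measurable δ)
    (hδ : ∀ x : EuclideanSpace ℝ (Fin d), |δ x| ≤ Δ)
    (x : EuclideanSpace ℝ (Fin d)) :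
    ∫⁻ z : Ω × EuclideanSpace ℝ (Fin d),
        ENNReal.ofReal
          ((lpNorm q ((d / (2 * γ) *
              ((f (x + γ • z.2) z.1 + δ (x + γ • z.2)) -
                (f (x - γ • z.2) z.1 + δ (x - γ • z.2)))) • signVec z.2)) ^ 2)
        ∂(μξ.prod (uniformOnSphere (l1Sphere d)))
      ≤ ENNReal.ofReal
          ((48 * (1 + Real.sqrt 2) ^ 2 * (d : ℝ) ^ ((2 : ℝ) - 2 / p.toReal)) *
            (M₂ ^ 2 + d ^ 2 * Δ ^ 2 / (12 * (1 + Real.sqrt 2) ^ 2 * γ ^ 2))) := by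
  obtain ⟨hprob, hsph⟩ := sphere_unif hd
  set ν := uniformOnSphere (l1Sphere d) with hν
  have hdp : (0:ℝ) < d := by exact_mod_cast hd
  have hMn : ∀ ω, 0 ≤ M₂fun ω := by
    intro ω
    have := (abs_nonneg _).trans (hlip ω 0 (EuclideanSpace.single ⟨0, hd⟩ (1:ℝ)))
    simpa using this
  set P : ℝ := (d : ℝ) ^ ((2 : ℝ) - 2 / p.toReal) with hP
  have hP0 : 0 ≤ P := by positivity
  set D : Ω → EuclideanSpace ℝ (Fin d) → ℝ := fun ω e => f (x + γ • e) ω - f (x - γ • e) ω with hD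
  have hDm : Measurable (fun z : Ω × EuclideanSpace ℝ (Fin d) => D z.1 z.2) := by
    have a : Measurable (fun z : Ω × EuclideanSpace ℝ (Fin d) => (x + γ • z.2, z.1)) := by fun_prop
    have b : Measurable (fun z : Ω × EuclideanSpace ℝ (Fin d) => (x - γ • z.2, z.1)) := by fun_prop
    exact (hfm.comp a).sub (hfm.comp b)
  have hin : ∀ ω, ∫⁻ e, ENNReal.ofReal (D ω e ^ 2) ∂ν ≤
      ENNReal.ofReal (48 * γ ^ 2 / d ^ 2) * ENNReal.ofReal (M₂fun ω ^ 2) := by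
    intro ω
    have hK : 0 ≤ 2 * γ * M₂fun ω := by have := hMn ω; positivity
    have := hsph (D ω) (Real.toNNReal (2 * γ * M₂fun ω)) (LipschitzWith.of_dist_le_mul (fun a b => by
      have h1 := abs_le.1 (hlip ω (x + γ • b) (x + γ • a))
      have h2 := abs_le.1 (hlip ω (x - γ • b) (x - γ • a))
      have e1 : ‖x + γ • a - (x + γ • b)‖ = γ * dist a b := by
        rw [add_sub_add_left_eq_sub, ← smul_sub, norm_smul, Real.norm_of_nonneg hγ.le, dist_eq_norm]
      have e2 : ‖x - γ • a - (x - γ • b)‖ = γ * dist a b := by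
        rw [sub_sub_sub_cancel_left, ← smul_sub, norm_smul, Real.norm_of_nonneg hγ.le, dist_comm, dist_eq_norm]
      rw [e1] at h1
      rw [e2] at h2
      rw [Real.dist_eq]
      rw [Real.coe_toNNReal _ hK]
      simp only [hD]
      rw [abs_le]
      constructor <;> linarith [h1.1, h1.2, h2.1, h2.2])) (fun w => by
      simp only [hD, smul_neg, sub_neg_eq_add, ← sub_eq_add_neg]; ring)
    refine this.trans (le_of_eq ?_)
    rw [← ENNReal.ofReal_mul (by positivity)]
    congr 1
    rw [Real.coe_toNNReal _ hK]
    ring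
  have pt : ∀ z : Ω × EuclideanSpace ℝ (Fin d), ENNReal.ofReal
          ((lpNorm q ((d / (2 * γ) *
              ((f (x + γ • z.2) z.1 + δ (x + γ • z.2)) -
                (f (x - γ • z.2) z.1 + δ (x - γ • z.2)))) • signVec z.2)) ^ 2) ≤
      ENNReal.ofReal (P * d ^ 2 / (2 * γ ^ 2)) * ENNReal.ofReal (D z.1 z.2 ^ 2) +
        ENNReal.ofReal (P * (2 * d ^ 2 * Δ ^ 2 / γ ^ 2)) := by
    intro z
    rw [← ENNReal.ofReal_mul (by positivity), ← ENNReal.ofReal_add (by positivity) (by positivity)]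
    refine ENNReal.ofReal_le_ofReal ?_
    refine (lp_bound hd p q hp1 hp2 hpq _ _).trans ?_
    have a1 := abs_le.1 (hδ (x + γ • z.2))
    have a2 := abs_le.1 (hδ (x - γ • z.2))
    have k : (f (x + γ • z.2) z.1 + δ (x + γ • z.2) - (f (x - γ • z.2) z.1 + δ (x - γ • z.2))) ^ 2 ≤
        2 * D z.1 z.2 ^ 2 + 8 * Δ ^ 2 := by
      have e : f (x + γ • z.2) z.1 + δ (x + γ • z.2) - (f (x - γ • z.2) z.1 + δ (x - γ • z.2)) =
        D z.1 z.2 + (δ (x + γ • z.2) - δ (x - γ • z.2)) := by simp only [hD]; ring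
      rw [e]
      have s : (δ (x + γ • z.2) - δ (x - γ • z.2)) ^ 2 ≤ (2 * Δ) ^ 2 := by
        refine sq_le_sq' ?_ ?_ <;> linarith [a1.1, a1.2, a2.1, a2.2]
      nlinarith [sq_nonneg (D z.1 z.2 - (δ (x + γ • z.2) - δ (x - γ • z.2)))]
    rw [mul_pow, ← hP]
    calc _ ≤ ((d:ℝ) / (2 * γ)) ^ 2 * (2 * D z.1 z.2 ^ 2 + 8 * Δ ^ 2) * P := by gcongr
      _ = _ := by field_simp; ring
  calc _ ≤ ∫⁻ z : Ω × EuclideanSpace ℝ (Fin d),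
        (ENNReal.ofReal (P * d ^ 2 / (2 * γ ^ 2)) * ENNReal.ofReal (D z.1 z.2 ^ 2) +
        ENNReal.ofReal (P * (2 * d ^ 2 * Δ ^ 2 / γ ^ 2))) ∂(μξ.prod ν) := lintegral_mono pt
    _ = ENNReal.ofReal (P * d ^ 2 / (2 * γ ^ 2)) * (∫⁻ ω, ∫⁻ e, ENNReal.ofReal (D ω e ^ 2) ∂ν ∂μξ) +
        ENNReal.ofReal (P * (2 * d ^ 2 * Δ ^ 2 / γ ^ 2)) := by
        rw [lintegral_add_right _ measurable_const, lintegral_const_mul _ (by fun_prop), lintegral_const,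
          measure_univ, mul_one, lintegral_prod _ (by fun_prop)]
    _ ≤ ENNReal.ofReal (P * d ^ 2 / (2 * γ ^ 2)) * (ENNReal.ofReal (48 * γ ^ 2 / d ^ 2) *
          ENNReal.ofReal (M₂ ^ 2)) + ENNReal.ofReal (P * (2 * d ^ 2 * Δ ^ 2 / γ ^ 2)) := by
        gcongr
        calc _ ≤ ∫⁻ ω, ENNReal.ofReal (48 * γ ^ 2 / d ^ 2) * ENNReal.ofReal (M₂fun ω ^ 2) ∂μξ :=
              lintegral_mono hin
          _ = _ := lintegral_const_mul _ (by fun_prop)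
          _ ≤ _ := by gcongr
    _ = ENNReal.ofReal (24 * P * M₂ ^ 2 + P * (2 * d ^ 2 * Δ ^ 2 / γ ^ 2)) := by
        rw [← ENNReal.ofReal_mul (by positivity), ← ENNReal.ofReal_mul (by positivity),
          ← ENNReal.ofReal_add (by positivity) (by positivity)]
        congr 2
        field_simp
        ring
    _ ≤ _ := by
        refine ENNReal.ofReal_le_ofReal ?_
        have hs : 1 ≤ (1 + Real.sqrt 2) ^ 2 := by nlinarith [Real.sqrt_nonneg 2]
        have e : 48 * (1 + Real.sqrt 2) ^ 2 * P *
            (M₂ ^ 2 + d ^ 2 * Δ ^ 2 / (12 * (1 + Real.sqrt 2) ^ 2 * γ ^ 2)) =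
            48 * (1 + Real.sqrt 2) ^ 2 * (P * M₂ ^ 2) + 2 * (P * (2 * d ^ 2 * Δ ^ 2 / γ ^ 2)) := by
          field_simp
          ring
        rw [e]
        have n1 : 0 ≤ P * M₂ ^ 2 := by positivity
        have n2 : 0 ≤ P * (2 * d ^ 2 * Δ ^ 2 / γ ^ 2) := by positivity
        nlinarith
end

section
/- Let d ≥ 1, γ > 0, and let f : ℝ^d → ℝ be M-Lipschitz continuous. Let f_γ(x) := E[f(x + γ·ẽ)], where ẽ is uniformly distributed on the unit l₁-ball B₁^d(1). Then f_γ is differentiable at every x ∈ ℝ^d with gradient ∇f_γ(x) = E_e[(d/γ)·f(x + γe)·sign(e)], where e is uniformly distributed on the unit l₁-sphere S₁^d(1). -/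
open MeasureTheory
open scoped ENNReal RealInnerProductSpace

namespace L1S
open Set

variable {n : ℕ}

noncomputable def ins (i : Fin (n+1)) (s : ℝ) (y : Fin n → ℝ) : EuclideanSpace ℝ (Fin (n+1)) :=
  WithLp.toLp 2 (i.insertNth s y)

@[simp] lemma ins_same (i : Fin (n+1)) (s : ℝ) (y : Fin n → ℝ) : ins i s y i = s := by
  simp [ins]

@[simp] lemma ins_above (i : Fin (n+1)) (s : ℝ) (y : Fin n → ℝ) (j : Fin n) :
    ins i s y (i.succAbove j) = y j := by
  simp [ins]

lemma ext_above (i : Fin (n+1)) {u v : EuclideanSpace ℝ (Fin (n+1))} (h : u i = v i)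
    (h' : ∀ j, u (i.succAbove j) = v (i.succAbove j)) : u = v := by
  ext k
  rcases Fin.eq_self_or_eq_succAbove i k with rfl | ⟨j, rfl⟩
  · exact h
  · exact h' j

lemma continuous_ins (i : Fin (n+1)) :
    Continuous (fun p : ℝ × (Fin n → ℝ) => ins i p.1 p.2) := by
  unfold ins
  fun_prop

noncomputable def Llin (i : Fin (n+1)) : (Fin n → ℝ) →ₗ[ℝ] EuclideanSpace ℝ (Fin (n+1)) where
  toFun z := ins i (-∑ j, z j) z
  map_add' x y := by
    apply ext_above i <;> simp [Finset.sum_add_distrib]; ring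
  map_smul' c x := by
    apply ext_above i <;> simp [Finset.mul_sum]

noncomputable def G (i : Fin (n+1)) (y : Fin n → ℝ) : EuclideanSpace ℝ (Fin (n+1)) :=
  ins i (1 - ∑ j, y j) y

lemma G_add (i : Fin (n+1)) (z y : Fin n → ℝ) : G i (z + y) = Llin i z + G i y := by
  apply ext_above i <;> simp [G, Llin, Finset.sum_add_distrib]; ring

lemma G_lip (i : Fin (n+1)) : ∃ K : NNReal, LipschitzWith K (G (n := n) i) := by
  refine ⟨_, LipschitzWith.of_dist_le_mul (K := ‖(Llin i).toContinuousLinearMap‖₊) fun x y => ?_⟩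
  have h : G i x - G i y = (Llin i).toContinuousLinearMap (x - y) := by
    have := G_add i (x - y) y
    rw [sub_add_cancel] at this
    rw [this]; simp
  rw [dist_eq_norm, dist_eq_norm, h]
  exact ContinuousLinearMap.le_opNorm _ _

def proj (i : Fin (n+1)) (u : EuclideanSpace ℝ (Fin (n+1))) : Fin n → ℝ :=
  fun j => u (i.succAbove j)

@[simp] lemma proj_ins (i : Fin (n+1)) (s : ℝ) (y : Fin n → ℝ) : proj i (ins i s y) = y := by
  ext j; simp [proj]

lemma proj_lip (i : Fin (n+1)) : LipschitzWith 1 (proj i) := by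
  refine LipschitzWith.of_dist_le_mul fun x y => ?_
  rw [NNReal.coe_one, one_mul, dist_pi_le_iff dist_nonneg]
  intro j
  have := PiLp.norm_apply_le (x - y) (i.succAbove j)
  simpa [dist_eq_norm, proj] using this

lemma emb_of_proj (i : Fin (n+1)) {g : (Fin n → ℝ) → EuclideanSpace ℝ (Fin (n+1))}
    (hg : Continuous g) (h : ∀ y, proj i (g y) = y) : MeasurableEmbedding g :=
  hg.measurableEmbedding (fun a b hab => by rw [← h a, ← h b, hab])

lemma hvol : (μH[(n : ℝ)] : Measure (Fin n → ℝ)) = volume := by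
  have := hausdorffMeasure_pi_real (ι := Fin n)
  simpa using this

lemma G_comap (i : Fin (n+1)) : ∃ c : NNReal, c ≠ 0 ∧
    Measure.comap (G i) (μH[(n : ℝ)]) = c • (volume : Measure (Fin n → ℝ)) := by
  obtain ⟨K, hK⟩ := G_lip (n := n) i
  have hp : ∀ y, proj i (G i y) = y := fun y => by simp [G]
  have he := emb_of_proj i hK.continuous hp
  set ν := Measure.comap (G i) (μH[(n : ℝ)]) with hν
  have h1 : IsFiniteMeasureOnCompacts ν := ⟨fun A hA => by
    rw [hν, he.comap_apply]
    refine (hK.hausdorffMeasure_image_le (Nat.cast_nonneg n) A).trans_lt ?_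
    rw [hvol]
    exact ENNReal.mul_lt_top (by simp) hA.measure_lt_top⟩
  have h2 : ν.IsAddLeftInvariant := by
    refine ⟨fun z => ?_⟩
    ext A hA
    rw [Measure.map_apply (measurable_const_add z) hA, hν, he.comap_apply, he.comap_apply]
    have : G i '' A = (fun u => Llin i z + u) '' (G i '' ((fun x => z + x) ⁻¹' A)) := by
      ext u
      constructor
      · rintro ⟨a, ha, rfl⟩
        refine ⟨_, ⟨a - z, by simpa using ha, rfl⟩, ?_⟩
        simp only
        rw [← G_add]; simp
      · rintro ⟨_, ⟨a, ha, rfl⟩, rfl⟩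
        exact ⟨z + a, ha, G_add i z a⟩
    rw [this, (isometry_add_left (Llin i z)).hausdorffMeasure_image (Or.inl (Nat.cast_nonneg n))]
  refine ⟨ν.addHaarScalarFactor volume, fun h0 => ?_, Measure.isAddLeftInvariant_eq_smul ν volume⟩
  have h3 := Measure.isAddLeftInvariant_eq_smul ν volume
  rw [h0, zero_smul] at h3
  have h4 : (volume : Measure (Fin n → ℝ)) univ ≤ ν univ := by
    rw [hν, he.comap_apply, ← hvol]
    have := (proj_lip i).hausdorffMeasure_image_le (Nat.cast_nonneg n) (G i '' univ)
    rw [← image_comp] at this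
    have hc : proj i ∘ G i = id := funext hp
    rw [hc] at this
    simpa using this
  rw [h3] at h4
  simp only [Measure.coe_zero, Pi.zero_apply, nonpos_iff_eq_zero, Measure.measure_univ_eq_zero] at h4
  exact NeZero.ne _ h4

lemma eucl_sign_isometry (σ : Fin (n+1) → ℝ) (hσ : ∀ j, |σ j| = 1) :
    Isometry (fun u : EuclideanSpace ℝ (Fin (n+1)) =>
      (WithLp.toLp 2 (fun j => σ j * u j) : EuclideanSpace ℝ (Fin (n+1)))) := by
  refine Isometry.of_dist_eq fun x y => ?_
  simp only [EuclideanSpace.dist_eq, Real.dist_eq, ← mul_sub, abs_mul, hσ, one_mul]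

lemma pi_sign_isometry (τ : Fin n → ℝ) (hτ : ∀ j, |τ j| = 1) :
    Isometry (fun y : Fin n → ℝ => fun j => τ j * y j) := by
  refine Isometry.of_nndist_eq fun x y => ?_
  simp only [nndist_pi_def]
  congr 1
  ext j
  simp [Real.dist_eq, ← mul_sub, abs_mul, hτ]

noncomputable def g (i : Fin (n+1)) (s : ℝ) (y : Fin n → ℝ) : EuclideanSpace ℝ (Fin (n+1)) :=
  ins i (s * (1 - ∑ j, |y j|)) y

lemma g_cont (i : Fin (n+1)) (s : ℝ) : Continuous (g (n := n) i s) := by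
  unfold g
  exact (continuous_ins i).comp (f := fun y : Fin n → ℝ => (s * (1 - ∑ j, |y j|), y)) (by fun_prop)

lemma g_emb (i : Fin (n+1)) (s : ℝ) : MeasurableEmbedding (g (n := n) i s) :=
  emb_of_proj i (g_cont i s) (fun y => by simp [g])

lemma g_comap (i : Fin (n+1)) : ∃ c : NNReal, c ≠ 0 ∧ ∀ s : ℝ, |s| = 1 →
    Measure.comap (g i s) (μH[(n : ℝ)]) = c • (volume : Measure (Fin n → ℝ)) := by
  obtain ⟨c, hc0, hc⟩ := G_comap (n := n) i
  refine ⟨c, hc0, fun s hs => ?_⟩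
  let T : (Fin n → Bool) → Fin n → ℝ := fun b j => if b j then 1 else -1
  have hT : ∀ b j, |T b j| = 1 := fun b j => by simp only [T]; split_ifs <;> simp
  have hT2 : ∀ b j, T b j * T b j = 1 := fun b j => by
    rw [← abs_mul_abs_self, hT]; norm_num
  refine Measure.ext_of_iUnion_eq_univ (s := fun b : Fin n → Bool => {y | ∀ j, 0 ≤ T b j * y j}) ?_ ?_
  · refine eq_univ_of_forall fun y => mem_iUnion.2 ⟨fun j => decide (0 ≤ y j), fun j => ?_⟩
    simp only [T, decide_eq_true_eq]
    split_ifs with h <;> linarith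
  · intro b
    ext A hA
    rw [Measure.restrict_apply hA, Measure.restrict_apply hA, (g_emb i s).comap_apply]
    set B := A ∩ {y | ∀ j, 0 ≤ T b j * y j} with hB
    let σ : Fin (n+1) → ℝ := i.insertNth s (T b)
    have hσ : ∀ j, |σ j| = 1 := by
      intro k
      rcases Fin.eq_self_or_eq_succAbove i k with rfl | ⟨j, rfl⟩
      · simpa [σ] using hs
      · simpa [σ] using hT b j
    have key : g i s '' B = (fun u : EuclideanSpace ℝ (Fin (n+1)) =>
      (WithLp.toLp 2 (fun j => σ j * u j) : EuclideanSpace ℝ (Fin (n+1)))) ''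
        (G i '' ((fun y : Fin n → ℝ => fun j => T b j * y j) '' B)) := by
      rw [← image_comp, ← image_comp]
      refine image_congr fun y hy => ?_
      apply ext_above i
      · simp only [g, ins_same, Function.comp, G, σ, Fin.insertNth_apply_same]
        congr 2
        refine Finset.sum_congr rfl fun j _ => ?_
        rw [← abs_of_nonneg (hy.2 j), abs_mul, hT, one_mul]
      · intro j
        simp only [g, ins_above, Function.comp, G, σ, Fin.insertNth_apply_succAbove]
        rw [← mul_assoc, hT2, one_mul]
    have he : MeasurableEmbedding (G (n := n) i) := by
      obtain ⟨K, hK⟩ := G_lip (n := n) i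
      exact emb_of_proj i hK.continuous (fun y => by simp [G])
    rw [key, (eucl_sign_isometry σ hσ).hausdorffMeasure_image (Or.inl (Nat.cast_nonneg n)),
      ← he.comap_apply, hc, Measure.smul_apply, Measure.smul_apply, ← hvol,
      (pi_sign_isometry (T b) (hT b)).hausdorffMeasure_image (Or.inl (Nat.cast_nonneg n))]


def D (n : ℕ) : Set (Fin n → ℝ) := {y | ∑ j, |y j| < 1}

lemma D_meas : MeasurableSet (D n) :=
  (isOpen_lt (by fun_prop) continuous_const).measurableSet

lemma D_vol : volume (D n) = ENNReal.ofReal (2 ^ n / n.factorial) := by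
  rcases n with _ | n
  · have : D 0 = univ := by ext y; simp [D]
    rw [this, volume_pi, Measure.pi_univ]; simp
  · have := volume_sum_rpow_lt (Fin (n+1)) (p := 1) le_rfl 1
    simp only [Real.rpow_one, div_one, Fintype.card_fin] at this
    rw [D, this, show (1:ℝ)+1 = ((1:ℕ):ℝ)+1 by simp, Real.Gamma_nat_eq_factorial, Real.Gamma_nat_eq_factorial]
    simp

lemma B_vol : volume (l1Ball (n+1)) = ENNReal.ofReal (2 ^ (n+1) / (n+1).factorial) := by
  have h2 := (PiLp.volume_preserving_toLp (Fin (n+1))).measure_preimage_emb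
    (MeasurableEquiv.toLp 2 (Fin (n+1) → ℝ)).measurableEmbedding (l1Ball (n+1))
  rw [← h2]
  have := volume_sum_rpow_le (Fin (n+1)) (p := 1) le_rfl 1
  simp only [Real.rpow_one, div_one, Fintype.card_fin] at this
  have h3 : (WithLp.toLp 2 ⁻¹' l1Ball (n+1) : Set (Fin (n+1) → ℝ)) = {x | ∑ i, |x i| ≤ 1} := by
    ext y; simp [l1Ball]
  rw [h3, this, show (1:ℝ)+1 = ((1:ℕ):ℝ)+1 by simp, Real.Gamma_nat_eq_factorial, Real.Gamma_nat_eq_factorial]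
  simp

lemma sum_ins (i : Fin (n+1)) (u : EuclideanSpace ℝ (Fin (n+1))) :
    ∑ k, |u k| = |u i| + ∑ j, |proj i u j| := by
  rw [Fin.sum_univ_succAbove _ i]; rfl

lemma piece (i : Fin (n+1)) (s : ℝ) (hs : |s| = 1) :
    g i s '' D n = l1Sphere (n+1) ∩ {u | 0 < s * u i} := by
  have hss : s * s = 1 := by rw [← abs_mul_abs_self, hs]; norm_num
  ext u
  constructor
  · rintro ⟨y, hy, rfl⟩
    have hy' : 0 < 1 - ∑ j, |y j| := by simp only [D, mem_ofPred_eq] at hy; linarith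
    refine ⟨?_, ?_⟩
    · simp only [l1Sphere, mem_ofPred_eq]
      rw [sum_ins i]
      simp [g, abs_mul, hs, abs_of_pos hy']
    · simp only [g, mem_ofPred_eq, ins_same]
      rw [← mul_assoc, hss, one_mul]; exact hy'
  · rintro ⟨h1, h2⟩
    simp only [l1Sphere, mem_ofPred_eq] at h1 h2
    rw [sum_ins i] at h1
    have h3 : |u i| = s * u i := by rw [← abs_of_pos h2, abs_mul, hs, one_mul]
    refine ⟨proj i u, ?_, ?_⟩
    · simp only [D, mem_ofPred_eq]; linarith
    · apply ext_above i
      · simp only [g, ins_same]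
        rw [show 1 - ∑ j, |proj i u j| = s * u i by linarith, ← mul_assoc, hss, one_mul]
      · intro j; simp [g, proj]

lemma S_meas : MeasurableSet (l1Sphere (n+1)) :=
  (isClosed_eq (by fun_prop) continuous_const).measurableSet

lemma half_meas (i : Fin (n+1)) (s : ℝ) :
    MeasurableSet {u : EuclideanSpace ℝ (Fin (n+1)) | 0 < s * u i} :=
  (isOpen_lt continuous_const (by fun_prop)).measurableSet

lemma null_edge (i : Fin (n+1)) :
    μH[(n : ℝ)] (l1Sphere (n+1) ∩ {u | u i = 0}) = 0 := by
  have hsub : l1Sphere (n+1) ∩ {u | u i = 0} ⊆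
      ⋃ k : {k : Fin (n+1) // k ≠ i}, ⋃ b : Bool,
        g k.1 (if b then 1 else -1) '' {y | ∃ j, k.1.succAbove j = i ∧ y j = 0} := by
    rintro u ⟨h1, h2⟩
    simp only [mem_ofPred_eq] at h2
    have : ∃ k, u k ≠ 0 := by
      by_contra! h
      simp [l1Sphere, h] at h1
    obtain ⟨k, hk⟩ := this
    have hki : k ≠ i := by rintro rfl; exact hk h2
    obtain ⟨j, hj⟩ := Fin.exists_succAbove_eq hki.symm
    have hb : ∃ b : Bool, 0 < (if b then (1:ℝ) else -1) * u k := by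
      rcases lt_or_gt_of_ne hk with h | h
      · exact ⟨false, by simpa using h⟩
      · exact ⟨true, by simpa using h⟩
    obtain ⟨b, hb⟩ := hb
    have hm : u ∈ g k (if b then (1:ℝ) else -1) '' D n := by
      rw [piece k _ (by split_ifs <;> simp)]
      exact ⟨h1, hb⟩
    obtain ⟨y, -, rfl⟩ := hm
    refine mem_iUnion.2 ⟨⟨k, hki⟩, mem_iUnion.2 ⟨b, ⟨y, ⟨j, hj, ?_⟩, rfl⟩⟩⟩
    rw [← hj] at h2
    simpa [g] using h2
  refine measure_mono_null hsub (measure_iUnion_null fun k => measure_iUnion_null fun b => ?_)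
  obtain ⟨c, -, hc⟩ := g_comap k.1
  rw [← (g_emb k.1 _).comap_apply, hc _ (by split_ifs <;> simp)]
  rw [Measure.smul_apply]
  have : volume {y : Fin n → ℝ | ∃ j, k.1.succAbove j = i ∧ y j = 0} = 0 := by
    refine measure_mono_null (t := ⋃ j, {y : Fin n → ℝ | y j = 0}) ?_ (measure_iUnion_null fun j => ?_)
    · rintro y ⟨j, -, h⟩; exact mem_iUnion.2 ⟨j, h⟩
    · rw [volume_pi]; exact Measure.pi_hyperplane _ j 0
  rw [this]; simp

lemma restrict_piece (i : Fin (n+1)) : ∃ c : NNReal, c ≠ 0 ∧ ∀ s : ℝ, |s| = 1 →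
    (μH[(n : ℝ)]).restrict (l1Sphere (n+1) ∩ {u | 0 < s * u i}) =
      c • Measure.map (g i s) (volume.restrict (D n)) := by
  obtain ⟨c, hc0, hc⟩ := g_comap (n := n) i
  refine ⟨c, hc0, fun s hs => ?_⟩
  have h := (g_emb i s).map_comap (μH[(n : ℝ)])
  rw [hc s hs] at h
  have h2 : (μH[(n : ℝ)]).restrict (g i s '' D n) =
      ((μH[(n : ℝ)]).restrict (range (g i s))).restrict (g i s '' D n) := by
    rw [Measure.restrict_restrict_of_subset (image_subset_range _ _)]
  rw [← piece i s hs, h2, ← h, (g_emb i s).restrict_map,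
    preimage_image_eq _ (g_emb i s).injective, Measure.restrict_smul, Measure.map_smul]

lemma restrict_S (i : Fin (n+1)) : ∃ c : NNReal, c ≠ 0 ∧
    (μH[(n : ℝ)]).restrict (l1Sphere (n+1)) =
      c • (Measure.map (g i 1) (volume.restrict (D n)) +
        Measure.map (g i (-1)) (volume.restrict (D n))) := by
  obtain ⟨c, hc0, hc⟩ := restrict_piece (n := n) i
  refine ⟨c, hc0, ?_⟩
  rw [smul_add, ← hc 1 (by simp), ← hc (-1) (by simp), ← Measure.restrict_union]
  · refine Measure.restrict_congr_set ?_
    refine (ae_eq_set).2 ⟨?_, ?_⟩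
    · refine measure_mono_null ?_ (null_edge i)
      rintro u ⟨h1, h2⟩
      refine ⟨h1, ?_⟩
      simp only [mem_union, mem_inter_iff, mem_ofPred_eq, h1, true_and] at h2 ⊢
      push Not at h2
      linarith [h2.1, h2.2]
    · convert measure_empty (μ := (μH[(n : ℝ)] : Measure (EuclideanSpace ℝ (Fin (n+1)))))
      rw [← inter_union_distrib_left]
      exact sdiff_eq_empty.2 inter_subset_left
  · rw [Set.disjoint_left]
    rintro u ⟨-, h1⟩ ⟨-, h2⟩
    simp only [mem_ofPred_eq] at h1 h2
    linarith
  · exact S_meas.inter (half_meas i _)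

lemma uniform_eq (i : Fin (n+1)) :
    uniformOnSphere (l1Sphere (n+1)) = (2 * volume (D n))⁻¹ •
      (Measure.map (g i 1) (volume.restrict (D n)) +
        Measure.map (g i (-1)) (volume.restrict (D n))) := by
  obtain ⟨c, hc0, hc⟩ := restrict_S (n := n) i
  have hS : μH[(n:ℝ)] (l1Sphere (n+1)) = c * (2 * volume (D n)) := by
    rw [← Measure.restrict_apply_univ, hc, Measure.smul_apply, Measure.add_apply,
      (g_emb i _).map_apply, (g_emb i _).map_apply]
    simp [two_mul, ENNReal.smul_def, mul_add]
  have hd : (((n+1 : ℕ) : ℝ) - 1) = n := by push_cast; ring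
  unfold uniformOnSphere
  have hcc : ∀ m : Measure (EuclideanSpace ℝ (Fin (n+1))), c • m = (c : ℝ≥0∞) • m := fun _ => rfl
  rw [hd, hS, hc, hcc, smul_smul]
  congr 1
  have hV : volume (D n) ≠ ⊤ := by rw [D_vol]; simp
  rw [ENNReal.mul_inv (by simp [hc0]) (by simp), mul_right_comm,
    ENNReal.inv_mul_cancel (by simpa using hc0) (by simp), one_mul]

instance : IsFiniteMeasure ((volume : Measure (Fin n → ℝ)).restrict (D n)) :=
  ⟨by rw [Measure.restrict_apply_univ, D_vol]; simp⟩

lemma sign_integral (i : Fin (n+1)) (φ : EuclideanSpace ℝ (Fin (n+1)) → ℝ) (hφ : Continuous φ)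
    (hb : ∃ C, ∀ u ∈ l1Sphere (n+1), |φ u| ≤ C) :
    Integrable (fun e => φ e * Real.sign (e i)) (uniformOnSphere (l1Sphere (n+1))) ∧
    ∫ e, φ e * Real.sign (e i) ∂(uniformOnSphere (l1Sphere (n+1))) =
      (2 * volume (D n)).toReal⁻¹ * ∫ y in D n, (φ (g i 1 y) - φ (g i (-1) y)) := by
  obtain ⟨C, hC⟩ := hb
  have hs1 : ∀ s : ℝ, |s| = 1 → Real.sign s = s := by
    intro s hs
    rcases (abs_eq one_pos.le).1 hs with rfl | rfl
    · simp
    · simp [Real.sign_neg]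
  have hsg : ∀ s : ℝ, |s| = 1 → ∀ y ∈ D n, φ (g i s y) * Real.sign (g i s y i) = s * φ (g i s y) := by
    intro s hs y hy
    have hy' : 0 < 1 - ∑ j, |y j| := by simp only [D, mem_ofPred_eq] at hy; linarith
    have : Real.sign (s * (1 - ∑ j, |y j|)) = s := by
      rcases (abs_eq one_pos.le).1 hs with rfl | rfl
      · rw [one_mul, Real.sign_of_pos hy']
      · rw [Real.sign_of_neg (by linarith)]
    simp only [g, ins_same] at *
    rw [this, mul_comm]
  have hI0 : ∀ s : ℝ, |s| = 1 → Integrable (fun y => φ (g i s y)) (volume.restrict (D n)) := by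
    intro s hs
    refine Integrable.of_bound (C := C) ((hφ.comp (g_cont i s)).aestronglyMeasurable) ?_
    refine (ae_restrict_iff' D_meas).2 (Filter.Eventually.of_forall fun y hy => ?_)
    refine hC _ ?_
    have : g i s y ∈ g i s '' D n := ⟨y, hy, rfl⟩
    rw [piece i s hs] at this
    exact this.1
  have hI : ∀ s : ℝ, |s| = 1 → Integrable (fun e => φ e * Real.sign (e i))
      (Measure.map (g i s) (volume.restrict (D n))) := by
    intro s hs
    rw [(g_emb i s).integrable_map_iff]
    refine ((hI0 s hs).const_mul s).congr ?_
    refine (ae_restrict_iff' D_meas).2 (Filter.Eventually.of_forall fun y hy => ?_)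
    exact (hsg s hs y hy).symm
  have hV : volume (D n) ≠ 0 := by rw [D_vol]; simp; positivity
  rw [uniform_eq i]
  refine ⟨((hI 1 (by simp)).add_measure (hI (-1) (by simp))).smul_measure (by simp [hV]), ?_⟩
  rw [integral_smul_measure, integral_add_measure (hI 1 (by simp)) (hI (-1) (by simp)),
    (g_emb i _).integral_map, (g_emb i _).integral_map,
    setIntegral_congr_fun D_meas (hsg 1 (by simp)), setIntegral_congr_fun D_meas (hsg (-1) (by simp)),
    integral_sub (hI0 1 (by simp)) (hI0 (-1) (by simp)), ENNReal.toReal_inv, smul_eq_mul,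
    integral_const_mul, integral_const_mul]
  ring


lemma norm_le_l1 (u : EuclideanSpace ℝ (Fin (n+1))) : ‖u‖ ≤ ∑ k, |u k| := by
  have : u = ∑ k, u k • EuclideanSpace.single k (1:ℝ) := by
    ext j; simp [Finset.sum_apply, Pi.single_apply]
  calc ‖u‖ = ‖∑ k, u k • EuclideanSpace.single k (1:ℝ)‖ := by rw [← this]
    _ ≤ ∑ k, ‖u k • EuclideanSpace.single k (1:ℝ)‖ := norm_sum_le _ _
    _ = _ := by simp [norm_smul]

lemma B_compact : IsCompact (l1Ball (n+1)) := by
  refine Metric.isCompact_of_isClosed_isBounded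
    (isClosed_le (by fun_prop) continuous_const) ?_
  refine (Metric.isBounded_closedBall (x := 0) (r := 1)).subset fun u hu => ?_
  simpa using (norm_le_l1 u).trans hu

lemma S_sub_B : l1Sphere (n+1) ⊆ l1Ball (n+1) := fun _ hu => le_of_eq hu

instance : IsFiniteMeasure ((volume : Measure (EuclideanSpace ℝ (Fin (n+1)))).restrict (l1Ball (n+1))) :=
  ⟨by rw [Measure.restrict_apply_univ]; exact B_compact.measure_lt_top⟩

lemma F_diff {K : NNReal} {f : EuclideanSpace ℝ (Fin (n+1)) → ℝ} (hf : LipschitzWith K f)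
    {γ : ℝ} (hγ : 0 < γ) (x : EuclideanSpace ℝ (Fin (n+1))) :
    ∃ L : EuclideanSpace ℝ (Fin (n+1)) →L[ℝ] ℝ, HasFDerivAt (fun x' => ∫ u in l1Ball (n+1), f (x' + γ • u)) L x := by
  have hcont := hf.continuous
  have hcx : ∀ x', Continuous fun u => f (x' + γ • u) := fun x' => by fun_prop
  have hh : LipschitzWith (K * ‖γ‖₊) (fun u => f (x + γ • u)) := by
    refine hf.comp (LipschitzWith.of_dist_le_mul fun u v => ?_)
    rw [dist_add_left, dist_smul₀]; simp
  have hdf := hh.ae_differentiableAt (μ := volume)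
  let F' : EuclideanSpace ℝ (Fin (n+1)) → EuclideanSpace ℝ (Fin (n+1)) →L[ℝ] ℝ :=
    fun u => (fderiv ℝ (fun u => f (x + γ • u)) u).comp
      (γ⁻¹ • ContinuousLinearMap.id ℝ (EuclideanSpace ℝ (Fin (n+1))))
  have := hasFDerivAt_integral_of_dominated_loc_of_lip (𝕜 := ℝ)
    (μ := (volume : Measure (EuclideanSpace ℝ (Fin (n+1)))).restrict (l1Ball (n+1)))
    (F := fun x' u => f (x' + γ • u)) (x₀ := x) (bound := fun _ => (K : ℝ)) (s := univ)
    (F' := F') Filter.univ_mem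
    (Filter.Eventually.of_forall fun x' => (hcx x').aestronglyMeasurable)
    ((hcx x).continuousOn.integrableOn_compact B_compact) ?_ ?_ (integrable_const _) ?_
  · exact ⟨_, this.2⟩
  · refine Measurable.aestronglyMeasurable ?_
    simp only [F', ContinuousLinearMap.comp_smul, ContinuousLinearMap.comp_id]
    exact (measurable_fderiv ℝ _).const_smul γ⁻¹
  · refine Filter.Eventually.of_forall fun u => ?_
    have : Real.nnabs (K:ℝ) = K := by simp
    rw [this]
    refine LipschitzWith.lipschitzOnWith ?_
    refine LipschitzWith.of_dist_le_mul fun a b => ?_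
    refine (hf.dist_le_mul _ _).trans ?_
    rw [dist_add_right]
  · refine ae_restrict_of_ae ?_
    filter_upwards [hdf] with u hu
    have h1 : HasFDerivAt (fun x' => u + γ⁻¹ • (x' - x))
        (γ⁻¹ • ContinuousLinearMap.id ℝ (EuclideanSpace ℝ (Fin (n+1)))) x := by
      exact (((hasFDerivAt_id x).sub_const x).const_smul γ⁻¹).const_add u
    have h2 : HasFDerivAt (fun u => f (x + γ • u)) (fderiv ℝ (fun u => f (x + γ • u)) u)
        (u + γ⁻¹ • (x - x)) := by
      simpa using hu.hasFDerivAt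
    refine (HasFDerivAt.comp x h2 h1).congr_of_eventuallyEq (Filter.Eventually.of_forall fun x' => ?_)
    simp only [Function.comp]
    congr 1
    rw [smul_add, smul_inv_smul₀ hγ.ne']
    abel

lemma ins_mp (i : Fin (n+1)) : MeasurePreserving (fun p : ℝ × (Fin n → ℝ) => ins i p.1 p.2)
    (volume.prod volume) volume := by
  have h := (volume_preserving_piFinSuccAbove (fun _ : Fin (n+1) => ℝ) i).symm
  exact (PiLp.volume_preserving_toLp (Fin (n+1))).comp h

lemma ins_memb (i : Fin (n+1)) :
    MeasurableEmbedding (fun p : ℝ × (Fin n → ℝ) => ins i p.1 p.2) := by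
  refine (continuous_ins i).measurableEmbedding ?_
  rintro ⟨a, b⟩ ⟨a', b'⟩ h
  simp only at h
  have h1 : ins i a b i = ins i a' b' i := by rw [h]
  have h2 : proj i (ins i a b) = proj i (ins i a' b') := by rw [h]
  simp at h1 h2
  simp [h1, h2]

lemma B_meas : MeasurableSet (l1Ball (n+1)) := B_compact.isClosed.measurableSet

noncomputable def r (y : Fin n → ℝ) : ℝ := 1 - ∑ j, |y j|

lemma r_cont : Continuous (r (n := n)) := by unfold r; fun_prop

lemma fubini (i : Fin (n+1)) (h : EuclideanSpace ℝ (Fin (n+1)) → ℝ) (hc : Continuous h) :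
    ∫ u in l1Ball (n+1), h u = ∫ y in D n, ∫ s in (-(r y))..(r y), h (ins i s y) := by
  rw [← integral_indicator B_meas, ← (ins_mp i).integral_comp (ins_memb i), integral_prod_symm,
    ← integral_indicator D_meas]
  · congr 1
    ext y
    have hmem : ∀ s, ins i s y ∈ l1Ball (n+1) ↔ |s| ≤ r y := by
      intro s
      simp only [l1Ball, mem_ofPred_eq, r]
      rw [sum_ins i]; simp only [ins_same, proj_ins]
      constructor <;> intro <;> linarith
    have heq : (fun s => (l1Ball (n+1)).indicator h (ins i s y)) =
        (Icc (-(r y)) (r y)).indicator (fun s => h (ins i s y)) := by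
      ext s
      by_cases hs : |s| ≤ r y
      · rw [indicator_of_mem ((hmem s).2 hs), indicator_of_mem (mem_Icc.2 (abs_le.1 hs))]
      · rw [indicator_of_notMem (fun h' => hs ((hmem s).1 h')),
          indicator_of_notMem (fun h' => hs (abs_le.2 (mem_Icc.1 h')))]
    simp only
    rw [heq, integral_indicator measurableSet_Icc, integral_Icc_eq_integral_Ioc]
    by_cases hy : y ∈ D n
    · have : 0 < r y := by simp only [D, mem_ofPred_eq] at hy; simp only [r]; linarith
      rw [indicator_of_mem hy, intervalIntegral.integral_of_le (by linarith)]
    · have : r y ≤ 0 := by simp only [D, mem_ofPred_eq] at hy; simp only [r]; linarith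
      rw [indicator_of_notMem hy, Ioc_eq_empty (by linarith)]
      simp
  · have := (ins_mp i).integrable_comp_emb (ins_memb i) (g := (l1Ball (n+1)).indicator h)
    refine this.2 ?_
    rw [integrable_indicator_iff B_meas]
    exact hc.continuousOn.integrableOn_compact B_compact

lemma inner_deriv (φ : ℝ → ℝ) (hφ : Continuous φ) {γ : ℝ} (hγ : 0 < γ) (a : ℝ) :
    HasDerivAt (fun t => ∫ s in (-a)..a, φ (t + γ * s)) (γ⁻¹ * (φ (γ * a) - φ (-(γ * a)))) 0 := by
  have h : (fun t => ∫ s in (-a)..a, φ (t + γ * s)) =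
      fun t => γ⁻¹ * ((∫ s in (0:ℝ)..(t + γ * a), φ s) - ∫ s in (0:ℝ)..(t + γ * (-a)), φ s) := by
    ext t
    rw [intervalIntegral.integral_comp_add_mul φ hγ.ne' t, smul_eq_mul,
      intervalIntegral.integral_interval_sub_left] <;> exact hφ.intervalIntegrable _ _
  rw [h]
  have hd : ∀ b : ℝ, HasDerivAt (fun t => ∫ s in (0:ℝ)..(t + b), φ s) (φ b) 0 := by
    intro b
    have h1 := (hφ.integral_hasStrictDerivAt 0 (0 + b)).hasDerivAt
    have := HasDerivAt.comp_add_const 0 b h1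
    simpa using this
  have := ((hd (γ * a)).sub (hd (γ * (-a)))).const_mul γ⁻¹
  rw [mul_neg] at this ⊢
  exact this

lemma ins_shift (i : Fin (n+1)) (x : EuclideanSpace ℝ (Fin (n+1))) (t γ s : ℝ) (y : Fin n → ℝ) :
    x + t • EuclideanSpace.single i (1:ℝ) + γ • ins i s y =
      x + γ • ins i 0 y + (t + γ * s) • EuclideanSpace.single i (1:ℝ) := by
  apply ext_above i
  · simp; ring
  · intro j; simp

lemma ins_cont' (i : Fin (n+1)) {X : Type*} [TopologicalSpace X] {a : X → ℝ} {b : X → Fin n → ℝ}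
    (ha : Continuous a) (hb : Continuous b) : Continuous fun p => ins i (a p) (b p) :=
  (continuous_ins i).comp (ha.prodMk hb)

lemma F_partial {K : NNReal} {f : EuclideanSpace ℝ (Fin (n+1)) → ℝ} (hf : LipschitzWith K f)
    {γ : ℝ} (hγ : 0 < γ) (x : EuclideanSpace ℝ (Fin (n+1))) (i : Fin (n+1)) :
    HasDerivAt (fun t : ℝ => ∫ u in l1Ball (n+1), f (x + t • EuclideanSpace.single i (1:ℝ) + γ • u))
      (∫ y in D n, γ⁻¹ * (f (x + γ • g i 1 y) - f (x + γ • g i (-1) y))) 0 := by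
  have hc := hf.continuous
  have h1 : (fun t : ℝ => ∫ u in l1Ball (n+1), f (x + t • EuclideanSpace.single i (1:ℝ) + γ • u)) =
      fun t => ∫ y in D n, ∫ s in (-(r y))..(r y),
        f (x + γ • ins i 0 y + (t + γ * s) • EuclideanSpace.single i (1:ℝ)) := by
    ext t
    rw [fubini i (fun u => f (x + t • EuclideanSpace.single i (1:ℝ) + γ • u)) (by fun_prop)]
    simp only [ins_shift]
  rw [h1]
  have hcu : ∀ t : ℝ, Continuous (Function.uncurry fun (y : Fin n → ℝ) (s : ℝ) =>
      f (x + γ • ins i 0 y + (t + γ * s) • EuclideanSpace.single i (1:ℝ))) := by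
    intro t
    have := ins_cont' i (X := (Fin n → ℝ) × ℝ) (continuous_const (y := (0:ℝ))) continuous_fst
    refine hc.comp ?_
    fun_prop
  have hcs : ∀ (t : ℝ) (y : Fin n → ℝ), Continuous fun s =>
      f (x + γ • ins i 0 y + (t + γ * s) • EuclideanSpace.single i (1:ℝ)) := by
    intro t y; fun_prop
  have hcI : ∀ t : ℝ, Continuous fun y : Fin n → ℝ => ∫ s in (-(r y))..(r y),
      f (x + γ • ins i 0 y + (t + γ * s) • EuclideanSpace.single i (1:ℝ)) := by
    intro t
    have : (fun y : Fin n → ℝ => ∫ s in (-(r y))..(r y),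
        f (x + γ • ins i 0 y + (t + γ * s) • EuclideanSpace.single i (1:ℝ))) = fun y =>
        (∫ s in (0:ℝ)..(r y), f (x + γ • ins i 0 y + (t + γ * s) • EuclideanSpace.single i (1:ℝ))) -
        ∫ s in (0:ℝ)..(-(r y)), f (x + γ • ins i 0 y + (t + γ * s) • EuclideanSpace.single i (1:ℝ)) := by
      ext y
      rw [intervalIntegral.integral_interval_sub_left] <;> exact (hcs t y).intervalIntegrable _ _
    rw [this]
    exact (intervalIntegral.continuous_parametric_intervalIntegral_of_continuous (hcu t) r_cont).sub
      (intervalIntegral.continuous_parametric_intervalIntegral_of_continuous (hcu t) r_cont.neg)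
  have hDK : D n ⊆ Metric.closedBall 0 1 := by
    intro y hy
    rw [mem_closedBall_zero_iff, pi_norm_le_iff_of_nonneg zero_le_one]
    intro j
    exact (Finset.single_le_sum (f := fun j => |y j|) (fun _ _ => abs_nonneg _)
      (Finset.mem_univ j)).trans (le_of_lt hy)
  have hint : ∀ h : (Fin n → ℝ) → ℝ, Continuous h → Integrable h (volume.restrict (D n)) :=
    fun h hh => IntegrableOn.mono_set
      (hh.continuousOn.integrableOn_compact (isCompact_closedBall 0 1)) hDK
  refine (hasDerivAt_integral_of_dominated_loc_of_lip (𝕜 := ℝ)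
    (μ := (volume : Measure (Fin n → ℝ)).restrict (D n)) (x₀ := (0:ℝ)) (s := univ)
    (bound := fun _ => (2 * K : ℝ)) Filter.univ_mem
    (Filter.Eventually.of_forall fun t => (hcI t).aestronglyMeasurable)
    (hint _ (hcI 0)) ?_ ?_ (integrable_const _) ?_).2
  · refine Continuous.aestronglyMeasurable ?_
    have h1 := g_cont i (1:ℝ)
    have h2 := g_cont i (-1:ℝ)
    fun_prop
  · refine (ae_restrict_iff' D_meas).2 (Filter.Eventually.of_forall fun y hy => ?_)
    have hr0 : 0 < r y := by simp only [D, mem_ofPred_eq] at hy; simp only [r]; linarith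
    have hr1 : r y ≤ 1 := by
      simp only [r]; linarith [Finset.sum_nonneg (s := Finset.univ) fun j _ => abs_nonneg (y j)]
    refine LipschitzWith.lipschitzOnWith (LipschitzWith.of_dist_le_mul fun a b => ?_)
    rw [dist_eq_norm, ← intervalIntegral.integral_sub ((hcs a y).intervalIntegrable _ _)
      ((hcs b y).intervalIntegrable _ _)]
    refine (intervalIntegral.norm_integral_le_of_norm_le_const (C := K * |a - b|) ?_).trans ?_
    · intro s _
      rw [← dist_eq_norm]
      refine (hf.dist_le_mul _ _).trans ?_
      rw [dist_add_left, dist_eq_norm, ← sub_smul, norm_smul]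
      simp
    · have : (Real.nnabs (2 * (K:ℝ)) : ℝ) = 2 * K := by simp
      rw [this, Real.dist_eq, show r y - -r y = 2 * r y by ring, abs_of_pos (show 0 < 2 * r y by linarith)]
      have : 0 ≤ K * |a - b| := by positivity
      nlinarith
  · refine (ae_restrict_iff' D_meas).2 (Filter.Eventually.of_forall fun y hy => ?_)
    have := inner_deriv (fun τ => f (x + γ • ins i 0 y + τ • EuclideanSpace.single i (1:ℝ)))
      (by fun_prop) hγ (r y)
    have e1 := ins_shift i x 0 γ (r y) y
    have e2 := ins_shift i x 0 γ (-r y) y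
    simp only [zero_smul, add_zero, zero_add] at e1 e2
    have e3 : g i 1 y = ins i (r y) y := by simp [g, r]
    have e4 : g i (-1) y = ins i (-r y) y := by simp [g, r]
    rw [e3, e4, e1, e2, mul_neg]
    exact this

end L1S

/-- The `l₁`-ball smoothing `f_γ` of an `M`-Lipschitz function `f` is
differentiable, with gradient `∇f_γ(x) = E_e[(d/γ)·f(x+γe)·sign(e)]`, `e` uniform on the
unit `l₁`-sphere. -/
theorem l1_smoothing_gradient_formula {d : ℕ} (hd : 1 ≤ d) (γ M : ℝ) (hγ : 0 < γ)
    (f fγ : EuclideanSpace ℝ (Fin d) → ℝ)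
    (hlip : ∀ x y : EuclideanSpace ℝ (Fin d), |f y - f x| ≤ M * ‖y - x‖)
    (hfγ : ∀ x, fγ x = ∫ e, f (x + γ • e) ∂(uniformOn (l1Ball d)))
    (x : EuclideanSpace ℝ (Fin d)) :
    HasGradientAt fγ
      (∫ e, (d / γ * f (x + γ • e)) • signVec e ∂(uniformOnSphere (l1Sphere d))) x := by
  obtain ⟨n, rfl⟩ : ∃ n, d = n + 1 := ⟨d - 1, by omega⟩
  have hf : LipschitzWith M.toNNReal f := by
    refine LipschitzWith.of_dist_le_mul fun a b => ?_
    rw [Real.dist_eq, dist_eq_norm]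
    exact (hlip b a).trans (mul_le_mul_of_nonneg_right (Real.le_coe_toNNReal M) (norm_nonneg _))
  have hcont := hf.continuous
  set V := volume (l1Ball (n+1)) with hV
  have hF : fγ = fun x' => V.toReal⁻¹ * ∫ u in l1Ball (n+1), f (x' + γ • u) := by
    ext x'
    rw [hfγ, uniformOn, integral_smul_measure, ENNReal.toReal_inv, smul_eq_mul]
  obtain ⟨L, hL⟩ := L1S.F_diff hf hγ x
  have hL' : HasFDerivAt fγ (V.toReal⁻¹ • L) x := by
    rw [hF]; exact hL.const_mul _
  rw [hasGradientAt_iff_hasFDerivAt]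
  refine HasFDerivAt.congr_fderiv hL' (Eq.symm ?_)
  have hφ : Continuous fun e => ((n+1 : ℕ) : ℝ) / γ * f (x + γ • e) := by fun_prop
  have hb : ∃ C, ∀ u ∈ l1Sphere (n+1), |((n+1 : ℕ) : ℝ) / γ * f (x + γ • u)| ≤ C := by
    obtain ⟨C, hC⟩ := L1S.B_compact.exists_bound_of_continuousOn hφ.continuousOn
    exact ⟨C, fun u hu => hC u (L1S.S_sub_B hu)⟩
  have hmain : ∀ i, L (EuclideanSpace.single i 1) = ∫ y in L1S.D n,
      γ⁻¹ * (f (x + γ • L1S.g i 1 y) - f (x + γ • L1S.g i (-1) y)) := by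
    intro i
    refine HasDerivAt.unique ?_ (L1S.F_partial hf hγ x i)
    exact hL.hasLineDerivAt (EuclideanSpace.single i 1)
  apply ContinuousLinearMap.coe_injective
  refine (EuclideanSpace.basisFun (Fin (n+1)) ℝ).toBasis.ext fun i => ?_
  have hint : ∀ i, Integrable (fun e => ((((n+1 : ℕ) : ℝ) / γ * f (x + γ • e)) • signVec e) i)
      (uniformOnSphere (l1Sphere (n+1))) := fun i => by
    simpa [signVec] using (L1S.sign_integral i _ hφ hb).1
  have hv : (∫ e, (((n+1 : ℕ) : ℝ) / γ * f (x + γ • e)) • signVec e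
      ∂(uniformOnSphere (l1Sphere (n+1)))) i = V.toReal⁻¹ * L (EuclideanSpace.single i 1) := by
    rw [eval_integral_piLp hint i, hmain i, integral_const_mul]
    have h := (L1S.sign_integral i _ hφ hb).2
    simp only [← mul_sub, integral_const_mul] at h
    have h' : ∀ e : EuclideanSpace ℝ (Fin (n+1)), ((((n+1 : ℕ) : ℝ) / γ * f (x + γ • e)) • signVec e) i
        = ((n+1 : ℕ) : ℝ) / γ * f (x + γ • e) * Real.sign (e i) := fun e => by simp [signVec]
    simp only [h', h]
    rw [hV, L1S.B_vol, L1S.D_vol, ENNReal.toReal_mul, ENNReal.toReal_ofReal (by positivity),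
      ENNReal.toReal_ofReal (by positivity), Nat.factorial_succ]
    have : (n.factorial : ℝ) ≠ 0 := by positivity
    push_cast
    simp only [ENNReal.toReal_ofNat]
    field_simp
    ring
  simp only [OrthonormalBasis.coe_toBasis, EuclideanSpace.basisFun_apply, ContinuousLinearMap.coe_coe,
    InnerProductSpace.toDual_apply_apply, ContinuousLinearMap.smul_apply, smul_eq_mul,
    EuclideanSpace.inner_single_right, one_mul, conj_trivial]
  exact hv
end
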